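/- Let p be an odd prime, n a positive integer, and let f ∈ F_{p^n}[X] have degree d with d ≡ 1 (mod p). If f is exceptional planar, then d = p^k + 1 for some positive integer k. -/

import Mathlib

open Polynomial

/-- A function on a field of odd characteristic is planar if for every nonzero `ε`
the map `x ↦ f (x + ε) - f x` is a bijection. -/
def IsPlanarOdd {F : Type} [Field F] (f : F → F) : Prop :=
  ∀ ε : F, ε ≠ 0 → Function.Bijective (fun x : F => f (x + ε) - f x)

/-- A polynomial over a finite field `K` (of odd order) is exceptional planar if for
infinitely many positive integers `r` it induces a planar function on the extension
of `K` of degree `r`. -/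
def IsExceptionalPlanarOdd {K : Type} [Field K] [Fintype K] (f : K[X]) : Prop :=
  Set.Infinite {r : ℕ | 0 < r ∧ ∀ (L : Type) [Field L] [Fintype L] [Algebra K L],
      Fintype.card L = Fintype.card K ^ r →
      IsPlanarOdd (fun x : L => Polynomial.aeval x f)}

/-!
Write `d - 1 = m * p ^ κ` with `p ∤ m`; then `κ ≥ 1`, and the claim is `m = 1`.

If `f` is planar over `L`, the `L`-points of the surface
`f(s + u) + f(s - u) = f(s + v) + f(s - v)` satisfy `u ^ 2 = v ^ 2`. An absolutely irreducible
component defined over `K` has too many points over large extensions of `K` to avoid the locus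
`u ^ 2 ≠ v ^ 2`, unless it lies on `u ^ 2 = v ^ 2`. So if `f` is exceptional planar, every other
component over the algebraic closure occurs together with a distinct Frobenius conjugate, and both
have the same top form up to conjugation.

Modulo `p`, the number of points of a hypersurface, weighted by a polynomial `g`, is up to sign the
trace of a Cartier operator twisted by `g` on a finite-dimensional space of functions. A twisted
operator of minimal rank has rank one and can be chosen with nonzero trace, for every large
extension and with `g` vanishing on `u ^ 2 = v ^ 2`; this gives the points without the Weil bounds.

For odd `d` the variable `s` divides the top form of the surface exactly once, which contradicts
this pairing; hence `d` is even and `m` is odd. If `m ≥ 3`, every component has degree at most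
`d / 2`, so the surface splits into two factors whose degrees `a`, `b` satisfy
`2 * d ^ 2 ≤ 9 * a * b`. Setting `s = 1` in the top forms gives two plane curves of degrees `a`
and `b` whose product is `E(u) - E(v)` with `E(t) = (1 + t) ^ d + (1 - t) ^ d`. By Bézout they meet
in `a * b` points counted with multiplicity, none of them at infinity and each a singular point of
the product, where `E'` vanishes at both coordinates. Since `d = m * p ^ κ + 1`, such pairs are few
and the multiplicities are small, which forces `9 * a * b < 2 * d ^ 2`.
-/

namespace ExceptionalPlanar

section OperatorSystem

open Module

variable {k : Type*} [Field k]

lemma exists_eq_smul_of_injective [IsAlgClosed k] {M : Type*} [AddCommGroup M] [Module k M]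
    [FiniteDimensional k M] [Nontrivial M] (f : End k M) {g : End k M}
    (hg : Function.Injective g) : ∃ (c : k) (z : M), z ≠ 0 ∧ f z = c • g z := by
  let e := LinearEquiv.ofInjectiveEndo g hg
  obtain ⟨c, hc⟩ := End.exists_eigenvalue ((e.symm : M →ₗ[k] M) ∘ₗ f)
  obtain ⟨z, hz⟩ := hc.exists_hasEigenvector
  refine ⟨c, z, hz.2, ?_⟩
  have : e (e.symm (f z)) = e (c • z) := congrArg e hz.apply_eq_smul
  simpa using! this

/-- The subspace `Y` is stable under all members of the graded family of operators `S`. -/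
def IsStable {M : Type*} [AddCommGroup M] [Module k M] (S : ℕ → Submodule k (End k M))
    (Y : Submodule k M) : Prop :=
  ∀ ⦃r⦄, ∀ X ∈ S r, ∀ u ∈ Y, X u ∈ Y

/-- Being a minimal nonzero stable subspace. -/
def IsMinimalStable {M : Type*} [AddCommGroup M] [Module k M] (S : ℕ → Submodule k (End k M))
    (W : Submodule k M) : Prop :=
  Minimal (fun Y => Y ≠ ⊥ ∧ IsStable S Y) W

lemma IsStable.exists_isMinimalStable_le {M : Type*} [AddCommGroup M] [Module k M]
    {S : ℕ → Submodule k (End k M)} {V : Submodule k M} [FiniteDimensional k V]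
    (hV : V ≠ ⊥) (hS : IsStable S V) : ∃ W ≤ V, IsMinimalStable S W := by
  obtain ⟨W, ⟨hWV, hW⟩, hmin⟩ := exists_minimalFor_of_wellFoundedLT
    (fun W : Submodule k M => W ≤ V ∧ W ≠ ⊥ ∧ IsStable S W) (fun W => finrank k W)
    ⟨V, le_rfl, hV, hS⟩
  refine ⟨W, hWV, hW, fun Y hY hYW => ?_⟩
  have := Submodule.finiteDimensional_of_le hWV
  have hfin := Submodule.finrank_mono hYW
  exact (Submodule.eq_of_le_of_finrank_le hYW (hmin ⟨hYW.trans hWV, hY⟩ hfin)).ge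

lemma IsMinimalStable.le_of_forall_apply_mem {M : Type*} [AddCommGroup M] [Module k M]
    {S T : ℕ → Submodule k (End k M)} {W : Submodule k M} (hW : IsMinimalStable S W)
    (hmul : ∀ ⦃r s⦄, ∀ X ∈ S r, ∀ Z ∈ T s, X * Z ∈ T (r + s)) {x : M}
    (hx : ∀ s, ∀ Z ∈ T s, Z x ∈ W) (hx0 : ∃ s, ∃ Z ∈ T s, Z x ≠ 0) {K : Submodule k M}
    (hK : ∀ s, ∀ Z ∈ T s, Z x ∈ K) : W ≤ K := by
  set Y : Submodule k M := Submodule.span k {z | ∃ s, ∃ Z ∈ T s, z = Z x} with hY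
  have hYW : Y ≤ W := by
    rw [hY, Submodule.span_le]
    rintro _ ⟨s, Z, hZ, rfl⟩
    exact hx s Z hZ
  have hY0 : Y ≠ ⊥ := by
    obtain ⟨s, Z, hZ, hne⟩ := hx0
    exact (Submodule.ne_bot_iff Y).2 ⟨Z x, Submodule.subset_span ⟨s, Z, hZ, rfl⟩, hne⟩
  have hstable : IsStable S Y := by
    intro r X hX
    suffices Y ≤ Y.comap X from fun z hz => this hz
    conv_lhs => rw [hY]
    rw [Submodule.span_le]
    rintro _ ⟨s, Z, hZ, rfl⟩
    exact Submodule.subset_span ⟨r + s, X * Z, hmul X hX Z hZ, rfl⟩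
  refine (hW.2 ⟨hY0, hstable⟩ hYW).trans ?_
  rw [hY, Submodule.span_le]
  rintro _ ⟨s, Z, hZ, rfl⟩
  exact hK s Z hZ

variable {A : Type*} [CommRing A] [Algebra k A]

/-- Two graded families of operators on an algebra `A`, modelled on twisted Frobenius traces
`u ↦ Tr (g * u)`: those of `S` preserve the subspace `V`, and those of the smaller family `T` still
belong to `S` after multiplication by an element of `V`. -/
structure OperatorSystem (S T : ℕ → Submodule k (End k A)) (V : Submodule k A) : Prop where
  mul_mem : ∀ ⦃r s⦄, ∀ X ∈ S r, ∀ Y ∈ S s, X * Y ∈ S (r + s)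
  mul_mem_small : ∀ ⦃r s⦄, ∀ X ∈ S r, ∀ Y ∈ T s, X * Y ∈ T (r + s)
  small_le : T ≤ S
  isStable : IsStable S V
  exists_apply_ne_zero : ∀ y : A, y ≠ 0 → ∃ X ∈ T 1, X y ≠ 0
  comp_mulLeft_mem : ∀ ⦃s⦄, ∀ X ∈ T s, ∀ v ∈ V, X ∘ₗ LinearMap.mulLeft k v ∈ S s

namespace OperatorSystem

variable {S T : ℕ → Submodule k (End k A)} {V W : Submodule k A}

lemma le_of_forall_apply_mem (h : OperatorSystem S T V) (hW : IsMinimalStable S W) {u : A}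
    (hu : u ∈ W) (hu0 : u ≠ 0) {K : Submodule k A} (hK : ∀ s, ∀ X ∈ S s, X u ∈ K) : W ≤ K := by
  obtain ⟨X, hX, hXu⟩ := h.exists_apply_ne_zero u hu0
  exact hW.le_of_forall_apply_mem h.mul_mem (fun s Z hZ => hW.1.2 Z hZ u hu)
    ⟨1, X, h.small_le 1 hX, hXu⟩ hK

lemma apply_mul_mem (h : OperatorSystem S T V) (hWV : W ≤ V) (hW : IsStable S W) {u v : A}
    (hu : u ∈ W) (hv : v ∈ W) {s : ℕ} {X : End k A} (hX : X ∈ T s) : X (u * v) ∈ W :=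
  hW (X ∘ₗ LinearMap.mulLeft k u) (h.comp_mulLeft_mem X hX u (hWV hu)) v hv

variable [IsDomain A]

lemma le_of_forall_apply_mul_mem (h : OperatorSystem S T V) (hWV : W ≤ V)
    (hW : IsMinimalStable S W) {u v : A} (hu : u ∈ W) (hv : v ∈ W) (hu0 : u ≠ 0) (hv0 : v ≠ 0)
    {K : Submodule k A} (hK : ∀ s, ∀ X ∈ T s, X (u * v) ∈ K) : W ≤ K := by
  obtain ⟨X, hX, hXuv⟩ := h.exists_apply_ne_zero (u * v) (mul_ne_zero hu0 hv0)
  exact hW.le_of_forall_apply_mem h.mul_mem_small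
    (fun s Z hZ => h.apply_mul_mem hWV hW.1.2 hu hv hZ) ⟨1, X, hX, hXuv⟩ hK

end OperatorSystem

/-- `a` is a member of `S` whose restriction to `W` is nonzero of minimal rank. -/
structure IsMinimalRank {M : Type*} [AddCommGroup M] [Module k M]
    (S : ℕ → Submodule k (End k M)) (W : Submodule k M) (a : End k M) : Prop where
  map_ne_bot : W.map a ≠ ⊥
  finrank_le : ∀ ⦃s⦄, ∀ c ∈ S s, W.map c ≠ ⊥ → finrank k (W.map a) ≤ finrank k (W.map c)

namespace OperatorSystem

variable {S T : ℕ → Submodule k (End k A)} {V W : Submodule k A}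

lemma exists_isMinimalRank (h : OperatorSystem S T V) (hW : W ≠ ⊥) :
    ∃ r, ∃ a ∈ S r, IsMinimalRank S W a := by
  obtain ⟨w, hw, hw0⟩ := (Submodule.ne_bot_iff W).1 hW
  obtain ⟨X, hX, hXw⟩ := h.exists_apply_ne_zero w hw0
  obtain ⟨a, ⟨⟨r, ha⟩, ha0⟩, hmin⟩ := exists_minimalFor_of_wellFoundedLT
    (fun a : End k A => (∃ r, a ∈ S r) ∧ W.map a ≠ ⊥) (fun a => finrank k (W.map a))
    ⟨X, ⟨1, h.small_le 1 hX⟩, (Submodule.ne_bot_iff _).2 ⟨X w, ⟨w, hw, rfl⟩, hXw⟩⟩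
  refine ⟨r, a, ha, ha0, fun s c hc hc0 => ?_⟩
  exact (le_total _ _).elim id (hmin ⟨⟨s, hc⟩, hc0⟩)

-- Otherwise `a * α * a` would be a nonzero operator of smaller rank than `a`.
lemma apply_eq_zero_of_isMinimalRank (h : OperatorSystem S T V) [FiniteDimensional k W] {r s : ℕ}
    {a α : End k A} (ha : a ∈ S r) (hmin : IsMinimalRank S W a) (hα : α ∈ S s) {z : A}
    (hz : z ∈ W.map a) (hz0 : z ≠ 0) (haz : a (α z) = 0) {y : A} (hy : y ∈ W.map a) :
    a (α y) = 0 := by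
  by_contra hay
  have hmap : W.map (a * α * a) = (W.map a).map (a * α) := Submodule.map_comp _ _ _
  have hne : W.map (a * α * a) ≠ ⊥ := by
    rw [hmap]
    exact (Submodule.ne_bot_iff _).2 ⟨a (α y), ⟨y, hy, rfl⟩, hay⟩
  have hrank := hmin.finrank_le (a * α * a) (h.mul_mem _ (h.mul_mem _ ha _ hα) _ ha) hne
  have hker := LinearMap.finrank_range_add_finrank_ker ((a * α).domRestrict (W.map a))
  rw [hmap] at hrank
  rw [LinearMap.range_domRestrict] at hker
  have hbot : LinearMap.ker ((a * α).domRestrict (W.map a)) = ⊥ :=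
    Submodule.finrank_eq_zero.1 (by omega)
  have hmem : (⟨z, hz⟩ : W.map a) ∈ LinearMap.ker ((a * α).domRestrict (W.map a)) := haz
  rw [hbot, Submodule.mem_bot] at hmem
  exact hz0 (congrArg Subtype.val hmem)

variable [IsDomain A] [IsAlgClosed k]

-- Choose `X` with `a (X (v * u)) ≠ 0`. On `W.map a` the operators `z ↦ a (X (v * z))` and
-- `z ↦ a (X (u * z))` are proportional, with ratio an eigenvalue of their quotient.
lemma exists_smul_eq_of_isMinimalRank (h : OperatorSystem S T V) (hWV : W ≤ V)
    (hW : IsMinimalStable S W) [FiniteDimensional k W] {r : ℕ} {a : End k A} (ha : a ∈ S r)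
    (hmin : IsMinimalRank S W a) {u v : A} (hu : u ∈ W.map a) (hu0 : u ≠ 0) (hv : v ∈ W.map a) :
    ∃ c : k, c • u = v := by
  have haW : W.map a ≤ W := Submodule.map_le_iff_le_comap.2 (hW.1.2 a ha)
  rcases eq_or_ne v 0 with rfl | hv0
  · exact ⟨0, zero_smul k u⟩
  obtain ⟨s, X, hX, hXuv⟩ : ∃ s, ∃ X ∈ T s, a (X (v * u)) ≠ 0 := by
    by_contra! hall
    refine hmin.map_ne_bot (LinearMap.le_ker_iff_map.1 ?_)
    exact h.le_of_forall_apply_mul_mem hWV hW (haW hv) (haW hu) hv0 hu0 hall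
  set α := X ∘ₗ LinearMap.mulLeft k v
  set β := X ∘ₗ LinearMap.mulLeft k u
  have hα : α ∈ S s := h.comp_mulLeft_mem X hX v (hWV (haW hv))
  have hβ : β ∈ S s := h.comp_mulLeft_mem X hX u (hWV (haW hu))
  have hαu : α u = β v := congrArg X (mul_comm v u)
  have hβ_ne : ∀ z ∈ W.map a, a (β z) = 0 → z = 0 := fun z hz hβz => by
    by_contra hz0
    refine hXuv ?_
    rw [mul_comm]
    exact h.apply_eq_zero_of_isMinimalRank ha hmin hβ hz hz0 hβz hv
  have hmaps : ∀ γ ∈ S s, ∀ z ∈ W.map a, (a * γ) z ∈ W.map a := fun γ hγ z hz =>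
    Submodule.mem_map_of_mem (hW.1.2 γ hγ z (haW hz))
  have := Submodule.nontrivial_iff_ne_bot.2 hmin.map_ne_bot
  have hinj : Function.Injective ((a * β).restrict (hmaps β hβ)) :=
    (injective_iff_map_eq_zero _).2 fun z hz =>
      Subtype.ext (hβ_ne z z.2 (congrArg Subtype.val hz))
  obtain ⟨c, z, hz0, hz⟩ :=
    exists_eq_smul_of_injective ((a * α).restrict (hmaps α hα)) hinj
  have hprop : a ((α - c • β) u) = 0 := by
    refine h.apply_eq_zero_of_isMinimalRank ha hmin (sub_mem hα ((S s).smul_mem c hβ)) z.2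
      (fun h0 => hz0 (Subtype.ext h0)) ?_ hu
    have : a (α z) = c • a (β z) := congrArg Subtype.val hz
    simp [this]
  refine ⟨c, (sub_eq_zero.1 (hβ_ne (v - c • u) (sub_mem hv (Submodule.smul_mem _ c hu)) ?_)).symm⟩
  rw [map_sub, map_smul, ← hαu]
  exact hprop

theorem exists_apply_eq_smul (h : OperatorSystem S T V) (hWV : W ≤ V) (hW : IsMinimalStable S W)
    [FiniteDimensional k W] :
    ∃ r, ∃ a ∈ S r, ∃ w ∈ W, w ≠ 0 ∧ ∃ φ : Dual k A, ¬ W ≤ LinearMap.ker φ ∧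
      ∀ u ∈ W, a u = φ u • w := by
  obtain ⟨r, a, ha, hmin⟩ := h.exists_isMinimalRank hW.1.1
  obtain ⟨w, hw, hw0⟩ := (Submodule.ne_bot_iff _).1 hmin.map_ne_bot
  obtain ⟨f, hf⟩ := (LinearMap.toSpanSingleton k A w).exists_leftInverse_of_injective
    (LinearMap.ker_toSpanSingleton k hw0)
  have hfw : f w = 1 := by simpa using LinearMap.congr_fun hf 1
  have haφ : ∀ u ∈ W, a u = (f ∘ₗ a) u • w := by
    intro u hu
    obtain ⟨c, hc⟩ := h.exists_smul_eq_of_isMinimalRank hWV hW ha hmin hw hw0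
      (Submodule.mem_map_of_mem hu)
    simp [← hc, hfw]
  refine ⟨r, a, ha, w, Submodule.map_le_iff_le_comap.2 (hW.1.2 a ha) hw, hw0, f ∘ₗ a,
    fun hker => ?_, haφ⟩
  refine hmin.map_ne_bot (LinearMap.le_ker_iff_map.1 fun u hu => ?_)
  rw [LinearMap.mem_ker, haφ u hu, hker hu, zero_smul]

end OperatorSystem

lemma exists_forall_ge_mem_of_add_mem {Γ : Set ℕ} {r x : ℕ}
    (hadd : ∀ s ∈ Γ, ∀ t ∈ Γ, s + r + t ∈ Γ) (hx : x ∈ Γ) (hx' : x + 1 ∈ Γ) :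
    ∃ N, ∀ n ≥ N, n ∈ Γ := by
  obtain ⟨N, hN⟩ := Nat.exists_mem_closure_of_ge ((· + r) '' Γ)
  refine ⟨N + 1, fun n hn => ?_⟩
  have hgcd : Nat.setGcd ((· + r) '' Γ) ∣ n + r := by
    have h0 := Nat.setGcd_dvd_of_mem (Set.mem_image_of_mem (· + r) hx)
    have h1 := Nat.setGcd_dvd_of_mem (Set.mem_image_of_mem (· + r) hx')
    have h2 := (Nat.dvd_add_iff_right h0 (n := 1)).2 (by convert h1 using 1; ring)
    exact h2.trans (one_dvd _)
  have hclosure : ∀ m ∈ AddSubmonoid.closure ((· + r) '' Γ), m = 0 ∨ ∃ s ∈ Γ, s + r = m := by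
    intro m hm
    induction hm using AddSubmonoid.closure_induction with
    | mem m hm => exact .inr hm
    | zero => exact .inl rfl
    | add a b _ _ iha ihb =>
      rcases iha with rfl | ⟨s, hs, rfl⟩
      · simpa using ihb
      · rcases ihb with rfl | ⟨t, ht, rfl⟩
        · exact .inr ⟨s, hs, rfl⟩
        · exact .inr ⟨s + r + t, hadd s hs t ht, by ring⟩
  rcases hclosure _ (hN (n + r) (by omega) hgcd) with h | ⟨s, hs, h⟩
  · omega
  · rwa [← Nat.add_right_cancel h]

namespace OperatorSystem

variable {S T : ℕ → Submodule k (End k A)} {V W : Submodule k A} [IsDomain A]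

-- The degrees `s` with `φ (X w) ≠ 0` for some `X ∈ S s` form a semigroup up to the shift by `r`,
-- because `φ (X (a (Y w))) = φ (Y w) * φ (X w)`; and two consecutive degrees occur.
lemma exists_forall_ge_apply_ne_zero (h : OperatorSystem S T V) (hWV : W ≤ V)
    (hW : IsMinimalStable S W) {r : ℕ} {a : End k A} (ha : a ∈ S r) {w : A} (hw : w ∈ W)
    (hw0 : w ≠ 0) {φ : Dual k A} (hφ : ¬ W ≤ LinearMap.ker φ) (haφ : ∀ u ∈ W, a u = φ u • w) :
    ∃ N, ∀ n ≥ N, ∃ X ∈ S n, φ (X w) ≠ 0 := by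
  obtain ⟨κ, hκ, hκw⟩ := h.exists_apply_ne_zero w hw0
  have hκW : κ w ∈ W := hW.1.2 κ (h.small_le 1 hκ) w hw
  obtain ⟨s, X, hX, hXφ⟩ : ∃ s, ∃ X ∈ T s, φ (X (κ w * w)) ≠ 0 := by
    by_contra! hall
    exact hφ (h.le_of_forall_apply_mul_mem hWV hW hκW hw hκw hw0 hall)
  refine exists_forall_ge_mem_of_add_mem (Γ := {n | ∃ X ∈ S n, φ (X w) ≠ 0}) (r := r) (x := s)
    ?_ ⟨_, h.comp_mulLeft_mem X hX _ (hWV hκW), hXφ⟩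
    ⟨_, h.mul_mem _ (h.comp_mulLeft_mem X hX w (hWV hw)) κ (h.small_le 1 hκ), ?_⟩
  · rintro s ⟨X, hX, hXφ⟩ t ⟨Y, hY, hYφ⟩
    refine ⟨X * a * Y, h.mul_mem _ (h.mul_mem X hX a ha) Y hY, ?_⟩
    simpa [haφ _ (hW.1.2 Y hY w hw)] using ⟨hYφ, hXφ⟩
  · simpa [mul_comm] using hXφ

variable [IsAlgClosed k]

theorem exists_apply_eq_smul_of_ge (h : OperatorSystem S T V) [FiniteDimensional k V]
    (hV : V ≠ ⊥) (J : ℕ → Set (End k A))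
    (hJ : ∀ w ∈ V, w ≠ 0 → ∃ t, ∃ j ∈ J t, j w ≠ 0 ∧ ∀ u ∈ V, ∃ Z ∈ S t, j u = Z w) :
    ∃ t N, ∃ j ∈ J t, ∃ w ∈ V, ∀ r ≥ N, ∃ X ∈ S r, ∃ ψ : Dual k A,
      (∀ u ∈ V, X (j u) = ψ u • w) ∧ ψ w ≠ 0 := by
  obtain ⟨W, hWV, hW⟩ := h.isStable.exists_isMinimalStable_le hV
  have := Submodule.finiteDimensional_of_le hWV
  obtain ⟨r, a, ha, w, hw, hw0, φ, hφ, haφ⟩ := h.exists_apply_eq_smul hWV hW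
  obtain ⟨t, j, hj, hjw, hjV⟩ := hJ w (hWV hw) hw0
  have hjW : ∀ u ∈ V, j u ∈ W := by
    intro u hu
    obtain ⟨Z, hZ, hjZ⟩ := hjV u hu
    rw [hjZ]
    exact hW.1.2 Z hZ w hw
  obtain ⟨s, b, hb, hbφ⟩ : ∃ s, ∃ b ∈ S s, φ (b (j w)) ≠ 0 := by
    by_contra! hall
    exact hφ (h.le_of_forall_apply_mem hW (hjW w (hWV hw)) hjw hall)
  obtain ⟨N, hN⟩ := h.exists_forall_ge_apply_ne_zero hWV hW ha hw hw0 hφ haφ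
  refine ⟨t, N + (r + r + s), j, hj, w, hWV hw, fun n hn => ?_⟩
  obtain ⟨c, hc, hcφ⟩ := hN (n - (r + r + s)) (by omega)
  refine ⟨a * c * a * b, ?_, φ (c w) • φ ∘ₗ b ∘ₗ j, fun u hu => ?_, mul_ne_zero hcφ hbφ⟩
  · convert h.mul_mem _ (h.mul_mem _ (h.mul_mem a ha c hc) a ha) b hb using 1
    congr 1
    omega
  · simp [haφ _ (hW.1.2 b hb _ (hjW u hu)), haφ _ (hW.1.2 c hc w hw), smul_smul, mul_comm]

end OperatorSystem

end OperatorSystem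

section Cartier

open MvPolynomial

variable {σ : Type*} [Fintype σ] {R : Type*} [CommSemiring R]

/-- The exponent `a ↦ Q * a + (Q - 1, …, Q - 1)`. -/
noncomputable def shiftExp (Q : ℕ) (a : σ →₀ ℕ) : σ →₀ ℕ :=
  Q • a + Finsupp.equivFunOnFinite.symm fun _ => Q - 1

@[simp]
lemma shiftExp_apply (Q : ℕ) (a : σ →₀ ℕ) (i : σ) : shiftExp Q a i = Q * a i + (Q - 1) :=
  rfl

lemma shiftExp_injective (Q : ℕ) [NeZero Q] :
    Function.Injective (shiftExp Q : (σ →₀ ℕ) → σ →₀ ℕ) := by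
  intro a b h
  ext i
  have := DFunLike.congr_fun h i
  simpa [NeZero.ne Q] using this

lemma shiftExp_shiftExp (Q Q' : ℕ) [NeZero Q] [NeZero Q'] (a : σ →₀ ℕ) :
    shiftExp Q' (shiftExp Q a) = shiftExp (Q' * Q) a := by
  ext i
  obtain ⟨x, rfl⟩ := Nat.exists_eq_add_of_le' (NeZero.one_le (n := Q))
  obtain ⟨y, rfl⟩ := Nat.exists_eq_add_of_le' (NeZero.one_le (n := Q'))
  have : (y + 1) * (x + 1) - 1 = (y + 1) * x + y := by
    rw [show (y + 1) * (x + 1) = (y + 1) * x + y + 1 by ring, Nat.add_sub_cancel]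
  simp only [shiftExp_apply, this, Nat.add_sub_cancel]
  ring

/-- The Cartier operator: in characteristic `p` and for `Q` a power of `p`, it reads off the
coordinate of `x ^ (Q - 1)` in the basis of monomials with exponents less than `Q` over the
subring of polynomials in the `x i ^ Q`. -/
noncomputable def cartier (Q : ℕ) [NeZero Q] : MvPolynomial σ R →ₗ[R] MvPolynomial σ R :=
  (AddMonoidAlgebra.coeffLinearEquiv R).symm.toLinearMap ∘ₗ
    Finsupp.lcomapDomain (shiftExp Q) (shiftExp_injective Q) ∘ₗ
      (AddMonoidAlgebra.coeffLinearEquiv R).toLinearMap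

@[simp]
lemma coeff_cartier (Q : ℕ) [NeZero Q] (h : MvPolynomial σ R) (a : σ →₀ ℕ) :
    (cartier Q h).coeff a = h.coeff (shiftExp Q a) :=
  rfl

@[simp]
lemma cartier_monomial_shiftExp (Q : ℕ) [NeZero Q] (a : σ →₀ ℕ) (c : R) :
    cartier Q (MvPolynomial.monomial (shiftExp Q a) c) = MvPolynomial.monomial a c := by
  classical
  ext b
  simp [MvPolynomial.coeff_monomial, (shiftExp_injective Q).eq_iff]

lemma cartier_monomial_of_ne (Q : ℕ) [NeZero Q] {m : σ →₀ ℕ} (hm : ∀ a, m ≠ shiftExp Q a) (c : R) :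
    cartier Q (MvPolynomial.monomial m c) = 0 := by
  classical
  ext b
  simp [MvPolynomial.coeff_monomial, hm]

lemma cartier_expand_mul (Q : ℕ) [NeZero Q] (h w : MvPolynomial σ R) :
    cartier Q (MvPolynomial.expand Q h * w) = h * cartier Q w := by
  classical
  induction h using MvPolynomial.induction_on' with
  | monomial b c =>
    ext a
    have hle : Q • b ≤ shiftExp Q a ↔ b ≤ a := by
      refine forall_congr' fun i => ?_
      have hQ := NeZero.pos Q
      simp only [Finsupp.smul_apply, smul_eq_mul, shiftExp_apply]
      rw [← Nat.lt_succ_iff, show (Q * a i + (Q - 1)).succ = Q * (a i + 1) by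
        rw [mul_add]; omega, Nat.mul_lt_mul_left hQ, Nat.lt_succ_iff]
    simp only [coeff_cartier, MvPolynomial.expand_monomial, coeff_monomial_mul', hle]
    refine if_ctx_congr Iff.rfl (fun hba => ?_) fun _ => rfl
    congr 2
    rw [tsub_eq_iff_eq_add_of_le (hle.2 hba)]
    ext i
    have : Q * a i = Q * (a i - b i) + Q * b i := by rw [← mul_add, Nat.sub_add_cancel (hba i)]
    simp only [Finsupp.add_apply, Finsupp.smul_apply, smul_eq_mul, shiftExp_apply,
      Finsupp.tsub_apply]
    omega
  | add p q hp hq => rw [map_add, add_mul, map_add, hp, hq, add_mul]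

lemma cartier_cartier (Q Q' : ℕ) [NeZero Q] [NeZero Q'] (h : MvPolynomial σ R) :
    cartier Q (cartier Q' h) = cartier (Q' * Q) h := by
  ext a
  simp [shiftExp_shiftExp]

lemma totalDegree_cartier_le {Q N : ℕ} [NeZero Q] {h : MvPolynomial σ R}
    (hN : h.totalDegree ≤ N * Q + Fintype.card σ * (Q - 1)) : (cartier Q h).totalDegree ≤ N := by
  refine Finset.sup_le fun a ha => ?_
  have hle := le_totalDegree (p := h) (s := shiftExp Q a) (by simpa using ha)
  rw [Finsupp.sum_fintype _ _ fun _ => rfl] at hle ⊢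
  simp only [shiftExp_apply, Finset.sum_add_distrib, ← Finset.mul_sum, Finset.sum_const,
    Finset.card_univ, smul_eq_mul] at hle
  have : Q * ∑ i, a i ≤ Q * N := by rw [mul_comm Q N]; omega
  exact Nat.le_of_mul_le_mul_left this (NeZero.pos Q)

lemma totalDegree_cartier_mul_le {Q N : ℕ} [NeZero Q] {h u : MvPolynomial σ R}
    (hh : h.totalDegree ≤ (N + Fintype.card σ) * (Q - 1)) (hu : u.totalDegree ≤ N) :
    (cartier Q (h * u)).totalDegree ≤ N := by
  refine totalDegree_cartier_le ((totalDegree_mul h u).trans ((Nat.add_le_add hh hu).trans_eq ?_))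
  obtain ⟨e, rfl⟩ := Nat.exists_eq_add_of_le' (NeZero.one_le (n := Q))
  rw [Nat.add_sub_cancel]
  ring

/-- The exponent with coordinates `b i < Q`. -/
noncomputable def smallExp {Q : ℕ} (b : σ → Fin Q) : σ →₀ ℕ :=
  Finsupp.equivFunOnFinite.symm fun i => (b i : ℕ)

@[simp]
lemma smallExp_apply {Q : ℕ} (b : σ → Fin Q) (i : σ) : smallExp b i = b i :=
  rfl

lemma totalDegree_monomial_smallExp_le {Q : ℕ} (b : σ → Fin Q) (c : R) :
    (MvPolynomial.monomial (smallExp b) c).totalDegree ≤ Fintype.card σ * (Q - 1) := by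
  refine (totalDegree_monomial_le _ _).trans ?_
  rw [Finsupp.sum_fintype _ _ fun _ => rfl]
  have : ∀ i ∈ Finset.univ, smallExp b i ≤ Q - 1 := fun i _ => by have := (b i).2; simp; omega
  exact (Finset.sum_le_card_nsmul _ _ _ this).trans_eq (by simp)

lemma smallExp_add_eq_shiftExp_iff {Q : ℕ} [NeZero Q] {b : σ → Fin Q} {m a : σ →₀ ℕ} :
    smallExp b + m = shiftExp Q a ↔ m = smallExp (Fin.rev ∘ b) + Q • a := by
  simp only [Finsupp.ext_iff, Finsupp.add_apply, Finsupp.smul_apply, smul_eq_mul, shiftExp_apply,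
    smallExp_apply, Function.comp_apply, Fin.val_rev]
  exact forall_congr' fun i => by have := (b i).2; omega

lemma exists_eq_smallExp_add_smul (Q : ℕ) [NeZero Q] (m : σ →₀ ℕ) :
    ∃ (b : σ → Fin Q) (a : σ →₀ ℕ), m = smallExp b + Q • a := by
  refine ⟨fun i => Fin.ofNat Q (m i), Finsupp.equivFunOnFinite.symm fun i => m i / Q, ?_⟩
  ext i
  simp [Nat.mod_add_div]

lemma smallExp_add_smul_inj {Q : ℕ} {b b' : σ → Fin Q} {a a' : σ →₀ ℕ}
    (h : smallExp b + Q • a = smallExp b' + Q • a') : b = b' := by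
  ext i
  have := congrArg (· % Q) (DFunLike.congr_fun h i)
  simpa [Nat.mod_eq_of_lt (b i).2, Nat.mod_eq_of_lt (b' i).2] using this

open Classical in
lemma eq_sum_monomial_mul_expand_cartier (Q : ℕ) [NeZero Q] (w : MvPolynomial σ R) :
    w = ∑ b : σ → Fin Q, MvPolynomial.monomial (smallExp (Fin.rev ∘ b)) 1 *
      MvPolynomial.expand Q (cartier Q (MvPolynomial.monomial (smallExp b) 1 * w)) := by
  induction w using MvPolynomial.induction_on' with
  | monomial m c =>
    simp only [monomial_mul, one_mul]
    obtain ⟨b', a, rfl⟩ := exists_eq_smallExp_add_smul Q m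
    have hb' : Fin.rev ∘ Fin.rev ∘ b' = b' := by ext; simp
    rw [Finset.sum_eq_single (Fin.rev ∘ b')]
    · have hshift : smallExp (Fin.rev ∘ b') + (smallExp b' + Q • a) = shiftExp Q a :=
        smallExp_add_eq_shiftExp_iff.2 (by rw [hb'])
      rw [hshift, cartier_monomial_shiftExp, MvPolynomial.expand_monomial, monomial_mul, one_mul,
        hb']
    · intro b _ hb
      rw [cartier_monomial_of_ne, map_zero, mul_zero]
      intro a' ha'
      have := smallExp_add_smul_inj (smallExp_add_eq_shiftExp_iff.1 ha')
      exact hb (by rw [this]; ext; simp)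
    · simp
  | add p q hp hq =>
    conv_lhs => rw [hp, hq]
    simp_rw [mul_add _ p q, map_add, mul_add, Finset.sum_add_distrib]

lemma cartier_mul_pow_mul_self_mul {Q : ℕ} [NeZero Q] {Φ : MvPolynomial σ R}
    (hΦ : MvPolynomial.expand Q Φ = Φ ^ Q) (g u : MvPolynomial σ R) :
    cartier Q (g * Φ ^ (Q - 1) * (Φ * u)) = Φ * cartier Q (g * u) := by
  rw [← cartier_expand_mul, hΦ, ← mul_pow_sub_one (NeZero.ne Q) Φ]
  congr 1
  ring

lemma exists_not_dvd_cartier {R : Type*} [CommRing R] [IsDomain R] (Q : ℕ) [NeZero Q]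
    {Φ : MvPolynomial σ R} (hΦ0 : Φ ≠ 0) (hΦ : MvPolynomial.expand Q Φ = Φ ^ Q)
    {w : MvPolynomial σ R} (hw : ¬ Φ ∣ w) :
    ∃ g : MvPolynomial σ R, g.totalDegree ≤ Fintype.card σ * (Q - 1) ∧
      ¬ Φ ∣ cartier Q (g * Φ ^ (Q - 1) * w) := by
  by_contra! hall
  have hdvd : Φ ^ Q ∣ Φ ^ (Q - 1) * w := by
    rw [eq_sum_monomial_mul_expand_cartier Q (Φ ^ (Q - 1) * w), ← hΦ]
    refine Finset.dvd_sum fun b _ => Dvd.dvd.mul_left (map_dvd (MvPolynomial.expand Q) ?_) _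
    rw [← mul_assoc]
    exact hall _ (totalDegree_monomial_smallExp_le b 1)
  rw [← pow_sub_one_mul (NeZero.ne Q) Φ] at hdvd
  exact hw ((mul_dvd_mul_iff_left (pow_ne_zero _ hΦ0)).1 hdvd)

end Cartier

section CoordinateRing

open MvPolynomial Module

variable {σ : Type*} {k : Type*} [Field k] {Φ : MvPolynomial σ k}

/-- The coordinate ring of the affine hypersurface `Φ = 0`. -/
abbrev CoordinateRing (Φ : MvPolynomial σ k) : Type _ :=
  MvPolynomial σ k ⧸ Ideal.span {Φ}

lemma coordinateRing_mk_eq_zero_iff {u : MvPolynomial σ k} :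
    (Ideal.Quotient.mk (Ideal.span {Φ}) u : CoordinateRing Φ) = 0 ↔ Φ ∣ u :=
  Ideal.Quotient.eq_zero_iff_dvd Φ u

/-- The classes in the coordinate ring of the polynomials of degree at most `B`. -/
noncomputable def coordinateRingDegreeLE (Φ : MvPolynomial σ k) (B : ℕ) :
    Submodule k (CoordinateRing Φ) :=
  (restrictTotalDegree σ k B).map (Ideal.Quotient.mkₐ k (Ideal.span {Φ})).toLinearMap

instance [Finite σ] (B : ℕ) : FiniteDimensional k (coordinateRingDegreeLE Φ B) := by
  unfold coordinateRingDegreeLE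
  infer_instance

lemma mem_coordinateRingDegreeLE {B : ℕ} {x : CoordinateRing Φ} :
    x ∈ coordinateRingDegreeLE Φ B ↔
      ∃ u : MvPolynomial σ k, u.totalDegree ≤ B ∧ Ideal.Quotient.mk _ u = x := by
  simp only [coordinateRingDegreeLE, Submodule.mem_map, mem_restrictTotalDegree]
  rfl

lemma expand_pow_eq_pow_pow {q : ℕ} (hΦ : MvPolynomial.expand q Φ = Φ ^ q) (r : ℕ) :
    MvPolynomial.expand (q ^ r) Φ = Φ ^ q ^ r := by
  induction r with
  | zero => simp
  | succ r ih => rw [pow_succ, mul_comm, MvPolynomial.expand_mul, ih, map_pow, hΦ, ← pow_mul]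

variable [Fintype σ] {q : ℕ} [NeZero q]

/-- The bilinear map `(u, g) ↦ cartier (q ^ r) (g * Φ ^ (q ^ r - 1) * u)` with values in the
coordinate ring of `Φ = 0`. -/
noncomputable def cartierPairing (Φ : MvPolynomial σ k) (q r : ℕ) [NeZero q] :
    MvPolynomial σ k →ₗ[k] MvPolynomial σ k →ₗ[k] CoordinateRing Φ :=
  (LinearMap.mul k (MvPolynomial σ k)).compr₂ ((Ideal.Quotient.mkₐ k (Ideal.span {Φ})).toLinearMap
    ∘ₗ cartier (q ^ r) ∘ₗ LinearMap.mulLeft k (Φ ^ (q ^ r - 1)))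

lemma cartierPairing_apply (r : ℕ) (u g : MvPolynomial σ k) :
    cartierPairing Φ q r u g =
      Ideal.Quotient.mk _ (cartier (q ^ r) (g * Φ ^ (q ^ r - 1) * u)) := by
  rw [mul_assoc, mul_comm g, mul_assoc]
  rfl

lemma span_le_ker_cartierPairing (hΦ : MvPolynomial.expand q Φ = Φ ^ q) (r : ℕ) :
    (Ideal.span {Φ}).restrictScalars k ≤ LinearMap.ker (cartierPairing Φ q r) := by
  intro u hu
  obtain ⟨v, rfl⟩ := Ideal.mem_span_singleton.1 hu
  refine LinearMap.mem_ker.2 (LinearMap.ext fun g => ?_)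
  rw [cartierPairing_apply, cartier_mul_pow_mul_self_mul (expand_pow_eq_pow_pow hΦ r)]
  exact coordinateRing_mk_eq_zero_iff.2 (dvd_mul_right _ _)

variable (hΦ : MvPolynomial.expand q Φ = Φ ^ q)

/-- The operator `u ↦ cartier (q ^ r) (g * Φ ^ (q ^ r - 1) * u)` on the hypersurface `Φ = 0`, as a
linear function of `g`. It is the trace of the `q ^ r`-Frobenius twisted by `g`. -/
noncomputable def twistedCartier (r : ℕ) :
    MvPolynomial σ k →ₗ[k] End k (CoordinateRing Φ) :=
  (Submodule.liftQ _ _ (span_le_ker_cartierPairing hΦ r) ∘ₗ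
    (Submodule.Quotient.restrictScalarsEquiv k (Ideal.span {Φ})).symm.toLinearMap).flip

lemma twistedCartier_mk (r : ℕ) (g u : MvPolynomial σ k) :
    twistedCartier hΦ r g (Ideal.Quotient.mk _ u) =
      Ideal.Quotient.mk _ (cartier (q ^ r) (g * Φ ^ (q ^ r - 1) * u)) := by
  rw [← cartierPairing_apply]
  exact LinearMap.congr_fun (Submodule.liftQ_apply ((Ideal.span {Φ}).restrictScalars k)
    (cartierPairing Φ q r) (h := span_le_ker_cartierPairing hΦ r) u) g

lemma twistedCartier_mul (r s : ℕ) (g h : MvPolynomial σ k) :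
    twistedCartier hΦ r g * twistedCartier hΦ s h =
      twistedCartier hΦ (r + s) (h * MvPolynomial.expand (q ^ s) g) := by
  refine LinearMap.ext (Ideal.Quotient.mk_surjective.forall.2 fun u => ?_)
  rw [End.mul_apply, twistedCartier_mk, twistedCartier_mk, twistedCartier_mk,
    ← cartier_expand_mul, cartier_cartier]
  have hpow : MvPolynomial.expand (q ^ s) (Φ ^ (q ^ r - 1)) * Φ ^ (q ^ s - 1) =
      Φ ^ (q ^ (r + s) - 1) := by
    have := Nat.one_le_pow r q (NeZero.pos q)
    have := Nat.one_le_pow s q (NeZero.pos q)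
    rw [map_pow, expand_pow_eq_pow_pow hΦ, ← pow_mul, ← pow_add]
    congr 1
    rw [Nat.mul_sub, pow_add, mul_comm (q ^ r), mul_one]
    have := Nat.le_mul_of_pos_right (q ^ s) (NeZero.pos (q ^ r))
    omega
  congr 1
  ext a
  rw [coeff_cartier, coeff_cartier, ← hpow, ← pow_add, add_comm s r]
  congr 1
  rw [map_mul]
  ring

end CoordinateRing

section TwistedCartier

open MvPolynomial Module

variable {σ : Type*} {k : Type*} [Field k] {q : ℕ} [NeZero q]

lemma totalDegree_mul_expand_pow_le {R : Type*} [CommSemiring R] {c r s : ℕ}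
    {g h : MvPolynomial σ R} (hg : g.totalDegree ≤ c * (q ^ r - 1))
    (hh : h.totalDegree ≤ c * (q ^ s - 1)) :
    (h * MvPolynomial.expand (q ^ s) g).totalDegree ≤ c * (q ^ (r + s) - 1) := by
  have hr : 1 ≤ q ^ r := NeZero.one_le
  have hs : 1 ≤ q ^ s := NeZero.one_le
  calc (h * MvPolynomial.expand (q ^ s) g).totalDegree
      ≤ h.totalDegree + g.totalDegree * q ^ s :=
        (totalDegree_mul _ _).trans_eq (by rw [totalDegree_expand])
    _ ≤ c * (q ^ s - 1) + c * (q ^ r - 1) * q ^ s :=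
        Nat.add_le_add hh (Nat.mul_le_mul_right _ hg)
    _ = c * (q ^ (r + s) - 1) := by
        rw [pow_add]
        zify [hr, hs, Nat.mul_pos hr hs]
        ring

lemma totalDegree_mul_pow_le {R : Type*} [CommSemiring R] {Φ g : MvPolynomial σ R} {c n : ℕ}
    (hg : g.totalDegree ≤ (Φ.totalDegree + c) * n) :
    (g * Φ ^ n).totalDegree ≤ (2 * Φ.totalDegree + c) * n := by
  have h1 := totalDegree_mul g (Φ ^ n)
  have h2 := totalDegree_pow Φ n
  nlinarith

/-- The polynomials `g` such that `g * v` has degree at most `N` for all `v` of degree at most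
`B`. -/
noncomputable def degreeColon (σ k : Type*) [Field k] (B N : ℕ) :
    Submodule k (MvPolynomial σ k) :=
  ⨅ v ∈ restrictTotalDegree σ k B, (restrictTotalDegree σ k N).comap (LinearMap.mulRight k v)

lemma mem_degreeColon {B N : ℕ} {g : MvPolynomial σ k} :
    g ∈ degreeColon σ k B N ↔
      ∀ v : MvPolynomial σ k, v.totalDegree ≤ B → (g * v).totalDegree ≤ N := by
  simp [degreeColon, mem_restrictTotalDegree]

variable [Fintype σ] {Φ : MvPolynomial σ k} (hΦ : MvPolynomial.expand q Φ = Φ ^ q)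

lemma twistedCartier_mem_coordinateRingDegreeLE {r : ℕ} {g : MvPolynomial σ k}
    (hg : g.totalDegree ≤ (Φ.totalDegree + Fintype.card σ) * (q ^ r - 1)) {x : CoordinateRing Φ}
    (hx : x ∈ coordinateRingDegreeLE Φ (2 * Φ.totalDegree)) :
    twistedCartier hΦ r g x ∈ coordinateRingDegreeLE Φ (2 * Φ.totalDegree) := by
  obtain ⟨u, hu, rfl⟩ := mem_coordinateRingDegreeLE.1 hx
  refine mem_coordinateRingDegreeLE.2 ⟨_, ?_, (twistedCartier_mk hΦ ..).symm⟩
  exact totalDegree_cartier_mul_le (totalDegree_mul_pow_le hg) hu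

theorem operatorSystem_twistedCartier (hq : 3 ≤ q) (hΦ0 : Φ ≠ 0) :
    OperatorSystem
      (fun r => (restrictTotalDegree σ k ((Φ.totalDegree + Fintype.card σ) * (q ^ r - 1))).map
        (twistedCartier hΦ r))
      (fun r => (degreeColon σ k (2 * Φ.totalDegree)
        ((Φ.totalDegree + Fintype.card σ) * (q ^ r - 1))).map (twistedCartier hΦ r))
      (coordinateRingDegreeLE Φ (2 * Φ.totalDegree)) where
  mul_mem := by
    rintro r s _ ⟨g, hg, rfl⟩ _ ⟨h, hh, rfl⟩
    simp only [SetLike.mem_coe, mem_restrictTotalDegree] at hg hh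
    rw [twistedCartier_mul]
    exact Submodule.mem_map_of_mem
      ((mem_restrictTotalDegree _ _ _).2 (totalDegree_mul_expand_pow_le hg hh))
  mul_mem_small := by
    rintro r s _ ⟨g, hg, rfl⟩ _ ⟨h, hh, rfl⟩
    simp only [SetLike.mem_coe, mem_restrictTotalDegree, mem_degreeColon] at hg hh
    rw [twistedCartier_mul]
    refine Submodule.mem_map_of_mem (mem_degreeColon.2 fun v hv => ?_)
    rw [mul_right_comm]
    exact totalDegree_mul_expand_pow_le hg (hh v hv)
  small_le := by
    refine fun r => Submodule.map_mono fun g hg => (mem_restrictTotalDegree _ _ _).2 ?_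
    simpa using mem_degreeColon.1 hg 1 (by simp)
  isStable := by
    rintro r _ ⟨g, hg, rfl⟩ x hx
    exact twistedCartier_mem_coordinateRingDegreeLE hΦ ((mem_restrictTotalDegree _ _ _).1 hg) hx
  exists_apply_ne_zero := by
    refine Ideal.Quotient.mk_surjective.forall.2 fun w hw => ?_
    obtain ⟨g, hg, hgw⟩ := exists_not_dvd_cartier (q ^ 1) hΦ0 (expand_pow_eq_pow_pow hΦ 1)
      (mt coordinateRing_mk_eq_zero_iff.2 hw)
    refine ⟨_, ⟨g, mem_degreeColon.2 fun v hv => ?_, rfl⟩, ?_⟩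
    · refine (totalDegree_mul _ _).trans ((Nat.add_le_add hg hv).trans ?_)
      have : 2 ≤ q ^ 1 - 1 := by rw [pow_one]; omega
      nlinarith
    · rw [twistedCartier_mk]
      exact mt coordinateRing_mk_eq_zero_iff.1 hgw
  comp_mulLeft_mem := by
    rintro s _ ⟨g, hg, rfl⟩ x hx
    obtain ⟨v, hv, rfl⟩ := mem_coordinateRingDegreeLE.1 hx
    refine ⟨g * v, (mem_restrictTotalDegree _ _ _).2 (mem_degreeColon.1 hg v hv), ?_⟩
    refine LinearMap.ext (Ideal.Quotient.mk_surjective.forall.2 fun u => ?_)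
    rw [LinearMap.comp_apply, LinearMap.mulLeft_apply, ← map_mul, twistedCartier_mk,
      twistedCartier_mk, mul_right_comm g v, ← mul_assoc]

/-- The operators on the hypersurface `Φ = 0` twisted by multiples of `b`. -/
def multipleOperators (b : MvPolynomial σ k) (r : ℕ) : Set (End k (CoordinateRing Φ)) :=
  twistedCartier hΦ r '' {g | b ∣ g ∧
    g.totalDegree ≤ (Φ.totalDegree + Fintype.card σ) * (q ^ r - 1)}

lemma exists_mem_multipleOperators (hq : 2 ≤ q) (hirr : Irreducible Φ) (hD : 0 < Φ.totalDegree)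
    {b : MvPolynomial σ k} (hb : ¬ Φ ∣ b) {w : CoordinateRing Φ}
    (hw : w ∈ coordinateRingDegreeLE Φ (2 * Φ.totalDegree)) (hw0 : w ≠ 0) :
    ∃ t, ∃ j ∈ multipleOperators hΦ b t, j w ≠ 0 ∧
      ∀ u ∈ coordinateRingDegreeLE Φ (2 * Φ.totalDegree),
        ∃ Z ∈ (restrictTotalDegree σ k ((Φ.totalDegree + Fintype.card σ) * (q ^ t - 1))).map
          (twistedCartier hΦ t), j u = Z w := by
  obtain ⟨w, hwdeg, rfl⟩ := mem_coordinateRingDegreeLE.1 hw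
  rw [Ne, coordinateRing_mk_eq_zero_iff] at hw0
  let t := b.totalDegree + 2 * Φ.totalDegree + 1
  have hprime := hirr.prime
  obtain ⟨g, hg, hgw⟩ := exists_not_dvd_cartier (q ^ t) hirr.ne_zero (expand_pow_eq_pow_pow hΦ t)
    (w := b * w * w) (by simp [hprime.dvd_mul, hb, hw0])
  have hdeg : ∀ u : MvPolynomial σ k, u.totalDegree ≤ 2 * Φ.totalDegree →
      (g * b * u).totalDegree ≤ (Φ.totalDegree + Fintype.card σ) * (q ^ t - 1) := by
    intro u hu
    have ht : t < q ^ t := Nat.lt_pow_self (by omega)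
    have h1 := totalDegree_mul (g * b) u
    have h2 := totalDegree_mul g b
    have h3 : q ^ t - 1 ≤ Φ.totalDegree * (q ^ t - 1) := Nat.le_mul_of_pos_left _ hD
    rw [add_mul]
    omega
  refine ⟨t, _, ⟨g * b * w, ⟨⟨g * w, by ring⟩, hdeg w hwdeg⟩, rfl⟩, ?_, ?_⟩
  · rw [twistedCartier_mk, Ne, coordinateRing_mk_eq_zero_iff]
    convert hgw using 3
    ring
  · intro x hx
    obtain ⟨u, hu, rfl⟩ := mem_coordinateRingDegreeLE.1 hx
    refine ⟨_, Submodule.mem_map_of_mem ((mem_restrictTotalDegree _ _ _).2 (hdeg u hu)), ?_⟩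
    rw [twistedCartier_mk, twistedCartier_mk]
    congr 2
    ring

/-- `ψ w` is the trace of the rank-one operator `u ↦ ψ u • w`, so `ψ w ≠ 0` makes the trace
formula yield a nonzero point count. -/
theorem exists_twistedCartier_eq_smul [IsAlgClosed k] (hq : 3 ≤ q) (hirr : Irreducible Φ)
    (hD : 0 < Φ.totalDegree) {b : MvPolynomial σ k} (hb : ¬ Φ ∣ b) :
    ∃ N, ∀ r ≥ N, ∃ G : MvPolynomial σ k, b ∣ G ∧
      G.totalDegree ≤ (Φ.totalDegree + Fintype.card σ) * (q ^ r - 1) ∧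
      ∃ w ∈ coordinateRingDegreeLE Φ (2 * Φ.totalDegree), ∃ ψ : Dual k (CoordinateRing Φ),
        (∀ u ∈ coordinateRingDegreeLE Φ (2 * Φ.totalDegree),
          twistedCartier hΦ r G u = ψ u • w) ∧ ψ w ≠ 0 := by
  have : (Ideal.span {Φ}).IsPrime := (Ideal.span_singleton_prime hirr.ne_zero).2 hirr.prime
  have hV : coordinateRingDegreeLE Φ (2 * Φ.totalDegree) ≠ ⊥ :=
    (Submodule.ne_bot_iff _).2
      ⟨1, mem_coordinateRingDegreeLE.2 ⟨1, by simp, map_one _⟩, one_ne_zero⟩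
  obtain ⟨t, N, _, ⟨g, ⟨hbg, hg⟩, rfl⟩, w, hw, hX⟩ :=
    (operatorSystem_twistedCartier hΦ hq hirr.ne_zero).exists_apply_eq_smul_of_ge hV
      (multipleOperators hΦ b)
      fun w hw hw0 => exists_mem_multipleOperators hΦ (by omega) hirr hD hb hw hw0
  refine ⟨N + t, fun r hr => ?_⟩
  obtain ⟨_, ⟨h, hh, rfl⟩, ψ, hψ, hψw⟩ := hX (r - t) (by omega)
  have hrt : r - t + t = r := by omega
  refine ⟨g * MvPolynomial.expand (q ^ t) h, hbg.mul_right _, ?_, w, hw, ψ, fun u hu => ?_, hψw⟩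
  · rw [← hrt]
    exact totalDegree_mul_expand_pow_le ((mem_restrictTotalDegree _ _ _).1 hh) hg
  · rw [← hψ u hu, ← End.mul_apply, twistedCartier_mul, hrt]

end TwistedCartier

section Trace

open MvPolynomial Module

lemma trace_eq_add_of_exact {k M V N : Type*} [Field k] [AddCommGroup M] [Module k M]
    [AddCommGroup V] [Module k V] [AddCommGroup N] [Module k N] [FiniteDimensional k M]
    [FiniteDimensional k V] [FiniteDimensional k N] {ι : N →ₗ[k] M} {ρ : M →ₗ[k] V}
    (hι : Function.Injective ι) (hρ : Function.Surjective ρ) (hex : Function.Exact ι ρ)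
    {f : End k M} {fV : End k V} {fN : End k N} (hV : ρ ∘ₗ f = fV ∘ₗ ρ) (hN : f ∘ₗ ι = ι ∘ₗ fN) :
    LinearMap.trace k M f = LinearMap.trace k V fV + LinearMap.trace k N fN := by
  obtain ⟨s, hs⟩ := ρ.exists_rightInverse_of_surjective (LinearMap.range_eq_top.2 hρ)
  obtain ⟨τ, hτ⟩ := ι.exists_leftInverse_of_injective (LinearMap.ker_eq_bot.2 hι)
  let τ' : M →ₗ[k] N := τ ∘ₗ (LinearMap.id - s ∘ₗ ρ)
  have hsplit : s ∘ₗ ρ + ι ∘ₗ τ' = LinearMap.id := by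
    ext m
    obtain ⟨n, hn⟩ := (hex (m - s (ρ m))).1 (by
      rw [map_sub, ← LinearMap.comp_apply ρ, hs, LinearMap.id_apply, sub_self])
    have : τ' m = n := by
      calc τ' m = τ (ι n) := by rw [hn]; rfl
        _ = n := LinearMap.congr_fun hτ n
    rw [LinearMap.add_apply, LinearMap.comp_apply, LinearMap.comp_apply, this, hn]
    simp
  have hτι : τ' ∘ₗ ι = LinearMap.id := by
    rw [LinearMap.comp_assoc, LinearMap.sub_comp, LinearMap.comp_assoc,
      hex.linearMap_comp_eq_zero, LinearMap.comp_zero, sub_zero, LinearMap.id_comp, hτ]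
  calc LinearMap.trace k M f
      = LinearMap.trace k M ((f ∘ₗ s) ∘ₗ ρ + (f ∘ₗ ι) ∘ₗ τ') := by
        rw [LinearMap.comp_assoc, LinearMap.comp_assoc, ← LinearMap.comp_add, hsplit,
          LinearMap.comp_id]
    _ = LinearMap.trace k V (ρ ∘ₗ f ∘ₗ s) + LinearMap.trace k N (τ' ∘ₗ f ∘ₗ ι) := by
        rw [map_add, LinearMap.trace_comp_comm' (f ∘ₗ s) ρ, LinearMap.trace_comp_comm' (f ∘ₗ ι) τ']
    _ = LinearMap.trace k V fV + LinearMap.trace k N fN := by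
        rw [← LinearMap.comp_assoc s, hV, hN, LinearMap.comp_assoc, hs, LinearMap.comp_id,
          ← LinearMap.comp_assoc, hτι, LinearMap.id_comp]

/-- The exponents of total degree at most `N`. -/
noncomputable def exponentsLE (σ : Type*) [Finite σ] (N : ℕ) : Finset (σ →₀ ℕ) :=
  (Finsupp.finite_of_degree_le N).toFinset

lemma mem_exponentsLE {σ : Type*} [Finite σ] {N : ℕ} {a : σ →₀ ℕ} :
    a ∈ exponentsLE σ N ↔ a.degree ≤ N := by
  simp [exponentsLE]

variable {σ : Type*} [Fintype σ]

/-- The exponent `shiftExp Q a - a`, through which a polynomial `h` contributes to the diagonal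
entry at `x ^ a` of the operator `u ↦ cartier Q (h * u)`. -/
noncomputable def diagExp (Q : ℕ) (a : σ →₀ ℕ) : σ →₀ ℕ :=
  Finsupp.equivFunOnFinite.symm fun i => (Q - 1) * (a i + 1)

@[simp]
lemma diagExp_apply (Q : ℕ) (a : σ →₀ ℕ) (i : σ) : diagExp Q a i = (Q - 1) * (a i + 1) :=
  rfl

lemma diagExp_add (Q : ℕ) [NeZero Q] (a : σ →₀ ℕ) : diagExp Q a + a = shiftExp Q a := by
  ext i
  obtain ⟨e, rfl⟩ := Nat.exists_eq_add_of_le' (NeZero.one_le (n := Q))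
  simp only [Finsupp.add_apply, diagExp_apply, shiftExp_apply, Nat.add_sub_cancel]
  ring

lemma diagExp_injective {Q : ℕ} (hQ : 1 < Q) :
    Function.Injective (diagExp Q : (σ →₀ ℕ) → σ →₀ ℕ) := by
  intro a b h
  ext i
  have := DFunLike.congr_fun h i
  simpa [Nat.sub_eq_zero_iff_le, hQ.not_ge] using this

lemma degree_diagExp (Q : ℕ) (a : σ →₀ ℕ) :
    (diagExp Q a).degree = (a.degree + Fintype.card σ) * (Q - 1) := by
  simp [Finsupp.degree_eq_sum, ← Finset.mul_sum, Finset.sum_add_distrib, mul_comm]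

lemma mem_range_diagExp_iff {Q : ℕ} (hQ : 1 < Q) {m : σ →₀ ℕ} :
    m ∈ Set.range (diagExp Q) ↔ ∀ i, 0 < m i ∧ Q - 1 ∣ m i := by
  constructor
  · rintro ⟨a, rfl⟩ i
    exact ⟨Nat.mul_pos (by omega) (by omega), dvd_mul_right _ _⟩
  · intro h
    refine ⟨Finsupp.equivFunOnFinite.symm fun i => m i / (Q - 1) - 1, Finsupp.ext fun i => ?_⟩
    obtain ⟨hpos, hdvd⟩ := h i
    have : 0 < m i / (Q - 1) := Nat.div_pos (Nat.le_of_dvd hpos hdvd) (by omega)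
    simp only [diagExp_apply, Finsupp.equivFunOnFinite_symm_apply_apply]
    rw [Nat.sub_add_cancel this, Nat.mul_div_cancel' hdvd]

section CartierDegreeLE

variable {R : Type*} [CommRing R] {Q N : ℕ} [NeZero Q] {h : MvPolynomial σ R}

/-- The operator `u ↦ cartier Q (h * u)` on the polynomials of degree at most `N`. -/
noncomputable def cartierDegreeLE (hh : h.totalDegree ≤ (N + Fintype.card σ) * (Q - 1)) :
    End R (restrictTotalDegree σ R N) :=
  (cartier Q ∘ₗ LinearMap.mulLeft R h).restrict fun u hu => by
    rw [mem_restrictTotalDegree] at hu ⊢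
    exact totalDegree_cartier_mul_le hh hu

lemma coe_cartierDegreeLE (hh : h.totalDegree ≤ (N + Fintype.card σ) * (Q - 1))
    (u : restrictTotalDegree σ R N) : (cartierDegreeLE hh u : MvPolynomial σ R) =
      cartier Q (h * (u : MvPolynomial σ R)) :=
  rfl

lemma trace_cartierDegreeLE (hh : h.totalDegree ≤ (N + Fintype.card σ) * (Q - 1)) :
    LinearMap.trace R _ (cartierDegreeLE hh) = ∑ a ∈ exponentsLE σ N, h.coeff (diagExp Q a) := by
  classical
  let s : Set (σ →₀ ℕ) := {a | a.degree ≤ N}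
  have : Fintype s := (Finsupp.finite_of_degree_le N).fintype
  let b : Basis s R (restrictTotalDegree σ R N) := basisRestrictSupport R s
  have hrepr : ∀ x i, b.repr x i = (x : MvPolynomial σ R).coeff i := fun x i => rfl
  have hb : ∀ i, (b i : MvPolynomial σ R) = MvPolynomial.monomial (i : σ →₀ ℕ) 1 := by
    intro i
    ext j
    by_cases hj : j ∈ s
    · rw [← hrepr _ ⟨j, hj⟩, b.repr_self, MvPolynomial.coeff_monomial, Finsupp.single_apply]
      simp [Subtype.ext_iff]
    · have hij : (i : σ →₀ ℕ) ≠ j := fun hij => hj (hij ▸ i.2)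
      rw [MvPolynomial.coeff_monomial, if_neg hij, ← MvPolynomial.notMem_support_iff]
      exact fun hmem => hj ((b i).2 hmem)
  rw [LinearMap.trace_eq_matrix_trace R b, Matrix.trace,
    Finset.sum_subtype _ fun a => mem_exponentsLE (N := N)]
  refine Fintype.sum_congr _ _ fun a => ?_
  rw [Matrix.diag_apply, LinearMap.toMatrix_apply, hrepr, coe_cartierDegreeLE, hb, coeff_cartier,
    ← diagExp_add, MvPolynomial.coeff_mul_monomial, mul_one]

end CartierDegreeLE

lemma sum_pow_eq_ite (L : Type*) [Field L] [Fintype L] (i : ℕ) :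
    ∑ x : L, x ^ i = if 0 < i ∧ Fintype.card L - 1 ∣ i then -1 else 0 := by
  classical
  rcases Nat.eq_zero_or_pos i with rfl | hi
  · simp
  · have hunits : ∑ x : L, x ^ i = ∑ x : Lˣ, (x ^ i : L) := by
      refine (Fintype.sum_of_injective _ Units.val_injective _ _ (fun x hx => ?_) fun _ => rfl).symm
      rw [not_ne_iff.1 fun h => hx ⟨Units.mk0 x h, rfl⟩, zero_pow hi.ne']
    simp [hunits, FiniteField.sum_pow_units, hi]

section SumEval

variable {L k : Type*} [Field L] [Fintype L] [Field k] [Algebra L k]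

open Classical in
lemma sum_prod_pow_eq_ite [DecidableEq σ] (m : σ →₀ ℕ) :
    ∑ x : σ → L, ∏ i, algebraMap L k (x i) ^ m i =
      if m ∈ Set.range (diagExp (Fintype.card L)) then (-1) ^ Fintype.card σ else 0 := by
  have hsum (i : σ) : ∑ y : L, algebraMap L k y ^ m i =
      if 0 < m i ∧ Fintype.card L - 1 ∣ m i then -1 else 0 := by
    simpa [apply_ite] using congrArg (algebraMap L k) (sum_pow_eq_ite L (m i))
  simp only [mem_range_diagExp_iff (Fintype.one_lt_card (α := L))]
  rw [← Fintype.piFinset_univ,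
    ← Finset.prod_univ_sum (fun _ => Finset.univ) fun i y => algebraMap L k y ^ m i]
  simp only [hsum]
  split_ifs with hall
  · simp [hall]
  · obtain ⟨i, hi⟩ := not_forall.1 hall
    exact Finset.prod_eq_zero (Finset.mem_univ i) (if_neg hi)

lemma sum_eval_eq_trace [DecidableEq σ] {Q N : ℕ} [NeZero Q] (hQ : Fintype.card L = Q)
    {h : MvPolynomial σ k} (hh : h.totalDegree ≤ (N + Fintype.card σ) * (Q - 1)) :
    ∑ x : σ → L, MvPolynomial.eval (fun i => algebraMap L k (x i)) h =
      (-1) ^ Fintype.card σ * LinearMap.trace k _ (cartierDegreeLE hh) := by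
  subst hQ
  have hQ1 : 1 < Fintype.card L := Fintype.one_lt_card
  have hsupp : h.support ⊆ exponentsLE σ ((N + Fintype.card σ) * (Fintype.card L - 1)) :=
    fun m hm =>
      mem_exponentsLE.2 ((le_totalDegree hm).trans hh)
  simp only [eval_eq']
  rw [Finset.sum_comm]
  simp only [← Finset.mul_sum, sum_prod_pow_eq_ite]
  rw [trace_cartierDegreeLE, Finset.mul_sum, Finset.sum_subset hsupp fun m _ hm => by
    rw [MvPolynomial.notMem_support_iff.1 hm, zero_mul]]
  symm
  refine Finset.sum_of_injOn (diagExp (Fintype.card L)) (diagExp_injective hQ1).injOn ?_ ?_ ?_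
  · intro a ha
    rw [Finset.mem_coe, mem_exponentsLE] at ha ⊢
    rw [degree_diagExp]
    gcongr
  · intro m hm hm'
    rw [if_neg, mul_zero]
    rintro ⟨a, rfl⟩
    rw [mem_exponentsLE, degree_diagExp] at hm
    have ha : a.degree + Fintype.card σ ≤ N + Fintype.card σ :=
      Nat.le_of_mul_le_mul_right hm (by omega)
    exact hm' ⟨a, mem_exponentsLE.2 (by omega), rfl⟩
  · intro a _
    rw [if_pos ⟨a, rfl⟩, mul_comm]

end SumEval

end Trace

section TraceFormula

open MvPolynomial Module

variable {σ k : Type*} [Field k] {Φ : MvPolynomial σ k}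

/-- Multiplication by `Φ` on polynomials of bounded degree. -/
noncomputable def mulDegreeLE {N B : ℕ} (hB : B = Φ.totalDegree + N) :
    restrictTotalDegree σ k N →ₗ[k] restrictTotalDegree σ k B :=
  (LinearMap.mulLeft k Φ).restrict fun u hu => by
    rw [mem_restrictTotalDegree] at hu ⊢
    exact hB ▸ (totalDegree_mul Φ u).trans (Nat.add_le_add_left hu _)

/-- The quotient map onto the coordinate ring, on polynomials of bounded degree. -/
noncomputable def mkDegreeLE (Φ : MvPolynomial σ k) (B : ℕ) :
    restrictTotalDegree σ k B →ₗ[k] coordinateRingDegreeLE Φ B :=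
  (Ideal.Quotient.mkₐ k (Ideal.span {Φ})).toLinearMap.restrict fun _ =>
    Submodule.mem_map_of_mem

lemma mulDegreeLE_injective (hΦ0 : Φ ≠ 0) {N B : ℕ} (hB : B = Φ.totalDegree + N) :
    Function.Injective (mulDegreeLE hB) := fun _ _ h =>
  Subtype.ext (mul_left_cancel₀ hΦ0 (congrArg Subtype.val h))

lemma mkDegreeLE_surjective (B : ℕ) : Function.Surjective (mkDegreeLE Φ B) := by
  rintro ⟨_, u, hu, rfl⟩
  exact ⟨⟨u, hu⟩, rfl⟩

lemma exact_mulDegreeLE_mkDegreeLE {N B : ℕ} (hB : B = Φ.totalDegree + N) :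
    Function.Exact (mulDegreeLE hB) (mkDegreeLE Φ B) := by
  rintro ⟨m, hm⟩
  rw [← Subtype.coe_inj]
  refine (coordinateRing_mk_eq_zero_iff (u := m)).trans ⟨?_, ?_⟩
  · rintro ⟨n, rfl⟩
    by_cases h0 : Φ * n = 0
    · exact ⟨0, Subtype.ext (by simp [h0])⟩
    · refine ⟨⟨n, ?_⟩, rfl⟩
      rw [mem_restrictTotalDegree] at hm ⊢
      rw [totalDegree_mul_of_isDomain (left_ne_zero_of_mul h0) (right_ne_zero_of_mul h0)] at hm
      omega
  · rintro ⟨n, hn⟩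
    exact ⟨n, (congrArg Subtype.val hn).symm⟩

variable [Fintype σ] {q : ℕ} [NeZero q] (hΦ : MvPolynomial.expand q Φ = Φ ^ q)

lemma trace_twistedCartier (hΦ0 : Φ ≠ 0) {r : ℕ} {G : MvPolynomial σ k}
    (hG : G.totalDegree ≤ (Φ.totalDegree + Fintype.card σ) * (q ^ r - 1)) :
    LinearMap.trace k (coordinateRingDegreeLE Φ (2 * Φ.totalDegree))
        ((twistedCartier hΦ r G).restrict fun _ =>
          twistedCartier_mem_coordinateRingDegreeLE hΦ hG) =
      LinearMap.trace k _ (cartierDegreeLE (totalDegree_mul_pow_le hG)) -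
        LinearMap.trace k _ (cartierDegreeLE hG) := by
  rw [eq_sub_iff_add_eq]
  symm
  refine trace_eq_add_of_exact (mulDegreeLE_injective hΦ0 (two_mul _)) (mkDegreeLE_surjective _)
    (exact_mulDegreeLE_mkDegreeLE _) ?_ ?_
  · exact LinearMap.ext fun u => Subtype.ext (twistedCartier_mk hΦ r G u).symm
  · exact LinearMap.ext fun u =>
      Subtype.ext (cartier_mul_pow_mul_self_mul (expand_pow_eq_pow_pow hΦ r) G u)

theorem neg_one_pow_mul_trace_twistedCartier [DecidableEq σ] (hΦ0 : Φ ≠ 0) {r : ℕ}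
    {L : Type*} [Field L] [Fintype L] [Algebra L k] (hL : Fintype.card L = q ^ r)
    {G : MvPolynomial σ k}
    (hG : G.totalDegree ≤ (Φ.totalDegree + Fintype.card σ) * (q ^ r - 1)) :
    (-1) ^ Fintype.card σ * LinearMap.trace k (coordinateRingDegreeLE Φ (2 * Φ.totalDegree))
        ((twistedCartier hΦ r G).restrict fun _ =>
          twistedCartier_mem_coordinateRingDegreeLE hΦ hG) =
      ∑ x : σ → L, (MvPolynomial.eval (fun i => algebraMap L k (x i)) (G * Φ ^ (q ^ r - 1)) -
        MvPolynomial.eval (fun i => algebraMap L k (x i)) G) := by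
  rw [trace_twistedCartier hΦ hΦ0 hG, mul_sub, Finset.sum_sub_distrib,
    sum_eval_eq_trace hL (totalDegree_mul_pow_le hG), sum_eval_eq_trace hL hG]

end TraceFormula

section Points

open MvPolynomial Module

lemma expand_card {σ K : Type*} [Field K] [Fintype K] (F : MvPolynomial σ K) :
    MvPolynomial.expand (Fintype.card K) F = F ^ Fintype.card K := by
  obtain ⟨p, hp⟩ := CharP.exists K
  obtain ⟨n, hprime, hn⟩ := FiniteField.card K p
  have : Fact p.Prime := ⟨hprime⟩
  induction F using MvPolynomial.induction_on with
  | C a => rw [MvPolynomial.expand_C, ← MvPolynomial.C_pow, FiniteField.pow_card]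
  | add f g hf hg => rw [map_add, hf, hg, hn, add_pow_char_pow]
  | mul_X f i hf => rw [map_mul, hf, MvPolynomial.expand_X, mul_pow]

lemma totalDegree_pos_of_irreducible {σ k : Type*} [Field k] {Φ : MvPolynomial σ k}
    (hΦ : Irreducible Φ) : 0 < Φ.totalDegree := by
  rw [Nat.pos_iff_ne_zero]
  intro h0
  rw [totalDegree_eq_zero_iff_eq_C] at h0
  refine hΦ.not_isUnit (h0 ▸ (isUnit_iff_ne_zero.2 fun h => hΦ.ne_zero ?_).map MvPolynomial.C)
  rw [h0, h, map_zero]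

theorem exists_aeval_eq_zero_and_aeval_ne_zero {σ : Type*} [Finite σ] {K k : Type*} [Field K]
    [Fintype K] [Field k] [IsAlgClosed k] [Algebra K k] (hq : 3 ≤ Fintype.card K)
    {Φ b : MvPolynomial σ K} (hirr : Irreducible (MvPolynomial.map (algebraMap K k) Φ))
    (hb : ¬ MvPolynomial.map (algebraMap K k) Φ ∣ MvPolynomial.map (algebraMap K k) b) :
    ∃ N, ∀ r ≥ N, ∀ (L : Type*) [Field L] [Fintype L] [Algebra K L],
      Fintype.card L = Fintype.card K ^ r →
      ∃ x : σ → L, MvPolynomial.aeval x Φ = 0 ∧ MvPolynomial.aeval x b ≠ 0 := by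
  classical
  have := Fintype.ofFinite σ
  have hexp : MvPolynomial.expand (Fintype.card K) (MvPolynomial.map (algebraMap K k) Φ) =
      MvPolynomial.map (algebraMap K k) Φ ^ Fintype.card K := by
    rw [← MvPolynomial.map_expand, expand_card, map_pow]
  obtain ⟨N, hN⟩ := exists_twistedCartier_eq_smul hexp hq hirr
    (totalDegree_pos_of_irreducible hirr) hb
  refine ⟨N, fun r hr L _ _ _ hL => ?_⟩
  obtain ⟨G, ⟨G', rfl⟩, hG, w, hw, ψ, hψ, hψw⟩ := hN r hr
  by_contra! hcon
  have : Algebra.IsAlgebraic K L := Algebra.IsAlgebraic.of_finite K L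
  let e : L →ₐ[K] k := IsAlgClosed.lift
  let _ : Algebra L k := e.toRingHom.toAlgebra
  have heval (P : MvPolynomial σ K) (x : σ → L) :
      MvPolynomial.eval (fun i => algebraMap L k (x i)) (MvPolynomial.map (algebraMap K k) P) =
        algebraMap L k (MvPolynomial.aeval x P) := by
    rw [MvPolynomial.eval_map, ← MvPolynomial.aeval_def]
    exact (comp_aeval_apply x e P).symm
  have htrace := neg_one_pow_mul_trace_twistedCartier hexp hirr.ne_zero hL hG
  have hrank : (twistedCartier hexp r _).restrict
      (fun _ => twistedCartier_mem_coordinateRingDegreeLE hexp hG) =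
      (ψ ∘ₗ Submodule.subtype _).smulRight ⟨w, hw⟩ :=
    LinearMap.ext fun u => Subtype.ext (hψ u u.2)
  rw [hrank, LinearMap.trace_smulRight, Finset.sum_eq_zero] at htrace
  · exact mul_ne_zero (pow_ne_zero _ (neg_ne_zero.2 one_ne_zero)) hψw htrace
  · intro x _
    rw [map_mul, map_pow, map_mul, heval, heval]
    by_cases hx : MvPolynomial.aeval x Φ = 0
    · simp [hcon x hx]
    · rw [← map_pow, ← hL, FiniteField.pow_card_sub_one_eq_one _ hx, map_one, mul_one, sub_self]

end Points

section HomogeneousComponent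
open MvPolynomial
variable {σ R : Type*} [CommRing R] {F G A B : MvPolynomial σ R} {a b i n : ℕ}

theorem homogeneousComponent_mul (n : ℕ) (F G : MvPolynomial σ R) :
    homogeneousComponent n (F * G) =
      ∑ x ∈ Finset.HasAntidiagonal.antidiagonal n,
        homogeneousComponent x.1 F * homogeneousComponent x.2 G := by
  classical
  refine MvPolynomial.ext _ _ fun m => ?_
  simp only [MvPolynomial.coeff_sum, MvPolynomial.coeff_mul, coeff_homogeneousComponent]
  rw [Finset.sum_comm]
  have hterm (y : (σ →₀ ℕ) × (σ →₀ ℕ)) (hy : y ∈ Finset.HasAntidiagonal.antidiagonal m) :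
      ∑ x ∈ Finset.HasAntidiagonal.antidiagonal n, (if y.1.degree = x.1 then F.coeff y.1 else 0) *
        (if y.2.degree = x.2 then G.coeff y.2 else 0) =
      if m.degree = n then F.coeff y.1 * G.coeff y.2 else 0 := by
    simp only [ite_zero_mul_ite_zero, ← Prod.mk_inj, Prod.mk.eta]
    rw [Finset.sum_ite_eq]
    simp only [Finset.HasAntidiagonal.mem_antidiagonal, ← map_add,
      Finset.HasAntidiagonal.mem_antidiagonal.1 hy]
  rw [Finset.sum_congr rfl hterm, Finset.sum_ite_irrel, Finset.sum_const_zero]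

theorem eq_zero_of_homogeneousComponent (h : ∀ n, homogeneousComponent n F = 0) : F = 0 := by
  rw [← sum_homogeneousComponent F, Finset.sum_eq_zero fun n _ => h n]

theorem totalDegree_le_iff_homogeneousComponent :
    F.totalDegree ≤ a ↔ ∀ n, a < n → homogeneousComponent n F = 0 := by
  refine ⟨fun h n hn => homogeneousComponent_eq_zero n F (h.trans_lt hn), fun h => ?_⟩
  refine Finset.sup_le fun m hm => ?_
  by_contra hlt
  have := congrArg (MvPolynomial.coeff m) (h m.degree (not_le.1 hlt))
  rw [coeff_homogeneousComponent, if_pos rfl] at this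
  exact MvPolynomial.mem_support_iff.1 hm this

theorem mem_pow_idealOfVars_iff_homogeneousComponent :
    F ∈ idealOfVars σ R ^ a ↔ ∀ n < a, homogeneousComponent n F = 0 := by
  rw [mem_pow_idealOfVars_iff']
  refine ⟨fun h n hn => ?_, fun h m hm => ?_⟩
  · refine MvPolynomial.ext _ _ fun m => ?_
    rw [coeff_homogeneousComponent, MvPolynomial.coeff_zero, ite_eq_right_iff]
    rintro rfl
    exact h m hn
  · simpa [coeff_homogeneousComponent] using congrArg (MvPolynomial.coeff m) (h _ hm)

theorem mem_pow_idealOfVars_of_isHomogeneous (h : F.IsHomogeneous a) :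
    F ∈ idealOfVars σ R ^ a :=
  mem_pow_idealOfVars_iff_homogeneousComponent.2 fun n hn => by
    rw [homogeneousComponent_of_mem h, if_neg hn.ne]

theorem homogeneousComponent_add_mul_of_totalDegree_le (hF : F.totalDegree ≤ a)
    (hG : G.totalDegree ≤ b) :
    homogeneousComponent (a + b) (F * G) = homogeneousComponent a F * homogeneousComponent b G := by
  rw [homogeneousComponent_mul, Finset.sum_eq_single_of_mem (a, b) (by simp)]
  rintro ⟨i, j⟩ hij hne
  rw [Finset.HasAntidiagonal.mem_antidiagonal] at hij
  rcases lt_or_ge a i with h | h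
  · rw [homogeneousComponent_eq_zero i F (by omega), zero_mul]
  · have : i ≠ a := by rintro rfl; exact hne (by simp_all)
    rw [homogeneousComponent_eq_zero j G (by omega), mul_zero]

theorem homogeneousComponent_add_mul_of_mem_pow (hF : F ∈ idealOfVars σ R ^ a)
    (hG : G ∈ idealOfVars σ R ^ b) :
    homogeneousComponent (a + b) (F * G) = homogeneousComponent a F * homogeneousComponent b G := by
  rw [mem_pow_idealOfVars_iff_homogeneousComponent] at hF hG
  rw [homogeneousComponent_mul, Finset.sum_eq_single_of_mem (a, b) (by simp)]
  rintro ⟨i, j⟩ hij hne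
  rw [Finset.HasAntidiagonal.mem_antidiagonal] at hij
  rcases lt_or_ge i a with h | h
  · rw [hF i h, zero_mul]
  · have : i ≠ a := by rintro rfl; exact hne (by simp_all)
    rw [hG j (by omega), mul_zero]

theorem mul_mem_pow_idealOfVars (hF : F ∈ idealOfVars σ R ^ a) (hG : G ∈ idealOfVars σ R ^ b) :
    F * G ∈ idealOfVars σ R ^ (a + b) :=
  pow_add (idealOfVars σ R) a b ▸ Ideal.mul_mem_mul hF hG

theorem add_le_of_homogeneousComponent_mul_ne_zero (hF : F ∈ idealOfVars σ R ^ a)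
    (hG : G ∈ idealOfVars σ R ^ b) (h : homogeneousComponent n (F * G) ≠ 0) : a + b ≤ n :=
  not_lt.1 fun hn =>
    h (mem_pow_idealOfVars_iff_homogeneousComponent.1 (mul_mem_pow_idealOfVars hF hG) n hn)

theorem le_add_of_mul_mem_pow_idealOfVars [IsDomain R] (hF : F ∈ idealOfVars σ R ^ a)
    (hG : G ∈ idealOfVars σ R ^ b) (hF0 : homogeneousComponent a F ≠ 0)
    (hG0 : homogeneousComponent b G ≠ 0) (h : F * G ∈ idealOfVars σ R ^ n) : n ≤ a + b :=
  not_lt.1 fun hn => mul_ne_zero hF0 hG0 <| by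
    rw [← homogeneousComponent_add_mul_of_mem_pow hF hG]
    exact mem_pow_idealOfVars_iff_homogeneousComponent.1 h _ hn

theorem totalDegree_eq_of_homogeneousComponent_ne_zero (hF : F.totalDegree ≤ n)
    (h : homogeneousComponent n F ≠ 0) : F.totalDegree = n :=
  hF.antisymm (not_lt.1 fun hlt => h (homogeneousComponent_eq_zero _ _ hlt))

theorem homogeneousComponent_totalDegree_ne_zero (hF : F ≠ 0) :
    homogeneousComponent F.totalDegree F ≠ 0 := by
  intro h
  have hlt : ∀ n, F.totalDegree ≤ n → homogeneousComponent n F = 0 := fun n hn =>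
    hn.eq_or_lt.elim (fun e => e ▸ h) (homogeneousComponent_eq_zero n F)
  have h0 : F.totalDegree = 0 := by
    have : F.totalDegree ≤ F.totalDegree - 1 :=
      totalDegree_le_iff_homogeneousComponent.2 fun n hn => hlt n (by omega)
    omega
  exact hF (eq_zero_of_homogeneousComponent fun n => hlt n (by omega))

theorem exists_mem_pow_idealOfVars_homogeneousComponent_ne_zero (hF : F ≠ 0) :
    ∃ a, F ∈ idealOfVars σ R ^ a ∧ homogeneousComponent a F ≠ 0 := by
  classical
  have hex : ∃ n, homogeneousComponent n F ≠ 0 := by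
    by_contra! h
    exact hF (eq_zero_of_homogeneousComponent h)
  exact ⟨Nat.find hex, mem_pow_idealOfVars_iff_homogeneousComponent.2 fun n hn =>
    not_not.1 (Nat.find_min hex hn), Nat.find_spec hex⟩

variable (σ R) in
/-- The module of polynomials of total degree less than `N`; unlike
`MvPolynomial.restrictTotalDegree` it includes the zero module, for `N = 0`. -/
noncomputable def degreeLT (N : ℕ) : Submodule R (MvPolynomial σ R) :=
  restrictSupport R {m : σ →₀ ℕ | m.degree < N}

theorem mem_degreeLT {N : ℕ} :
    F ∈ degreeLT σ R N ↔ ∀ n, N ≤ n → homogeneousComponent n F = 0 := by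
  rw [degreeLT, mem_restrictSupport_iff]
  refine ⟨fun h n hn => ?_, fun h m hm => ?_⟩
  · refine MvPolynomial.ext _ _ fun m => ?_
    rw [coeff_homogeneousComponent, MvPolynomial.coeff_zero, ite_eq_right_iff]
    rintro rfl
    by_contra hm
    exact (h (MvPolynomial.mem_support_iff.2 hm)).not_ge hn
  · by_contra hlt
    have := congrArg (MvPolynomial.coeff m) (h m.degree (not_lt.1 hlt))
    rw [coeff_homogeneousComponent, if_pos rfl] at this
    exact MvPolynomial.mem_support_iff.1 hm this

theorem mem_degreeLT_succ {N : ℕ} : F ∈ degreeLT σ R (N + 1) ↔ F.totalDegree ≤ N := by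
  rw [mem_degreeLT, totalDegree_le_iff_homogeneousComponent]
  exact Iff.rfl

theorem mem_degreeLT_of_totalDegree_le {N : ℕ} (hF : F.totalDegree ≤ N)
    (h : homogeneousComponent N F = 0) : F ∈ degreeLT σ R N :=
  mem_degreeLT.2 fun n hn => hn.eq_or_lt.elim (fun e => e ▸ h) fun hlt =>
    homogeneousComponent_eq_zero n F (hF.trans_lt hlt)

theorem eq_zero_of_mem_degreeLT_of_mem_pow {N : ℕ} (h : F ∈ degreeLT σ R N)
    (h' : F ∈ idealOfVars σ R ^ N) : F = 0 :=
  eq_zero_of_homogeneousComponent fun n => (lt_or_ge n N).elim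
    (mem_pow_idealOfVars_iff_homogeneousComponent.1 h' n) (mem_degreeLT.1 h n)

theorem exists_mem_degreeLT_sub_mem_pow (N : ℕ) (F : MvPolynomial σ R) :
    ∃ T ∈ degreeLT σ R N, F - T ∈ idealOfVars σ R ^ N := by
  have hcomp (n : ℕ) : homogeneousComponent n (∑ i ∈ Finset.range N, homogeneousComponent i F) =
      if n < N then homogeneousComponent n F else 0 := by
    simp only [map_sum, homogeneousComponent_of_mem (homogeneousComponent_mem _ F)]
    rw [Finset.sum_ite_eq]
    simp only [Finset.mem_range]
  refine ⟨_, mem_degreeLT.2 fun n hn => (hcomp n).trans (if_neg hn.not_gt),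
    mem_pow_idealOfVars_iff_homogeneousComponent.2 fun n hn => ?_⟩
  rw [map_sub, hcomp, if_pos hn, sub_self]

end HomogeneousComponent

section Syzygy
open MvPolynomial
variable {σ k : Type*} [Field k]

theorem exists_isHomogeneous_of_mul {f g : MvPolynomial σ k} {m n : ℕ} (hf : f.IsHomogeneous m)
    (hf0 : f ≠ 0) (hg0 : g ≠ 0) (hfg : (f * g).IsHomogeneous n) :
    ∃ l, n = m + l ∧ g.IsHomogeneous l := by
  have hn : m + g.totalDegree = n := by
    rw [← hfg.totalDegree (mul_ne_zero hf0 hg0), totalDegree_mul_of_isDomain hf0 hg0,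
      hf.totalDegree hf0]
  refine ⟨g.totalDegree, hn.symm, ?_⟩
  have hcomp := homogeneousComponent_add_mul_of_totalDegree_le (hf.totalDegree hf0).le
    (le_refl g.totalDegree)
  rw [hn, homogeneousComponent_eq_self hfg, homogeneousComponent_eq_self hf] at hcomp
  have hg := homogeneousComponent_isHomogeneous g.totalDegree g
  rwa [← mul_left_cancel₀ hf0 hcomp] at hg

variable {a b f g : MvPolynomial σ k} {α β i j : ℕ}

theorem exists_isHomogeneous_of_syzygy (hb : b.IsHomogeneous β) (hb0 : b ≠ 0)
    (hab : IsRelPrime a b) (hf : f.IsHomogeneous i) (hij : α + i = β + j)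
    (h : a * f + b * g = 0) :
    ∃ H, f = b * H ∧ g = -(a * H) ∧ (H = 0 ∨ ∃ l, i = β + l ∧ j = α + l ∧ H.IsHomogeneous l) := by
  obtain ⟨H, rfl⟩ := hab.symm.dvd_of_dvd_mul_left (⟨-g, by linear_combination h⟩ : b ∣ a * f)
  refine ⟨H, rfl, mul_left_cancel₀ hb0 (by linear_combination h), or_iff_not_imp_left.2 ?_⟩
  intro hH
  obtain ⟨l, hl, hlH⟩ := exists_isHomogeneous_of_mul hb hb0 hH hf
  exact ⟨l, hl, by omega, hlH⟩

theorem eq_zero_of_syzygy_of_lt (hb : b.IsHomogeneous β) (hb0 : b ≠ 0)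
    (hab : IsRelPrime a b) (hf : f.IsHomogeneous i) (hij : α + i = β + j) (hi : i < β)
    (h : a * f + b * g = 0) : f = 0 ∧ g = 0 := by
  obtain ⟨H, rfl, rfl, rfl | ⟨l, hl, -⟩⟩ :=
    exists_isHomogeneous_of_syzygy hb hb0 hab hf hij h
  · simp
  · omega

end Syzygy

section Dimension
open MvPolynomial Module

theorem finrank_restrictSupport {σ R : Type*} [CommRing R] [StrongRankCondition R]
    (s : Set (σ →₀ ℕ)) : finrank R (restrictSupport R s) = s.ncard :=
  finrank_eq_nat_card_basis (basisRestrictSupport R s)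

theorem ncard_degree_eq (n : ℕ) : {m : Fin 2 →₀ ℕ | m.degree = n}.ncard = n + 1 := by
  have hset : {m : Fin 2 →₀ ℕ | m.degree = n} =
      (Finset.univ.finsuppAntidiag n : Finset (Fin 2 →₀ ℕ)) := by
    ext m
    simp [Finsupp.degree_eq_sum]
  rw [hset, Set.ncard_coe_finset, Finset.card_finsuppAntidiag_nat_eq_multichoose]
  simp

theorem two_mul_ncard_degree_lt (n : ℕ) :
    2 * {m : Fin 2 →₀ ℕ | m.degree < n}.ncard = n * (n + 1) := by
  induction n with
  | zero => simp
  | succ n ih =>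
    have hunion : {m : Fin 2 →₀ ℕ | m.degree < n + 1} = {m | m.degree < n} ∪ {m | m.degree = n} :=
      Set.ext fun m => Nat.lt_succ_iff_lt_or_eq
    rw [hunion, Set.ncard_union_eq (Set.disjoint_left.2 fun m hm hm' => hm.ne hm')
      (Finsupp.finite_of_degree_lt n) (Finsupp.finite_of_degree_eq n), mul_add, ih, ncard_degree_eq]
    ring

section
variable (k : Type*) [Field k]

theorem finrank_homogeneousSubmodule_fin_two (n : ℕ) :
    finrank k (homogeneousSubmodule (Fin 2) k n) = n + 1 := by
  rw [homogeneousSubmodule_eq_finsupp_supported]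
  exact (finrank_restrictSupport _).trans (ncard_degree_eq n)

theorem two_mul_finrank_degreeLT_fin_two (n : ℕ) :
    2 * finrank k (degreeLT (Fin 2) k n) = n * (n + 1) := by
  rw [degreeLT, finrank_restrictSupport, two_mul_ncard_degree_lt]

theorem finrank_degreeLT_add_sub_one {α β : ℕ} (hα : 1 ≤ α) (hβ : 1 ≤ β) :
    finrank k (degreeLT (Fin 2) k (α + β - 1)) = α * β +
      (finrank k (degreeLT (Fin 2) k (β - 1)) + finrank k (degreeLT (Fin 2) k (α - 1))) := by
  obtain ⟨a, rfl⟩ := Nat.exists_eq_add_of_le' hα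
  obtain ⟨b, rfl⟩ := Nat.exists_eq_add_of_le' hβ
  have hab := two_mul_finrank_degreeLT_fin_two k (a + b + 1)
  have ha := two_mul_finrank_degreeLT_fin_two k a
  have hb := two_mul_finrank_degreeLT_fin_two k b
  rw [show a + 1 + (b + 1) - 1 = a + b + 1 by omega, Nat.add_sub_cancel, Nat.add_sub_cancel]
  nlinarith

end

instance {σ k : Type*} [Finite σ] [CommRing k] (n : ℕ) : Module.Finite k (degreeLT σ k n) :=
  have : Finite {m : σ →₀ ℕ | m.degree < n} :=
    Finsupp.finite_of_degree_lt n
  .of_basis (basisRestrictSupport k {m : σ →₀ ℕ | m.degree < n})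

end Dimension

section LinearAlgebra
open Module
variable {k V W : Type*} [DivisionRing k] [AddCommGroup V] [Module k V] [AddCommGroup W]
  [Module k W]

theorem finrank_le_finrank_quotient_add [FiniteDimensional k W] {U I : Submodule k V}
    [FiniteDimensional k U]
    [FiniteDimensional k (V ⧸ I)] {ψ : W →ₗ[k] V} (h : U ⊓ I ≤ LinearMap.range ψ) :
    finrank k U ≤ finrank k (V ⧸ I) + finrank k W := by
  let φ : U →ₗ[k] V ⧸ I := I.mkQ.domRestrict U
  have hker : (LinearMap.ker φ).map U.subtype ≤ LinearMap.range ψ := by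
    rintro _ ⟨⟨y, hyU⟩, hy, rfl⟩
    exact h ⟨hyU, (Submodule.Quotient.mk_eq_zero I).1 hy⟩
  calc finrank k U = finrank k (LinearMap.range φ) + finrank k (LinearMap.ker φ) :=
        (LinearMap.finrank_range_add_finrank_ker φ).symm
    _ ≤ finrank k (V ⧸ I) + finrank k W := by
        refine add_le_add (Submodule.finrank_le _) ?_
        rw [← Submodule.finrank_map_subtype_eq]
        exact (Submodule.finrank_mono hker).trans (LinearMap.finrank_range_le ψ)

theorem finrank_quotient_add_le_finrank {U M J : Submodule k V} [FiniteDimensional k U]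
    (hMJ : M ≤ J) (hU : ∀ v : V, ∃ u ∈ U, v - u ∈ M) {ψ : W →ₗ[k] V} (hψJ : ∀ w, ψ w ∈ J)
    (hψM : ∀ w, ψ w ∈ M → w = 0) :
    FiniteDimensional k (V ⧸ J) ∧ finrank k (V ⧸ J) + finrank k W ≤ finrank k U := by
  have hsurj : Function.Surjective (M.mkQ.domRestrict U) := fun x => by
    obtain ⟨v, rfl⟩ := M.mkQ_surjective x
    obtain ⟨u, hu, huv⟩ := hU v
    exact ⟨⟨u, hu⟩, ((Submodule.Quotient.eq M).2 huv).symm⟩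
  have hfin : FiniteDimensional k (V ⧸ M) := .of_surjective _ hsurj
  let e := Submodule.quotientQuotientEquivQuotient M J hMJ
  refine ⟨.of_surjective e.toLinearMap e.surjective, ?_⟩
  let ψM : W →ₗ[k] J.map M.mkQ :=
    (M.mkQ ∘ₗ ψ).codRestrict _ fun w => Submodule.mem_map_of_mem (hψJ w)
  have hinj : Function.Injective ψM := (injective_iff_map_eq_zero ψM).2 fun w hw =>
    hψM w ((Submodule.Quotient.mk_eq_zero M).1 (congrArg Subtype.val hw))
  calc finrank k (V ⧸ J) + finrank k W
      ≤ finrank k ((V ⧸ M) ⧸ J.map M.mkQ) + finrank k (J.map M.mkQ) :=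
        add_le_add e.finrank_eq.ge (LinearMap.finrank_le_finrank_of_injective hinj)
    _ = finrank k (V ⧸ M) := Submodule.finrank_quotient_add_finrank _
    _ ≤ finrank k U := LinearMap.finrank_le_finrank_of_surjective hsurj

end LinearAlgebra

theorem pow_le_of_pow_le_sup {R : Type*} [CommSemiring R] {I J : Ideal R} {n N : ℕ}
    (h : I ^ n ≤ J ⊔ I ^ (n + 1)) (hN : I ^ N ≤ J) : I ^ n ≤ J := by
  have hstep (i : ℕ) : I ^ n ≤ J ⊔ I ^ (n + i) := by
    induction i with
    | zero => exact le_sup_right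
    | succ i ih =>
      refine ih.trans (sup_le le_sup_left ?_)
      calc I ^ (n + i) = I ^ n * I ^ i := pow_add I n i
        _ ≤ (J ⊔ I ^ (n + 1)) * I ^ i := Ideal.mul_mono_left h
        _ = J * I ^ i ⊔ I ^ (n + (i + 1)) := by
            rw [Ideal.sup_mul, ← pow_add, add_assoc, add_comm 1]
        _ ≤ J ⊔ I ^ (n + (i + 1)) := sup_le_sup_right Ideal.mul_le_left _
  exact (hstep N).trans (sup_le le_rfl ((Ideal.pow_le_pow_right (by omega)).trans hN))

section Bezout
open MvPolynomial Module
variable {σ k : Type*} [Field k]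

/-- The linear map `(f, g) ↦ A f + B g` on `V × W`. -/
noncomputable def mulAddMul (A B : MvPolynomial σ k) (V W : Submodule k (MvPolynomial σ k)) :
    V × W →ₗ[k] MvPolynomial σ k :=
  (LinearMap.mulLeft k A ∘ₗ V.subtype).coprod (LinearMap.mulLeft k B ∘ₗ W.subtype)

section TopForms
variable {α β : ℕ} {A B : MvPolynomial σ k}

theorem exists_mem_degreeLT_of_homogeneousComponent_eq_zero (hA : A.totalDegree ≤ α)
    (hB : B.totalDegree ≤ β) (hB0 : homogeneousComponent β B ≠ 0)
    (hAB : IsRelPrime (homogeneousComponent α A) (homogeneousComponent β B)) {i j : ℕ}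
    (hij : α + i = β + j) {F G : MvPolynomial σ k} (hF : F ∈ degreeLT σ k (i + 1))
    (hG : G ∈ degreeLT σ k (j + 1)) (h : homogeneousComponent (α + i) (A * F + B * G) = 0) :
    ∃ F' ∈ degreeLT σ k i, ∃ G' ∈ degreeLT σ k j, A * F' + B * G' = A * F + B * G := by
  rw [mem_degreeLT_succ] at hF hG
  rw [map_add, homogeneousComponent_add_mul_of_totalDegree_le hA hF, hij,
    homogeneousComponent_add_mul_of_totalDegree_le hB hG] at h
  obtain ⟨H, hFH, hGH, hH⟩ := exists_isHomogeneous_of_syzygy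
    (homogeneousComponent_isHomogeneous β B) hB0 hAB (homogeneousComponent_isHomogeneous i F) hij h
  have hcancel {C : MvPolynomial σ k} {γ n : ℕ} (hC : C.totalDegree ≤ γ)
      (hn : H = 0 ∨ ∃ l, n = γ + l ∧ H.IsHomogeneous l) : (C * H).totalDegree ≤ n ∧
        homogeneousComponent n (C * H) = homogeneousComponent γ C * H := by
    obtain rfl | ⟨l, rfl, hl⟩ := hn
    · simp
    · rw [homogeneousComponent_add_mul_of_totalDegree_le hC hl.totalDegree_le,
        homogeneousComponent_eq_self hl]
      exact ⟨(totalDegree_mul C H).trans (add_le_add hC hl.totalDegree_le), rfl⟩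
  obtain ⟨hBH, hBH'⟩ := hcancel hB (hH.imp_right fun ⟨l, hl, _, hlH⟩ => ⟨l, hl, hlH⟩)
  obtain ⟨hAH, hAH'⟩ := hcancel hA (hH.imp_right fun ⟨l, _, hl, hlH⟩ => ⟨l, hl, hlH⟩)
  refine ⟨F - B * H, mem_degreeLT_of_totalDegree_le ?_ ?_, G + A * H,
    mem_degreeLT_of_totalDegree_le ?_ ?_, by ring⟩
  · exact (totalDegree_sub _ _).trans (max_le hF hBH)
  · rw [map_sub, hBH', hFH, sub_self]
  · exact (totalDegree_add _ _).trans (max_le hG hAH)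
  · rw [map_add, hAH', hGH, neg_add_cancel]

theorem exists_mem_degreeLT_mul_add_mul_eq (hα : 1 ≤ α) (hβ : 1 ≤ β) (hA : A.totalDegree ≤ α)
    (hB : B.totalDegree ≤ β) (hB0 : homogeneousComponent β B ≠ 0)
    (hAB : IsRelPrime (homogeneousComponent α A) (homogeneousComponent β B))
    {F G : MvPolynomial σ k} (h : A * F + B * G ∈ degreeLT σ k (α + β - 1)) :
    ∃ F' ∈ degreeLT σ k (β - 1), ∃ G' ∈ degreeLT σ k (α - 1), A * F' + B * G' = A * F + B * G := by
  have hdescend (j : ℕ) : ∀ F G : MvPolynomial σ k, F ∈ degreeLT σ k (β - 1 + j) →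
      G ∈ degreeLT σ k (α - 1 + j) → A * F + B * G ∈ degreeLT σ k (α + β - 1) →
      ∃ F' ∈ degreeLT σ k (β - 1), ∃ G' ∈ degreeLT σ k (α - 1),
        A * F' + B * G' = A * F + B * G := by
    induction j with
    | zero => exact fun F G hF hG _ => ⟨F, hF, G, hG, rfl⟩
    | succ j ih =>
      intro F G hF hG hFG
      obtain ⟨F₁, hF₁, G₁, hG₁, h₁⟩ := exists_mem_degreeLT_of_homogeneousComponent_eq_zero
        (i := β - 1 + j) (j := α - 1 + j) hA hB hB0 hAB (by omega) hF hG
        (mem_degreeLT.1 hFG _ (by omega))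
      rw [← h₁] at hFG ⊢
      exact ih F₁ G₁ hF₁ hG₁ hFG
  have hmem (N : ℕ) (C : MvPolynomial σ k) (hC : C.totalDegree < N) : C ∈ degreeLT σ k N :=
    mem_degreeLT.2 fun n hn => homogeneousComponent_eq_zero n C (hC.trans_le hn)
  exact hdescend (F.totalDegree + G.totalDegree + 1) F G (hmem _ _ (by omega))
    (hmem _ _ (by omega)) h

theorem mul_le_finrank_quotient_span_pair {A B : MvPolynomial (Fin 2) k} (hα : 1 ≤ α) (hβ : 1 ≤ β)
    (hA : A.totalDegree ≤ α) (hB : B.totalDegree ≤ β) (hB0 : homogeneousComponent β B ≠ 0)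
    (hAB : IsRelPrime (homogeneousComponent α A) (homogeneousComponent β B))
    [FiniteDimensional k (MvPolynomial (Fin 2) k ⧸ Ideal.span {A, B})] :
    α * β ≤ finrank k (MvPolynomial (Fin 2) k ⧸ Ideal.span {A, B}) := by
  have hrange : degreeLT (Fin 2) k (α + β - 1) ⊓ (Ideal.span {A, B}).restrictScalars k ≤
      LinearMap.range
        (mulAddMul A B (degreeLT (Fin 2) k (β - 1)) (degreeLT (Fin 2) k (α - 1))) := by
    rintro y ⟨hy, hyI⟩
    obtain ⟨F, G, hFG⟩ := Ideal.mem_span_pair.1 hyI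
    rw [mul_comm F, mul_comm G] at hFG
    obtain ⟨F', hF', G', hG', h⟩ :=
      exists_mem_degreeLT_mul_add_mul_eq hα hβ hA hB hB0 hAB (hFG ▸ hy)
    exact ⟨(⟨F', hF'⟩, ⟨G', hG'⟩), h.trans hFG⟩
  have : FiniteDimensional k
      (MvPolynomial (Fin 2) k ⧸ (Ideal.span {A, B}).restrictScalars k) := ‹_›
  have hdim := finrank_le_finrank_quotient_add hrange
  rw [finrank_prod, finrank_degreeLT_add_sub_one k hα hβ] at hdim
  exact Nat.le_of_add_le_add_right hdim

end TopForms

end Bezout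

section LowestForms
open MvPolynomial Module
variable {σ k : Type*} [Field k] {μ ν : ℕ} {A B : MvPolynomial σ k}

theorem mem_pow_idealOfVars_succ {F : MvPolynomial σ k} {n : ℕ} (hF : F ∈ idealOfVars σ k ^ n)
    (h : homogeneousComponent n F = 0) : F ∈ idealOfVars σ k ^ (n + 1) := by
  rw [mem_pow_idealOfVars_iff_homogeneousComponent] at hF ⊢
  exact fun i hi => (Nat.lt_succ_iff_lt_or_eq.1 hi).elim (hF i) fun e => e ▸ h

theorem homogeneousComponent_mul_of_mem_pow_sub {g : MvPolynomial σ k} {j : ℕ}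
    (hA : A ∈ idealOfVars σ k ^ μ) (hg : g ∈ idealOfVars σ k ^ (j - μ)) :
    homogeneousComponent j (A * g) =
      if μ ≤ j then homogeneousComponent μ A * homogeneousComponent (j - μ) g else 0 := by
  split_ifs with h
  · rw [← homogeneousComponent_add_mul_of_mem_pow hA hg, Nat.add_sub_cancel' h]
  · exact mem_pow_idealOfVars_iff_homogeneousComponent.1 (Ideal.mul_mem_right g _ hA) j (by omega)

theorem mem_pow_succ_sub_of_mul_add_mul {g h : MvPolynomial σ k} {j : ℕ}
    (hA : A ∈ idealOfVars σ k ^ μ) (hB : B ∈ idealOfVars σ k ^ ν)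
    (hA0 : homogeneousComponent μ A ≠ 0) (hB0 : homogeneousComponent ν B ≠ 0)
    (hAB : IsRelPrime (homogeneousComponent μ A) (homogeneousComponent ν B))
    (hj : j < μ + ν) (hg : g ∈ idealOfVars σ k ^ (j - μ)) (hh : h ∈ idealOfVars σ k ^ (j - ν))
    (hz : homogeneousComponent j (A * g + B * h) = 0) :
    g ∈ idealOfVars σ k ^ (j + 1 - μ) ∧ h ∈ idealOfVars σ k ^ (j + 1 - ν) := by
  have hsucc {f : MvPolynomial σ k} {γ : ℕ} (hf : f ∈ idealOfVars σ k ^ (j - γ))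
      (h0 : γ ≤ j → homogeneousComponent (j - γ) f = 0) : f ∈ idealOfVars σ k ^ (j + 1 - γ) := by
    rcases le_or_gt γ j with hγ | hγ
    · exact Nat.sub_add_comm hγ ▸ mem_pow_idealOfVars_succ hf (h0 hγ)
    · simp [Nat.sub_eq_zero_of_le hγ]
  rw [map_add, homogeneousComponent_mul_of_mem_pow_sub hA hg,
    homogeneousComponent_mul_of_mem_pow_sub hB hh] at hz
  suffices hcomp : (μ ≤ j → homogeneousComponent (j - μ) g = 0) ∧
      (ν ≤ j → homogeneousComponent (j - ν) h = 0) from ⟨hsucc hg hcomp.1, hsucc hh hcomp.2⟩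
  split_ifs at hz with hμ hν hν
  · have := eq_zero_of_syzygy_of_lt (homogeneousComponent_isHomogeneous ν B) hB0 hAB
      (homogeneousComponent_isHomogeneous _ g) (by omega : μ + (j - μ) = ν + (j - ν)) (by omega) hz
    exact ⟨fun _ => this.1, fun _ => this.2⟩
  · rw [add_zero] at hz
    exact ⟨fun _ => (mul_eq_zero.1 hz).resolve_left hA0, fun h => absurd h hν⟩
  · rw [zero_add] at hz
    exact ⟨fun h => absurd h hμ, fun _ => (mul_eq_zero.1 hz).resolve_left hB0⟩
  · exact ⟨fun h => absurd h hμ, fun h => absurd h hν⟩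

theorem eq_zero_of_mul_add_mul_mem_pow {g h : MvPolynomial σ k}
    (hA : A ∈ idealOfVars σ k ^ μ) (hB : B ∈ idealOfVars σ k ^ ν)
    (hA0 : homogeneousComponent μ A ≠ 0) (hB0 : homogeneousComponent ν B ≠ 0)
    (hAB : IsRelPrime (homogeneousComponent μ A) (homogeneousComponent ν B))
    (hg : g ∈ degreeLT σ k (ν - 1)) (hh : h ∈ degreeLT σ k (μ - 1))
    (hgh : A * g + B * h ∈ idealOfVars σ k ^ (μ + ν - 1)) : g = 0 ∧ h = 0 := by
  have hpow (j : ℕ) (hj : j ≤ μ + ν - 1) :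
      g ∈ idealOfVars σ k ^ (j - μ) ∧ h ∈ idealOfVars σ k ^ (j - ν) := by
    induction j with
    | zero => simp
    | succ j ih =>
      obtain ⟨ihg, ihh⟩ := ih (by omega)
      exact mem_pow_succ_sub_of_mul_add_mul hA hB hA0 hB0 hAB (by omega) ihg ihh
        (mem_pow_idealOfVars_iff_homogeneousComponent.1 hgh j hj)
  obtain ⟨hg', hh'⟩ := hpow _ le_rfl
  exact ⟨eq_zero_of_mem_degreeLT_of_mem_pow hg (by convert hg' using 2; omega),
    eq_zero_of_mem_degreeLT_of_mem_pow hh (by convert hh' using 2; omega)⟩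

end LowestForms

section Plane
open MvPolynomial Module
variable {k : Type*} [Field k] {μ ν : ℕ}

theorem exists_eq_mul_add_mul_of_isHomogeneous {a b F : MvPolynomial (Fin 2) k} (hμ : 1 ≤ μ)
    (hν : 1 ≤ ν) (ha : a.IsHomogeneous μ) (hb : b.IsHomogeneous ν) (hb0 : b ≠ 0)
    (hab : IsRelPrime a b) (hF : F.IsHomogeneous (μ + ν - 1)) :
    ∃ g h : MvPolynomial (Fin 2) k, g.IsHomogeneous (ν - 1) ∧ h.IsHomogeneous (μ - 1) ∧
      a * g + b * h = F := by
  have hfin (n : ℕ) : FiniteDimensional k (homogeneousSubmodule (Fin 2) k n) :=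
    .of_finrank_pos (by rw [finrank_homogeneousSubmodule_fin_two]; exact n.succ_pos)
  let ψ := mulAddMul a b (homogeneousSubmodule (Fin 2) k (ν - 1))
    (homogeneousSubmodule (Fin 2) k (μ - 1))
  have hinj : Function.Injective ψ := by
    refine (injective_iff_map_eq_zero ψ).2 fun ⟨⟨g, hg⟩, ⟨h, hh⟩⟩ h0 => ?_
    obtain ⟨rfl, rfl⟩ := eq_zero_of_syzygy_of_lt (α := μ) (j := μ - 1) hb hb0 hab hg (by omega)
      (by omega) h0
    rfl
  have hle : LinearMap.range ψ ≤ homogeneousSubmodule (Fin 2) k (μ + ν - 1) := by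
    rintro _ ⟨⟨⟨g, hg⟩, ⟨h, hh⟩⟩, rfl⟩
    have hag := ha.mul hg
    have hbh := hb.mul hh
    rw [show μ + (ν - 1) = μ + ν - 1 by omega] at hag
    rw [show ν + (μ - 1) = μ + ν - 1 by omega] at hbh
    exact hag.add hbh
  have heq : LinearMap.range ψ = homogeneousSubmodule (Fin 2) k (μ + ν - 1) := by
    refine Submodule.eq_of_le_of_finrank_eq hle ?_
    simp only [LinearMap.finrank_range_of_inj hinj, finrank_prod,
      finrank_homogeneousSubmodule_fin_two]
    omega
  obtain ⟨⟨⟨g, hg⟩, ⟨h, hh⟩⟩, hgh⟩ := heq ▸ (show F ∈ homogeneousSubmodule _ k _ from hF)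
  exact ⟨g, h, hg, hh, hgh⟩

variable {A B : MvPolynomial (Fin 2) k} {J : Ideal (MvPolynomial (Fin 2) k)} {N : ℕ}

theorem pow_idealOfVars_le_of_lowest_forms (hμ : 1 ≤ μ) (hν : 1 ≤ ν) (hAJ : A ∈ J) (hBJ : B ∈ J)
    (hA : A ∈ idealOfVars (Fin 2) k ^ μ) (hB : B ∈ idealOfVars (Fin 2) k ^ ν)
    (hB0 : homogeneousComponent ν B ≠ 0)
    (hAB : IsRelPrime (homogeneousComponent μ A) (homogeneousComponent ν B))
    (hN : idealOfVars (Fin 2) k ^ N ≤ J) : idealOfVars (Fin 2) k ^ (μ + ν - 1) ≤ J := by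
  refine pow_le_of_pow_le_sup (fun F hF => ?_) hN
  obtain ⟨g, h, hg, hh, hgh⟩ := exists_eq_mul_add_mul_of_isHomogeneous hμ hν
    (homogeneousComponent_isHomogeneous μ A) (homogeneousComponent_isHomogeneous ν B) hB0 hAB
    (homogeneousComponent_isHomogeneous _ F)
  have hg' := mem_pow_idealOfVars_of_isHomogeneous hg
  have hh' := mem_pow_idealOfVars_of_isHomogeneous hh
  have hAg := homogeneousComponent_add_mul_of_mem_pow hA hg'
  have hBh := homogeneousComponent_add_mul_of_mem_pow hB hh'
  have hAg' := mul_mem_pow_idealOfVars hA hg'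
  have hBh' := mul_mem_pow_idealOfVars hB hh'
  rw [show μ + (ν - 1) = μ + ν - 1 by omega] at hAg hAg'
  rw [show ν + (μ - 1) = μ + ν - 1 by omega] at hBh hBh'
  refine Submodule.mem_sup.2 ⟨A * g + B * h,
    J.add_mem (J.mul_mem_right g hAJ) (J.mul_mem_right h hBJ), F - (A * g + B * h),
    mem_pow_idealOfVars_succ (Ideal.sub_mem _ hF (Ideal.add_mem _ hAg' hBh')) ?_,
    add_sub_cancel _ _⟩
  rw [map_sub, map_add, hAg, hBh, homogeneousComponent_eq_self hg, homogeneousComponent_eq_self hh,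
    hgh, sub_self]

theorem finrank_quotient_le_mul_of_lowest_forms (hμ : 1 ≤ μ) (hν : 1 ≤ ν) (hAJ : A ∈ J)
    (hBJ : B ∈ J) (hA : A ∈ idealOfVars (Fin 2) k ^ μ) (hB : B ∈ idealOfVars (Fin 2) k ^ ν)
    (hA0 : homogeneousComponent μ A ≠ 0) (hB0 : homogeneousComponent ν B ≠ 0)
    (hAB : IsRelPrime (homogeneousComponent μ A) (homogeneousComponent ν B))
    (hN : idealOfVars (Fin 2) k ^ N ≤ J) :
    FiniteDimensional k (MvPolynomial (Fin 2) k ⧸ J) ∧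
      finrank k (MvPolynomial (Fin 2) k ⧸ J) ≤ μ * ν := by
  obtain ⟨hfin, hdim⟩ := finrank_quotient_add_le_finrank
    (J := J.restrictScalars k) (M := (idealOfVars (Fin 2) k ^ (μ + ν - 1)).restrictScalars k)
    (pow_idealOfVars_le_of_lowest_forms hμ hν hAJ hBJ hA hB hB0 hAB hN)
    (exists_mem_degreeLT_sub_mem_pow (μ + ν - 1))
    (ψ := mulAddMul A B (degreeLT (Fin 2) k (ν - 1)) (degreeLT (Fin 2) k (μ - 1)))
    (fun x => J.add_mem (J.mul_mem_right _ hAJ) (J.mul_mem_right _ hBJ)) fun x hx => by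
      obtain ⟨hg, hh⟩ := eq_zero_of_mul_add_mul_mem_pow hA hB hA0 hB0 hAB x.1.2 x.2.2 hx
      exact Prod.ext (Subtype.ext hg) (Subtype.ext hh)
  rw [finrank_prod, finrank_degreeLT_add_sub_one k hμ hν] at hdim
  exact ⟨hfin, Nat.le_of_add_le_add_right hdim⟩

end Plane

section LinearForms
open MvPolynomial

theorem irreducible_of_isHomogeneous_one {σ k : Type*} [Field k] {F : MvPolynomial σ k}
    (hF : F.IsHomogeneous 1) (h0 : F ≠ 0) : Irreducible F := by
  refine irreducible_of_totalDegree_eq_one (hF.totalDegree h0) fun x hx => ?_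
  obtain ⟨m, hm⟩ := MvPolynomial.ne_zero_iff.1 h0
  exact isUnit_iff_ne_zero.2 fun hx0 => hm (zero_dvd_iff.1 (hx0 ▸ hx m))

theorem sq_dvd_of_dvd_pow_of_isHomogeneous {σ k : Type*} [Field k] {ℓ F : MvPolynomial σ k}
    {n N : ℕ} (hℓ : ℓ.IsHomogeneous 1) (hℓ0 : ℓ ≠ 0) (hF : F.IsHomogeneous n) (hF0 : F ≠ 0)
    (hn : 2 ≤ n) (h : F ∣ ℓ ^ N) : ℓ ^ 2 ∣ F := by
  obtain ⟨i, -, hi⟩ :=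
    (dvd_prime_pow (irreducible_of_isHomogeneous_one hℓ hℓ0).prime N).1 h
  have hni : n ≤ i := by
    have := totalDegree_le_of_dvd_of_isDomain hi.dvd (pow_ne_zero i hℓ0)
    rwa [hF.totalDegree hF0, (hℓ.pow i).totalDegree (pow_ne_zero i hℓ0), one_mul] at this
  exact (pow_dvd_pow ℓ (hn.trans hni)).trans hi.symm.dvd

end LinearForms

section LocalBound
open MvPolynomial Module
variable {k : Type*} [Field k]

theorem isRelPrime_X_pow {σ : Type*} {i j : σ} (hij : i ≠ j) (m n : ℕ) :
    IsRelPrime ((MvPolynomial.X i : MvPolynomial σ k) ^ m) (MvPolynomial.X j ^ n) := by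
  refine IsRelPrime.pow ?_
  rw [(MvPolynomial.X_prime (i := i)).irreducible.isRelPrime_iff_not_dvd, MvPolynomial.X_dvd_X]
  simpa using hij

theorem isUnit_of_sq_dvd_sub {c c' : k} (hc : c ≠ 0) (hc' : c' ≠ 0) {N : ℕ} (hN : (N : k) ≠ 0)
    {δ : MvPolynomial (Fin 2) k}
    (h : δ ^ 2 ∣
      MvPolynomial.C c * MvPolynomial.X 0 ^ N - MvPolynomial.C c' * MvPolynomial.X 1 ^ N) :
    IsUnit δ := by
  have hpderiv (i : Fin 2) : δ ∣ pderiv i (MvPolynomial.C c * MvPolynomial.X 0 ^ N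
      - MvPolynomial.C c' * MvPolynomial.X 1 ^ N : MvPolynomial (Fin 2) k) := by
    obtain ⟨e, he⟩ := h
    exact ⟨δ * pderiv i e + 2 * e * pderiv i δ, by
      rw [he, Derivation.leibniz, Derivation.leibniz_pow]; simp; ring⟩
  have hunit {a : k} (ha : a ≠ 0) : IsUnit (MvPolynomial.C a : MvPolynomial (Fin 2) k) :=
    (isUnit_iff_ne_zero.2 ha).map _
  refine isRelPrime_X_pow (k := k) (i := (0 : Fin 2)) (j := 1) (by decide) (N - 1) (N - 1) ?_ ?_
  · refine (hunit (mul_ne_zero hc hN)).dvd_mul_left.1 ((hpderiv 0).trans (dvd_of_eq ?_))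
    simp [Derivation.leibniz, Derivation.leibniz_pow, mul_assoc]
  · refine (hunit (neg_ne_zero.2 (mul_ne_zero hc' hN))).dvd_mul_left.1
      ((hpderiv 1).trans (dvd_of_eq ?_))
    simp [Derivation.leibniz, Derivation.leibniz_pow, mul_assoc]

theorem eq_top_of_constantCoeff_ne_zero {σ : Type*} {J : Ideal (MvPolynomial σ k)}
    {A : MvPolynomial σ k} (hA : A ∈ J) (h0 : constantCoeff A ≠ 0)
    (hJ : idealOfVars σ k ≤ J.radical) : J = ⊤ := by
  rw [← Ideal.radical_eq_top]
  refine Ideal.eq_top_of_isUnit_mem _ ?_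
    ((isUnit_iff_ne_zero.2 h0).map (MvPolynomial.C : k →+* MvPolynomial σ k))
  rw [← sub_sub_cancel A (MvPolynomial.C (constantCoeff A))]
  refine sub_mem (Ideal.le_radical hA) (hJ ?_)
  rw [← pow_one (idealOfVars σ k), mem_pow_idealOfVars_iff_homogeneousComponent]
  intro n hn
  rw [Nat.lt_one_iff.1 hn, homogeneousComponent_zero]
  simp [constantCoeff_eq]

theorem idealOfVars_le_radical {σ : Type*} {J : Ideal (MvPolynomial σ k)} {P : ℕ}
    (hJ : ∀ i, MvPolynomial.X i ^ P ∈ J) : idealOfVars σ k ≤ J.radical :=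
  Ideal.span_le.2 (Set.range_subset_iff.2 fun i => ⟨P, hJ i⟩)

variable {J : Ideal (MvPolynomial (Fin 2) k)} {P : ℕ}

theorem finrank_quotient_le_of_order_le_one {A : MvPolynomial (Fin 2) k} {μ : ℕ} (hP : 1 ≤ P)
    (hJ : ∀ i, MvPolynomial.X i ^ P ∈ J) (hμ : μ ≤ 1) (hAJ : A ∈ J)
    (hA : A ∈ idealOfVars (Fin 2) k ^ μ) (hA0 : homogeneousComponent μ A ≠ 0) :
    FiniteDimensional k (MvPolynomial (Fin 2) k ⧸ J) ∧
      finrank k (MvPolynomial (Fin 2) k ⧸ J) ≤ P := by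
  have hrad := idealOfVars_le_radical hJ
  rcases Nat.le_one_iff_eq_zero_or_eq_one.1 hμ with rfl | rfl
  · obtain rfl := eq_top_of_constantCoeff_ne_zero hAJ (fun h => hA0 (by
      rw [homogeneousComponent_zero, ← constantCoeff_eq, h, map_zero])) hrad
    have := Ideal.Quotient.subsingleton_iff.2 (rfl : (⊤ : Ideal (MvPolynomial (Fin 2) k)) = ⊤)
    exact ⟨inferInstance, by simp [finrank_zero_of_subsingleton]⟩
  · have hirr := irreducible_of_isHomogeneous_one (homogeneousComponent_isHomogeneous 1 A) hA0
    obtain ⟨i, hi⟩ : ∃ i : Fin 2, IsRelPrime (homogeneousComponent 1 A) (MvPolynomial.X i ^ P) := by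
      by_contra! hdvd
      simp only [hirr.isRelPrime_iff_not_dvd, not_not] at hdvd
      exact hirr.not_isUnit (isRelPrime_X_pow (by decide) P P (hdvd 0) (hdvd 1))
    have hX : (MvPolynomial.X i ^ P : MvPolynomial (Fin 2) k).IsHomogeneous P :=
      isHomogeneous_X_pow i P
    have hXP : homogeneousComponent P (MvPolynomial.X i ^ P : MvPolynomial (Fin 2) k) =
      MvPolynomial.X i ^ P := by rw [homogeneousComponent_of_mem hX, if_pos rfl]
    obtain ⟨N, hN⟩ := Ideal.exists_pow_le_of_le_radical_of_fg hrad (idealOfVars_fg (Fin 2) k)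
    simpa using finrank_quotient_le_mul_of_lowest_forms le_rfl hP hAJ (hJ i) hA
      (mem_pow_idealOfVars_of_isHomogeneous hX) hA0
      (by rw [hXP]; exact pow_ne_zero _ (MvPolynomial.X_ne_zero i)) (by rwa [hXP]) hN

theorem sq_dvd_homogeneousComponent_succ_mul {σ : Type*} {A B ℓ : MvPolynomial σ k} {μ ν N : ℕ}
    (hμ : 2 ≤ μ) (hν : 2 ≤ ν) (hA : A ∈ idealOfVars σ k ^ μ) (hB : B ∈ idealOfVars σ k ^ ν)
    (hA0 : homogeneousComponent μ A ≠ 0) (hB0 : homogeneousComponent ν B ≠ 0)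
    (hℓ : ℓ.IsHomogeneous 1) (hℓ0 : ℓ ≠ 0)
    (h : homogeneousComponent (μ + ν) (A * B) = ℓ ^ N) :
    ℓ ^ 2 ∣ homogeneousComponent (μ + ν + 1) (A * B) := by
  rw [homogeneousComponent_add_mul_of_mem_pow hA hB] at h
  have dA : ℓ ^ 2 ∣ homogeneousComponent μ A :=
    sq_dvd_of_dvd_pow_of_isHomogeneous hℓ hℓ0 (homogeneousComponent_isHomogeneous μ A) hA0 hμ
      (Dvd.intro _ h)
  have dB : ℓ ^ 2 ∣ homogeneousComponent ν B :=
    sq_dvd_of_dvd_pow_of_isHomogeneous hℓ hℓ0 (homogeneousComponent_isHomogeneous ν B) hB0 hν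
      (Dvd.intro_left _ h)
  rw [mem_pow_idealOfVars_iff_homogeneousComponent] at hA hB
  rw [homogeneousComponent_mul]
  refine Finset.dvd_sum fun ⟨i, j⟩ hij => ?_
  rw [Finset.HasAntidiagonal.mem_antidiagonal] at hij
  dsimp only at hij ⊢
  rcases lt_trichotomy i μ with hi | rfl | hi
  · simp [hA i hi]
  · exact dA.mul_right _
  · obtain rfl | hj : j = ν ∨ j < ν := by omega
    · exact dB.mul_left _
    · simp [hB j hj]

/-- If the lowest form were of this shape, it would be the power of a linear form `ℓ`. Both lowest
forms would be divisible by `ℓ ^ 2`, hence so would the next form of `A * B`, but that form is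
squarefree. -/
theorem not_lowest_form_eq_sub_of_order_add_eq [IsAlgClosed k] {p : ℕ} [ExpChar k p]
    {A B : MvPolynomial (Fin 2) k} {μ ν κ : ℕ}
    (hμ : 2 ≤ μ) (hν : 2 ≤ ν) (hμν : μ + ν = p ^ κ)
    (hA : A ∈ idealOfVars _ k ^ μ) (hB : B ∈ idealOfVars _ k ^ ν)
    (hA0 : homogeneousComponent μ A ≠ 0) (hB0 : homogeneousComponent ν B ≠ 0)
    {c c' e e' : k} (he : e ≠ 0) (he' : e' ≠ 0) (hP : ((μ + ν + 1 : ℕ) : k) ≠ 0)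
    (hsucc : homogeneousComponent (μ + ν + 1) (A * B) =
      MvPolynomial.C e * MvPolynomial.X 0 ^ (μ + ν + 1) -
        MvPolynomial.C e' * MvPolynomial.X 1 ^ (μ + ν + 1)) :
    homogeneousComponent (μ + ν) (A * B) ≠
      MvPolynomial.C c * MvPolynomial.X 0 ^ (μ + ν) -
        MvPolynomial.C c' * MvPolynomial.X 1 ^ (μ + ν) := by
  intro hlow
  obtain ⟨γ, hγ⟩ := IsAlgClosed.exists_pow_nat_eq c (show 0 < μ + ν by omega)
  obtain ⟨γ', hγ'⟩ := IsAlgClosed.exists_pow_nat_eq c' (show 0 < μ + ν by omega)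
  set ℓ : MvPolynomial (Fin 2) k :=
    MvPolynomial.C γ * MvPolynomial.X 0 - MvPolynomial.C γ' * MvPolynomial.X 1 with hℓ
  have hpow : homogeneousComponent (μ + ν) (A * B) = ℓ ^ (μ + ν) := by
    rw [hlow, hℓ, hμν, sub_pow_expChar_pow, mul_pow, mul_pow, ← map_pow, ← map_pow, ← hμν, hγ, hγ']
  have hhom : ℓ.IsHomogeneous 1 :=
    (isHomogeneous_C_mul_X γ 0).sub (isHomogeneous_C_mul_X γ' 1)
  have hne : ℓ ≠ 0 := fun h => by
    rw [homogeneousComponent_add_mul_of_mem_pow hA hB, h, zero_pow (by omega)] at hpow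
    exact mul_ne_zero hA0 hB0 hpow
  refine (irreducible_of_isHomogeneous_one hhom hne).not_isUnit
    (isUnit_of_sq_dvd_sub he he' hP (hsucc ▸ ?_))
  exact sq_dvd_homogeneousComponent_succ_mul hμ hν hA hB hA0 hB0 hhom hne hpow

theorem four_mul_finrank_quotient_le [IsAlgClosed k] {p κ : ℕ} [Fact p.Prime] [CharP k p]
    (hPκ : P = p ^ κ) (hP3 : 3 ≤ P) (hJ : ∀ i, MvPolynomial.X i ^ P ∈ J)
    {A B : MvPolynomial (Fin 2) k} (hAJ : A ∈ J) (hBJ : B ∈ J) {c c' e e' : k}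
    (he : e ≠ 0) (he' : e' ≠ 0) (hAB : A * B ∈ idealOfVars _ k ^ P)
    (hlow : homogeneousComponent P (A * B) =
      MvPolynomial.C c * MvPolynomial.X 0 ^ P - MvPolynomial.C c' * MvPolynomial.X 1 ^ P)
    (hsucc : homogeneousComponent (P + 1) (A * B) =
      MvPolynomial.C e * MvPolynomial.X 0 ^ (P + 1) -
        MvPolynomial.C e' * MvPolynomial.X 1 ^ (P + 1)) :
    FiniteDimensional k (MvPolynomial (Fin 2) k ⧸ J) ∧
      4 * finrank k (MvPolynomial (Fin 2) k ⧸ J) ≤ (P + 1) ^ 2 := by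
  have hκ : κ ≠ 0 := by rintro rfl; simp at hPκ; omega
  have hP1 : ((P + 1 : ℕ) : k) ≠ 0 := by simp [hPκ, zero_pow hκ]
  have hsucc0 : homogeneousComponent (P + 1) (A * B) ≠ 0 := fun h => not_isUnit_zero
    (isUnit_of_sq_dvd_sub he he' hP1 (δ := 0) (by rw [← hsucc, h]; exact dvd_zero _))
  have hAB0 : A * B ≠ 0 := fun h => hsucc0 (by rw [h, map_zero])
  obtain ⟨μ, hA, hA0⟩ :=
    exists_mem_pow_idealOfVars_homogeneousComponent_ne_zero (left_ne_zero_of_mul hAB0)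
  obtain ⟨ν, hB, hB0⟩ :=
    exists_mem_pow_idealOfVars_homogeneousComponent_ne_zero (right_ne_zero_of_mul hAB0)
  have hle : μ + ν ≤ P + 1 := add_le_of_homogeneousComponent_mul_ne_zero hA hB hsucc0
  have hge : P ≤ μ + ν := le_add_of_mul_mem_pow_idealOfVars hA hB hA0 hB0 hAB
  have hlinear {d : ℕ} (hd : d ≤ P) : 4 * d ≤ (P + 1) ^ 2 := by nlinarith
  by_cases hμ : μ ≤ 1
  · exact (finrank_quotient_le_of_order_le_one (by omega) hJ hμ hAJ hA hA0).imp_right hlinear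
  by_cases hν : ν ≤ 1
  · exact (finrank_quotient_le_of_order_le_one (by omega) hJ hν hBJ hB hB0).imp_right hlinear
  obtain rfl | hs : μ + ν = P ∨ μ + ν = P + 1 := by omega
  · exact absurd hlow (not_lowest_form_eq_sub_of_order_add_eq (by omega) (by omega) hPκ hA hB hA0
      hB0 he he' hP1 hsucc)
  · have hprime : IsRelPrime (homogeneousComponent μ A) (homogeneousComponent ν B) := by
      intro δ hδA hδB
      refine isUnit_of_sq_dvd_sub he he' hP1 (hsucc ▸ ?_)
      rw [← hs, homogeneousComponent_add_mul_of_mem_pow hA hB, sq]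
      exact mul_dvd_mul hδA hδB
    obtain ⟨N, hN⟩ := Ideal.exists_pow_le_of_le_radical_of_fg (idealOfVars_le_radical hJ)
      (idealOfVars_fg (Fin 2) k)
    refine (finrank_quotient_le_mul_of_lowest_forms (by omega) (by omega) hAJ hBJ hA hB hA0 hB0
      hprime hN).imp_right fun h => ?_
    calc 4 * finrank k (MvPolynomial (Fin 2) k ⧸ J) ≤ 4 * (μ * ν) := by gcongr
      _ = 4 * μ * ν := by ring
      _ ≤ (P + 1) ^ 2 := hs ▸ four_mul_le_sq_add μ ν

end LocalBound

section BinomialSums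

/-- The polynomial `(1 + X) ^ d + (1 - X) ^ d`: up to the substitution `s = 1`, the part of the
second difference of `s ^ d` which depends on one of the two increments. -/
noncomputable def binomSum (R : Type*) [CommRing R] (d : ℕ) : R[X] := (1 + X) ^ d + (1 - X) ^ d

/-- The companion `(1 + X) ^ d - (1 - X) ^ d` of `binomSum`, to which it is related by
differentiation. -/
noncomputable def binomDiff (R : Type*) [CommRing R] (d : ℕ) : R[X] := (1 + X) ^ d - (1 - X) ^ d

section CommRing
variable {R : Type*} [CommRing R]

theorem derivative_binomSum_succ (d : ℕ) :
    derivative (binomSum R (d + 1)) = ((d + 1 : ℕ) : R[X]) * binomDiff R d := by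
  simp [binomSum, binomDiff, derivative_pow]
  ring

theorem derivative_binomDiff_succ (d : ℕ) :
    derivative (binomDiff R (d + 1)) = ((d + 1 : ℕ) : R[X]) * binomSum R d := by
  simp [binomSum, binomDiff, derivative_pow]
  ring

theorem natDegree_one_sub_X_pow_le (d : ℕ) : ((1 - X : R[X]) ^ d).natDegree ≤ d :=
  natDegree_pow_le_of_le d (by compute_degree) |>.trans_eq (mul_one d)

theorem natDegree_one_add_X_pow_le (d : ℕ) : ((1 + X : R[X]) ^ d).natDegree ≤ d :=
  natDegree_pow_le_of_le d (by compute_degree) |>.trans_eq (mul_one d)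

theorem natDegree_binomSum_le (d : ℕ) : (binomSum R d).natDegree ≤ d :=
  natDegree_add_le_of_degree_le (natDegree_one_add_X_pow_le d) (natDegree_one_sub_X_pow_le d)

theorem natDegree_binomDiff_le (d : ℕ) : (binomDiff R d).natDegree ≤ d :=
  (natDegree_sub_le_iff_left (natDegree_one_sub_X_pow_le d)).2 (natDegree_one_add_X_pow_le d)

theorem coeff_binomSum_self {d : ℕ} (hd : Even d) : (binomSum R d).coeff d = 2 := by
  rw [binomSum, ← hd.neg_pow (1 - X), neg_sub, coeff_add, coeff_one_add_X_pow, sub_eq_add_neg,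
    ← C_1, ← C_neg, coeff_X_add_C_pow]
  simp [one_add_one_eq_two]

theorem binomSum_mul_add_one (p κ : ℕ) [ExpChar R p] (m : ℕ) :
    binomSum R (m * p ^ κ + 1) = binomSum R m ^ p ^ κ + X * binomDiff R m ^ p ^ κ := by
  rw [binomSum, binomSum, binomDiff, add_pow_expChar_pow, sub_pow_expChar_pow, ← pow_mul, ← pow_mul]
  ring

theorem binomSum_succ (m : ℕ) : binomSum R (m + 1) = binomSum R m + X * binomDiff R m := by
  rw [binomSum, binomSum, binomDiff]
  ring

end CommRing

variable {k : Type*} [Field k] {m : ℕ}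

theorem separable_binomDiff (h2 : (2 : k) ≠ 0) (hm : (m : k) ≠ 0) : (binomDiff k m).Separable := by
  obtain _ | m := m
  · simp at hm
  have h2' : C (2 : k)⁻¹ * 2 = 1 := by rw [← map_ofNat C 2, ← C_mul, inv_mul_cancel₀ h2, C_1]
  have hcop : IsCoprime ((1 + X : k[X]) ^ m) ((1 - X) ^ m) :=
    IsCoprime.pow ⟨C 2⁻¹, C 2⁻¹, by linear_combination h2'⟩
  have hunit : IsUnit ((m + 1 : ℕ) : k[X]) := by
    rw [← map_natCast C]
    exact isUnit_C.2 hm.isUnit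
  rw [Separable, derivative_binomDiff_succ, isCoprime_mul_unit_left_right hunit]
  obtain ⟨a, b, hab⟩ := hcop
  refine ⟨C 2⁻¹ * (a - b), C 2⁻¹ * (a * (1 - X) + b * (1 + X)), ?_⟩
  rw [binomDiff, binomSum]
  linear_combination hab + (a * (1 + X) ^ m + b * (1 - X) ^ m) * h2'

theorem two_mul_card_le_of_binomDiff_eq_zero (h2 : (2 : k) ≠ 0) (hm : Odd m) {s : Finset k} {l : k}
    (hroot : ∀ t ∈ s, (binomDiff k m).eval t = 0) (hl : ∀ t ∈ s, (binomSum k m).eval t = l) :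
    2 * s.card ≤ m + 1 := by
  classical
  set F := binomSum k (m + 1) - C l with hF
  have hcoeff : F.coeff (m + 1) = 2 := by
    rw [hF, coeff_sub, coeff_binomSum_self hm.add_one, coeff_C_succ, sub_zero]
  have hF0 : F ≠ 0 := fun h => h2 (by rw [← hcoeff, h, coeff_zero])
  have hle : 2 • s.val ≤ F.roots := by
    refine Multiset.le_iff_count.2 fun t => ?_
    rw [Multiset.count_nsmul, Multiset.count_eq_of_nodup s.nodup, count_roots]
    split_ifs with ht
    · refine (one_lt_rootMultiplicity_iff_isRoot hF0).2 ⟨?_, ?_⟩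
      · simp [hF, binomSum_succ, hroot t ht, hl t ht]
      · simp [hF, derivative_binomSum_succ, hroot t ht]
    · simp
  calc 2 * s.card = (2 • s.val).card := by simp
    _ ≤ F.roots.card := Multiset.card_le_card hle
    _ ≤ F.natDegree := card_roots' F
    _ ≤ m + 1 := natDegree_sub_C.trans_le (natDegree_binomSum_le _)

end BinomialSums

section Fibers
variable {ι κ : Type*} [DecidableEq κ]

/-- At most one fibre has more than `m / 2` elements, and the complement of such a fibre is
small. -/
theorem two_mul_sum_card_fiber_le {s : Finset ι} {g : ι → κ} {m : ℕ} (hm : Odd m) (hs : s.card ≤ m)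
    (hg : ∀ t ∈ s, 2 * (s.filter fun t' => g t' = g t).card ≤ m + 1) :
    2 * ∑ t ∈ s, (s.filter fun t' => g t' = g t).card ≤ m ^ 2 + 1 := by
  obtain ⟨h, rfl⟩ := hm
  set c := fun t => (s.filter fun t' => g t' = g t).card with hc
  by_cases hsmall : ∀ t ∈ s, c t ≤ h
  · have := Finset.sum_le_card_nsmul s c h hsmall
    rw [smul_eq_mul] at this
    nlinarith
  push Not at hsmall
  obtain ⟨t₀, ht₀, hlarge⟩ := hsmall
  have hle {t} (ht : t ∈ s) : c t ≤ h + 1 := by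
    have : 2 * c t ≤ 2 * h + 1 + 1 := hg t ht
    omega
  have hct₀ : c t₀ = h + 1 := le_antisymm (hle ht₀) hlarge
  have hcompl : (s.filter fun t => g t ≠ g t₀).card ≤ h := by
    have := s.card_filter_add_card_filter_not fun t => g t = g t₀
    simp only [hc] at hct₀
    simp only [ne_eq]
    omega
  have hin : ∑ t ∈ s with g t = g t₀, c t ≤ (h + 1) * (h + 1) := by
    refine (Finset.sum_le_card_nsmul _ _ (h + 1) fun t ht => ?_).trans_eq ?_
    · exact hle (Finset.mem_filter.1 ht).1
    · rw [smul_eq_mul, ← hct₀]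
  have hout : ∑ t ∈ s with g t ≠ g t₀, c t ≤ h * h := by
    refine (Finset.sum_le_card_nsmul _ _ h fun t ht => ?_).trans (Nat.mul_le_mul_right h hcompl)
    refine (Finset.card_le_card fun t' ht' => ?_).trans hcompl
    simp only [Finset.mem_filter] at ht ht' ⊢
    exact ⟨ht'.1, ht'.2 ▸ ht.2⟩
  rw [← Finset.sum_filter_add_sum_filter_not s fun t => g t = g t₀]
  nlinarith

end Fibers

section LinearForms
open MvPolynomial
variable {σ R : Type*} [CommRing R]

theorem homogeneousComponent_aeval {x : MvPolynomial σ R} (hx : x.IsHomogeneous 1) (n : ℕ)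
    (F : R[X]) :
    homogeneousComponent n (Polynomial.aeval x F) = MvPolynomial.C (F.coeff n) * x ^ n := by
  induction F using Polynomial.induction_on' with
  | add F G hF hG =>
    rw [map_add, map_add, hF, hG, Polynomial.coeff_add, MvPolynomial.C_add, add_mul]
  | monomial j c =>
    have hj : (MvPolynomial.C c * x ^ j).IsHomogeneous j := by
      simpa using (isHomogeneous_C σ c).mul (hx.pow j)
    rw [Polynomial.aeval_monomial, algebraMap_eq, homogeneousComponent_of_mem hj,
      Polynomial.coeff_monomial]
    obtain rfl | h := eq_or_ne j n
    · rw [if_pos rfl, if_pos rfl]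
    · rw [if_neg h.symm, if_neg h, map_zero, zero_mul]

theorem totalDegree_aeval_le {x : MvPolynomial σ R} (hx : x.IsHomogeneous 1) (F : R[X]) :
    (Polynomial.aeval x F).totalDegree ≤ F.natDegree :=
  totalDegree_le_iff_homogeneousComponent.2 fun n hn => by
    rw [homogeneousComponent_aeval hx, coeff_eq_zero_of_natDegree_lt hn, map_zero, zero_mul]

end LinearForms

section Taylor

theorem coeff_pow_expChar_pow {R : Type*} [CommRing R] (p κ : ℕ) [ExpChar R p] (F : R[X]) (n : ℕ) :
    (F ^ p ^ κ).coeff n = if p ^ κ ∣ n then F.coeff (n / p ^ κ) ^ p ^ κ else 0 := by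
  rw [← map_iterateFrobenius_expand, coeff_map, coeff_expand (expChar_pow_pos R p κ)]
  split_ifs
  · rw [iterateFrobenius_def]
  · rw [map_zero]

variable {k : Type*} [Field k] {p κ m : ℕ} [ExpChar k p] {t : k}

theorem taylor_binomSum_mul_add_one :
    taylor t (binomSum k (m * p ^ κ + 1)) =
      taylor t (binomSum k m) ^ p ^ κ + (X + C t) * taylor t (binomDiff k m) ^ p ^ κ := by
  rw [binomSum_mul_add_one, map_add, taylor_mul, taylor_pow, taylor_pow, taylor_X]

theorem coeff_taylor_binomDiff_pow (ht : (binomDiff k m).eval t = 0) {n : ℕ} (hn : n < p ^ κ) :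
    (taylor t (binomDiff k m) ^ p ^ κ).coeff n = 0 := by
  rw [coeff_pow_expChar_pow]
  split_ifs with h
  · rw [Nat.div_eq_of_lt hn, taylor_coeff_zero, ht, zero_pow (expChar_pow_pos k p κ).ne']
  · rfl

theorem coeff_zero_taylor_binomSum (ht : (binomDiff k m).eval t = 0) :
    (taylor t (binomSum k (m * p ^ κ + 1))).coeff 0 = (binomSum k m).eval t ^ p ^ κ := by
  rw [taylor_binomSum_mul_add_one, add_mul, coeff_add, coeff_add, coeff_C_mul, coeff_X_mul_zero,
    coeff_taylor_binomDiff_pow ht (expChar_pow_pos k p κ), coeff_zero_eq_eval_zero, eval_pow]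
  simp [taylor_eval]

theorem coeff_taylor_binomSum_eq_zero (ht : (binomDiff k m).eval t = 0) {n : ℕ} (hn0 : n ≠ 0)
    (hn : n < p ^ κ) : (taylor t (binomSum k (m * p ^ κ + 1))).coeff n = 0 := by
  obtain ⟨n, rfl⟩ := Nat.exists_eq_succ_of_ne_zero hn0
  rw [taylor_binomSum_mul_add_one, add_mul, coeff_add, coeff_add, coeff_C_mul,
    Nat.succ_eq_add_one, coeff_X_mul, coeff_taylor_binomDiff_pow ht hn,
    coeff_taylor_binomDiff_pow ht (n.lt_succ_self.trans hn), coeff_pow_expChar_pow,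
    if_neg (Nat.not_dvd_of_pos_of_lt n.succ_pos hn)]
  simp

theorem coeff_taylor_binomSum_succ_ne_zero (h2 : (2 : k) ≠ 0) (hm : (m : k) ≠ 0)
    (ht : (binomDiff k m).eval t = 0) (hκ : 1 < p ^ κ) :
    (taylor t (binomSum k (m * p ^ κ + 1))).coeff (p ^ κ + 1) ≠ 0 := by
  have hdvd : ¬ p ^ κ ∣ p ^ κ + 1 := by
    rw [← Nat.dvd_add_iff_right dvd_rfl]
    exact Nat.not_dvd_of_pos_of_lt one_pos hκ
  rw [taylor_binomSum_mul_add_one, add_mul, coeff_add, coeff_add, coeff_C_mul, coeff_X_mul,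
    coeff_pow_expChar_pow, coeff_pow_expChar_pow, coeff_pow_expChar_pow, if_neg hdvd, if_neg hdvd,
    if_pos dvd_rfl, Nat.div_self (expChar_pow_pos k p κ), taylor_coeff_one]
  rw [zero_add, mul_zero, add_zero]
  exact pow_ne_zero _ ((separable_binomDiff h2 hm).eval₂_derivative_ne_zero (RingHom.id k) ht)

end Taylor

section Translation
open MvPolynomial Module
variable {σ R : Type*} [CommRing R]

/-- The automorphism `F ↦ F (x + a)` of a polynomial ring; it moves the point `a` to the
origin. -/
noncomputable def translate (a : σ → R) : MvPolynomial σ R ≃ₐ[R] MvPolynomial σ R :=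
  .ofAlgHom (MvPolynomial.aeval fun i => MvPolynomial.X i + MvPolynomial.C (a i))
    (MvPolynomial.aeval fun i => MvPolynomial.X i - MvPolynomial.C (a i))
    (by ext i; simp [algebraMap_eq]) (by ext i; simp [algebraMap_eq])

@[simp]
theorem translate_X (a : σ → R) (i : σ) :
    translate a (MvPolynomial.X i) = MvPolynomial.X i + MvPolynomial.C (a i) := by
  simp [translate]

@[simp]
theorem translate_C (a : σ → R) (r : R) :
    translate a (MvPolynomial.C r) = MvPolynomial.C r :=
  (translate a).commutes r

theorem translate_aeval_X (a : σ → R) (i : σ) (F : R[X]) :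
    translate a (Polynomial.aeval (MvPolynomial.X i) F) =
      Polynomial.aeval (MvPolynomial.X i) (taylor (a i) F) := by
  rw [← Polynomial.aeval_algHom_apply, translate_X, taylor_apply, Polynomial.aeval_comp]
  simp [algebraMap_eq]

end Translation

section LocalBound
open MvPolynomial Module
variable {k : Type*} [Field k] [IsAlgClosed k] [DecidableEq k] {p κ : ℕ} [Fact p.Prime] [CharP k p]
  {A B : MvPolynomial (Fin 2) k} {J : Ideal (MvPolynomial (Fin 2) k)}

theorem four_mul_finrank_quotient_le_of_coeff (hP : 3 ≤ p ^ κ)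
    (hJ : ∀ i, MvPolynomial.X i ^ p ^ κ ∈ J) (hAJ : A ∈ J) (hBJ : B ∈ J) {F : Fin 2 → k[X]}
    (hAB : A * B = Polynomial.aeval (MvPolynomial.X 0) (F 0) -
      Polynomial.aeval (MvPolynomial.X 1) (F 1))
    (hF : ∀ i n, n ≠ 0 → n < p ^ κ → (F i).coeff n = 0)
    (hF' : ∀ i, (F i).coeff (p ^ κ + 1) ≠ 0) :
    FiniteDimensional k (_ ⧸ J) ∧
      4 * finrank k (_ ⧸ J) ≤ if (F 0).coeff 0 = (F 1).coeff 0 then (p ^ κ + 1) ^ 2 else 0 := by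
  have hcomp (n : ℕ) : homogeneousComponent n (A * B) =
      MvPolynomial.C ((F 0).coeff n) * MvPolynomial.X 0 ^ n -
        MvPolynomial.C ((F 1).coeff n) * MvPolynomial.X 1 ^ n := by
    rw [hAB, map_sub, homogeneousComponent_aeval (isHomogeneous_X k _),
      homogeneousComponent_aeval (isHomogeneous_X k _)]
  split_ifs with h0
  · refine four_mul_finrank_quotient_le rfl hP hJ hAJ hBJ (hF' 0) (hF' 1) ?_ (hcomp _) (hcomp _)
    refine mem_pow_idealOfVars_iff_homogeneousComponent.2 fun n hn => ?_
    obtain rfl | hn0 := eq_or_ne n 0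
    · simp [hcomp, h0]
    · simp [hcomp, hF _ n hn0 hn]
  · have hconst : constantCoeff (A * B) ≠ 0 := by
      intro h
      rw [constantCoeff_eq] at h
      have := hcomp 0
      rw [homogeneousComponent_zero, h, pow_zero, pow_zero, mul_one, mul_one, ← C_sub, eq_comm,
        map_zero, MvPolynomial.C_eq_zero, sub_eq_zero] at this
      exact h0 this
    rw [map_mul] at hconst
    obtain rfl := eq_top_of_constantCoeff_ne_zero hAJ (left_ne_zero_of_mul hconst)
      (idealOfVars_le_radical hJ)
    have : Subsingleton (MvPolynomial (Fin 2) k ⧸ (⊤ : Ideal (MvPolynomial (Fin 2) k))) :=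
      Ideal.Quotient.subsingleton_iff.2 rfl
    exact ⟨inferInstance, by rw [finrank_zero_of_subsingleton]⟩

theorem four_mul_finrank_quotient_le_of_eval_eq_zero {m : ℕ} (hP : 3 ≤ p ^ κ) (h2 : (2 : k) ≠ 0)
    (hm : (m : k) ≠ 0) {t : Fin 2 → k} (ht : ∀ i, (binomDiff k m).eval (t i) = 0)
    (hJ : ∀ i, (MvPolynomial.X i - MvPolynomial.C (t i)) ^ p ^ κ ∈ J) (hAJ : A ∈ J) (hBJ : B ∈ J)
    (hAB : A * B = Polynomial.aeval (MvPolynomial.X 0) (binomSum k (m * p ^ κ + 1)) -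
      Polynomial.aeval (MvPolynomial.X 1) (binomSum k (m * p ^ κ + 1))) :
    FiniteDimensional k (_ ⧸ J) ∧ 4 * finrank k (_ ⧸ J) ≤
      if (binomSum k m).eval (t 0) = (binomSum k m).eval (t 1) then (p ^ κ + 1) ^ 2 else 0 := by
  let τ : MvPolynomial (Fin 2) k ≃ₐ[k] MvPolynomial (Fin 2) k := translate t
  let J' : Ideal (MvPolynomial (Fin 2) k) := J.map (τ : MvPolynomial (Fin 2) k →+* _)
  let e : (MvPolynomial (Fin 2) k ⧸ J) ≃ₐ[k] (MvPolynomial (Fin 2) k ⧸ J') :=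
    Ideal.quotientEquivAlg J J' τ rfl
  have hmap {F : MvPolynomial (Fin 2) k} (hF : F ∈ J) : τ F ∈ J' := Ideal.mem_map_of_mem _ hF
  have hbound := four_mul_finrank_quotient_le_of_coeff (J := J') hP
    (F := fun i => taylor (t i) (binomSum k (m * p ^ κ + 1)))
    (fun i => by simpa [τ] using hmap (hJ i)) (hmap hAJ) (hmap hBJ)
    (by rw [← map_mul, hAB, map_sub, translate_aeval_X, translate_aeval_X])
    (fun i n => coeff_taylor_binomSum_eq_zero (ht i))
    (fun i => coeff_taylor_binomSum_succ_ne_zero h2 hm (ht i) (by omega))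
  obtain ⟨hfin, hle⟩ := hbound
  refine ⟨.equiv e.symm.toLinearEquiv, ?_⟩
  rw [e.toLinearEquiv.finrank_eq]
  simpa only [coeff_zero_taylor_binomSum, ht, (iterateFrobenius_inj k p κ).eq_iff,
    ← iterateFrobenius_def] using hle

end LocalBound

section ChineseRemainder
open Module

theorem mem_of_forall_mem_sup_span_singleton {ι R : Type*} [CommRing R] {s : Finset ι} {I : Ideal R}
    {a : ι → R} (ha : (s : Set ι).Pairwise (Function.onFun IsCoprime a)) (hI : ∏ i ∈ s, a i ∈ I)
    {x : R} (hx : ∀ i ∈ s, x ∈ I ⊔ Ideal.span {a i}) : x ∈ I := by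
  have hmem : Ideal.Quotient.mk I x ∈ s.inf fun i => Ideal.span {Ideal.Quotient.mk I (a i)} := by
    refine (Submodule.mem_finsetInf).2 fun i hi => ?_
    simpa [Ideal.map_sup, Ideal.map_span] using
      Ideal.mem_map_of_mem (Ideal.Quotient.mk I) (hx i hi)
  rw [Ideal.finset_inf_span_singleton _ _ fun i hi j hj hij =>
      (ha hi hj hij).map (Ideal.Quotient.mk I),
    ← map_prod, Ideal.Quotient.eq_zero_iff_mem.2 hI, Ideal.mem_span_singleton, zero_dvd_iff] at hmem
  exact Ideal.Quotient.eq_zero_iff_mem.1 hmem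

theorem finrank_quotient_le_sum_of_pairwise_isCoprime {ι k R : Type*} [Field k] [CommRing R]
    [Algebra k R] {s : Finset ι} {I : Ideal R} {a : ι → R}
    (ha : (s : Set ι).Pairwise (Function.onFun IsCoprime a)) (hI : ∏ i ∈ s, a i ∈ I)
    (hfin : ∀ i ∈ s, FiniteDimensional k (R ⧸ I ⊔ Ideal.span {a i})) :
    FiniteDimensional k (R ⧸ I) ∧
      finrank k (R ⧸ I) ≤ ∑ i ∈ s, finrank k (R ⧸ I ⊔ Ideal.span {a i}) := by
  have (i : s) : FiniteDimensional k (R ⧸ I ⊔ Ideal.span {a i}) := hfin i i.2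
  let φ : (R ⧸ I) →ₗ[k] ∀ i : s, R ⧸ I ⊔ Ideal.span {a i} :=
    LinearMap.pi fun i =>
      (Ideal.Quotient.factorₐ k (le_sup_left (b := Ideal.span {a i}))).toLinearMap
  have hφ : Function.Injective φ := by
    refine (injective_iff_map_eq_zero φ).2 fun x hx => ?_
    obtain ⟨x, rfl⟩ := Ideal.Quotient.mk_surjective x
    refine Ideal.Quotient.eq_zero_iff_mem.2
      (mem_of_forall_mem_sup_span_singleton ha hI fun i hi => ?_)
    exact Ideal.Quotient.eq_zero_iff_mem.1 (congrFun hx ⟨i, hi⟩)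
  refine ⟨.of_injective φ hφ, (LinearMap.finrank_le_finrank_of_injective hφ).trans_eq ?_⟩
  rw [finrank_pi_fintype, Finset.univ_eq_attach,
    Finset.sum_attach s fun i => finrank k (R ⧸ I ⊔ Ideal.span {a i})]

end ChineseRemainder

section SeparableRoots

theorem dvd_prod_X_sub_C_of_separable {k : Type*} [Field k] [IsAlgClosed k] [DecidableEq k]
    {f : k[X]}
    (hf : f.Separable) : f ∣ ∏ t ∈ f.roots.toFinset, (X - C t) := by
  have hprod : ∏ t ∈ f.roots.toFinset, (X - C t) = (f.roots.map fun t => X - C t).prod := by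
    rw [Finset.prod, Multiset.toFinset_val, (nodup_roots hf).dedup]
  have hunit : IsUnit (C f.leadingCoeff) := isUnit_C.2 (leadingCoeff_ne_zero.2 hf.ne_zero).isUnit
  rw [hprod, ← hunit.dvd_mul_left, ← (IsAlgClosed.splits f).eq_prod_roots]

end SeparableRoots

section GlobalBound
open MvPolynomial Module
variable {k : Type*} [Field k]

theorem pairwise_isCoprime_X_sub_C_pow {σ : Type*} (s : Set k) (i : σ) (n : ℕ) :
    s.Pairwise (Function.onFun IsCoprime fun t =>
      ((MvPolynomial.X i - MvPolynomial.C t) ^ n : MvPolynomial σ k)) := by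
  intro t _ t' _ h
  refine IsCoprime.pow ?_
  simpa [algebraMap_eq] using (isCoprime_X_sub_C_of_isUnit_sub (sub_ne_zero.2 h).isUnit).map
    (Polynomial.aeval (MvPolynomial.X i : MvPolynomial σ k)).toRingHom

theorem derivative_binomSum_mul_add_one {R : Type*} [CommRing R] {p κ : ℕ} [Fact p.Prime]
    [CharP R p] (hκ : κ ≠ 0) (m : ℕ) :
    derivative (binomSum R (m * p ^ κ + 1)) = binomDiff R m ^ p ^ κ := by
  rw [derivative_binomSum_succ, binomDiff, binomDiff, sub_pow_char_pow, pow_mul, pow_mul]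
  simp [CharP.cast_eq_zero, hκ]

variable {p κ m : ℕ} {A B : MvPolynomial (Fin 2) k}

theorem prod_X_sub_C_pow_mem_span_pair [IsAlgClosed k] [DecidableEq k] [Fact p.Prime] [CharP k p]
    (hκ : κ ≠ 0) (h2 : (2 : k) ≠ 0) (hm : (m : k) ≠ 0)
    (hAB : A * B = Polynomial.aeval (MvPolynomial.X 0) (binomSum k (m * p ^ κ + 1)) -
      Polynomial.aeval (MvPolynomial.X 1) (binomSum k (m * p ^ κ + 1))) (i : Fin 2) :
    ∏ t ∈ (binomDiff k m).roots.toFinset, (MvPolynomial.X i - MvPolynomial.C t) ^ p ^ κ ∈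
      Ideal.span {A, B} := by
  have hdvd : Polynomial.aeval (MvPolynomial.X i : MvPolynomial (Fin 2) k) (binomDiff k m) ∣
      ∏ t ∈ (binomDiff k m).roots.toFinset, (MvPolynomial.X i - MvPolynomial.C t) := by
    simpa using _root_.map_dvd (Polynomial.aeval (MvPolynomial.X i : MvPolynomial (Fin 2) k))
      (dvd_prod_X_sub_C_of_separable (separable_binomDiff h2 hm))
  have hpderiv : pderiv i (A * B) ∈ Ideal.span {A, B} := by
    rw [Derivation.leibniz, smul_eq_mul, smul_eq_mul]
    exact add_mem (Ideal.mul_mem_right _ _ (Ideal.subset_span (by simp)))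
      (Ideal.mul_mem_right _ _ (Ideal.subset_span (by simp)))
  rw [Finset.prod_pow]
  refine Ideal.mem_of_dvd _ (pow_dvd_pow_of_dvd hdvd _) ?_
  rw [hAB, map_sub, Derivation.map_aeval, Derivation.map_aeval,
    derivative_binomSum_mul_add_one hκ] at hpderiv
  revert i
  simp [Fin.forall_fin_two, pderiv_X]

theorem four_mul_finrank_quotient_le_sum [IsAlgClosed k] [DecidableEq k] [Fact p.Prime] [CharP k p]
    (hP : 3 ≤ p ^ κ) (h2 : (2 : k) ≠ 0) (hm : (m : k) ≠ 0)
    (hAB : A * B = Polynomial.aeval (MvPolynomial.X 0) (binomSum k (m * p ^ κ + 1)) -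
      Polynomial.aeval (MvPolynomial.X 1) (binomSum k (m * p ^ κ + 1)))
    {I : Ideal (MvPolynomial (Fin 2) k)} (hAI : A ∈ I) (hBI : B ∈ I) {Θ : Finset k}
    (hroot : ∀ t ∈ Θ, (binomDiff k m).eval t = 0)
    (hprod : ∀ i, ∏ t ∈ Θ, (MvPolynomial.X i - MvPolynomial.C t) ^ p ^ κ ∈ I) :
    FiniteDimensional k (_ ⧸ I) ∧ 4 * finrank k (_ ⧸ I) ≤ ∑ t ∈ Θ, ∑ t' ∈ Θ,
      if (binomSum k m).eval t' = (binomSum k m).eval t then (p ^ κ + 1) ^ 2 else 0 := by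
  let L (i : Fin 2) (t : k) : Ideal (MvPolynomial (Fin 2) k) :=
    Ideal.span {(MvPolynomial.X i - MvPolynomial.C t) ^ p ^ κ}
  have hcop (i : Fin 2) := pairwise_isCoprime_X_sub_C_pow (Θ : Set k) i (p ^ κ)
  have hlocal (t : k) (ht : t ∈ Θ) (t' : k) (ht' : t' ∈ Θ) :=
    four_mul_finrank_quotient_le_of_eval_eq_zero (J := I ⊔ L 1 t ⊔ L 0 t') hP h2 hm
      (t := ![t', t]) (Fin.forall_fin_two.2 ⟨hroot t' ht', hroot t ht⟩)
      (Fin.forall_fin_two.2 ⟨Ideal.mem_sup_right (Ideal.mem_span_singleton_self _),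
        Ideal.mem_sup_left (Ideal.mem_sup_right (Ideal.mem_span_singleton_self _))⟩)
      (Ideal.mem_sup_left (Ideal.mem_sup_left hAI)) (Ideal.mem_sup_left (Ideal.mem_sup_left hBI))
      hAB
  have hinner (t : k) (ht : t ∈ Θ) := finrank_quotient_le_sum_of_pairwise_isCoprime (k := k)
    (hcop 0) (Ideal.mem_sup_left (hprod 0)) fun t' ht' => (hlocal t ht t' ht').1
  have houter := finrank_quotient_le_sum_of_pairwise_isCoprime (k := k) (hcop 1) (hprod 1)
    fun t ht => (hinner t ht).1
  refine ⟨houter.1, ?_⟩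
  calc 4 * finrank k (_ ⧸ I) ≤ 4 * ∑ t ∈ Θ, ∑ t' ∈ Θ, finrank k (_ ⧸ I ⊔ L 1 t ⊔ L 0 t') :=
        Nat.mul_le_mul_left 4 (houter.2.trans (Finset.sum_le_sum fun t ht => (hinner t ht).2))
    _ = ∑ t ∈ Θ, ∑ t' ∈ Θ, 4 * finrank k (_ ⧸ I ⊔ L 1 t ⊔ L 0 t') := by
        simp only [Finset.mul_sum]
    _ ≤ _ := Finset.sum_le_sum fun t ht => Finset.sum_le_sum fun t' ht' => (hlocal t ht t' ht').2

theorem finrank_quotient_span_pair_le [IsAlgClosed k] [Fact p.Prime] [CharP k p] (hP : 3 ≤ p ^ κ)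
    (h2 : (2 : k) ≠ 0) (hm : Odd m) (hmk : (m : k) ≠ 0)
    (hAB : A * B = Polynomial.aeval (MvPolynomial.X 0) (binomSum k (m * p ^ κ + 1)) -
      Polynomial.aeval (MvPolynomial.X 1) (binomSum k (m * p ^ κ + 1))) :
    FiniteDimensional k (_ ⧸ Ideal.span {A, B}) ∧
      8 * finrank k (_ ⧸ Ideal.span {A, B}) ≤ (m ^ 2 + 1) * (p ^ κ + 1) ^ 2 := by
  classical
  have hκ : κ ≠ 0 := by rintro rfl; simp at hP
  have hroot (t : k) (ht : t ∈ (binomDiff k m).roots.toFinset) : (binomDiff k m).eval t = 0 :=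
    (mem_roots'.1 (Multiset.mem_toFinset.1 ht)).2
  obtain ⟨hfin, hle⟩ := four_mul_finrank_quotient_le_sum hP h2 hmk hAB
    (Ideal.subset_span (by simp)) (Ideal.subset_span (by simp)) hroot
    (prod_X_sub_C_pow_mem_span_pair hκ h2 hmk hAB)
  have hcard := two_mul_sum_card_fiber_le (s := (binomDiff k m).roots.toFinset)
    (g := fun t => (binomSum k m).eval t) hm
    ((Multiset.toFinset_card_le _).trans ((card_roots' _).trans (natDegree_binomDiff_le m)))
    fun t _ => two_mul_card_le_of_binomDiff_eq_zero h2 hm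
      (fun t' ht' => hroot t' (Finset.mem_filter.1 ht').1) fun t' ht' => (Finset.mem_filter.1 ht').2
  simp only [← Finset.sum_filter, Finset.sum_const, smul_eq_mul, ← Finset.sum_mul] at hle
  exact ⟨hfin, by linarith [Nat.mul_le_mul_right ((p ^ κ + 1) ^ 2) hcard]⟩

theorem homogeneousComponent_aeval_binomSum_sub {R : Type*} [CommRing R] {d : ℕ} (hd : Even d) :
    homogeneousComponent d (Polynomial.aeval (MvPolynomial.X 0 : MvPolynomial (Fin 2) R)
      (binomSum R d) - Polynomial.aeval (MvPolynomial.X 1) (binomSum R d)) =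
      MvPolynomial.C 2 * MvPolynomial.X 0 ^ d - MvPolynomial.C 2 * MvPolynomial.X 1 ^ d := by
  rw [map_sub, homogeneousComponent_aeval (isHomogeneous_X R _),
    homogeneousComponent_aeval (isHomogeneous_X R _), coeff_binomSum_self hd]

theorem totalDegree_aeval_binomSum_sub {d : ℕ} (h2 : (2 : k) ≠ 0) (hdk : (d : k) ≠ 0)
    (hd : Even d) :
    (Polynomial.aeval (MvPolynomial.X 0 : MvPolynomial (Fin 2) k) (binomSum k d) -
      Polynomial.aeval (MvPolynomial.X 1) (binomSum k d)).totalDegree = d := by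
  refine totalDegree_eq_of_homogeneousComponent_ne_zero ((totalDegree_sub _ _).trans (max_le ?_ ?_))
    fun h => ?_
  · exact (totalDegree_aeval_le (isHomogeneous_X k _) _).trans (natDegree_binomSum_le d)
  · exact (totalDegree_aeval_le (isHomogeneous_X k _) _).trans (natDegree_binomSum_le d)
  · rw [homogeneousComponent_aeval_binomSum_sub hd] at h
    exact (MvPolynomial.X_prime (i := (0 : Fin 2)) (R := k)).not_isUnit
      (isUnit_of_sq_dvd_sub h2 h2 hdk (h ▸ dvd_zero _))

theorem sq_add_one_mul_sq_lt {m P : ℕ} (hm : 3 ≤ m) (hP : 3 ≤ P) :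
    9 * ((m ^ 2 + 1) * (P + 1) ^ 2) < 16 * (m * P + 1) ^ 2 := by
  obtain ⟨x, rfl⟩ := Nat.exists_eq_add_of_le hP
  obtain ⟨y, rfl⟩ := Nat.exists_eq_add_of_le hm
  rw [← Nat.cast_lt (α := ℤ), ← sub_pos]
  push_cast
  ring_nf
  positivity

theorem nine_mul_totalDegree_mul_lt [IsAlgClosed k] [Fact p.Prime] [CharP k p] (hP : 3 ≤ p ^ κ)
    (h2 : (2 : k) ≠ 0) (hm : Odd m) (hm3 : 3 ≤ m) (hmk : (m : k) ≠ 0)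
    (hAB : A * B = Polynomial.aeval (MvPolynomial.X 0) (binomSum k (m * p ^ κ + 1)) -
      Polynomial.aeval (MvPolynomial.X 1) (binomSum k (m * p ^ κ + 1))) :
    9 * (A.totalDegree * B.totalDegree) < 2 * (m * p ^ κ + 1) ^ 2 := by
  have hκ : κ ≠ 0 := by rintro rfl; simp at hP
  set d := m * p ^ κ + 1 with hd
  have hdk : (d : k) ≠ 0 := by simp [hd, CharP.cast_eq_zero, hκ]
  have hdeven : Even d := by
    refine (hm.mul (Odd.pow (((Fact.out : p.Prime).eq_two_or_odd').resolve_left ?_))).add_one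
    rintro rfl
    exact h2 (CharP.cast_eq_zero k 2)
  obtain h0 | h0 := Nat.eq_zero_or_pos (A.totalDegree * B.totalDegree)
  · rw [h0]
    positivity
  have hA := Nat.pos_of_mul_pos_right h0
  have hB := Nat.pos_of_mul_pos_left h0
  have hA0 : A ≠ 0 := by rintro rfl; simp at hA
  have hB0 : B ≠ 0 := by rintro rfl; simp at hB
  have htop := homogeneousComponent_aeval_binomSum_sub (R := k) hdeven
  have hsum : A.totalDegree + B.totalDegree = d := by
    rw [← totalDegree_mul_of_isDomain hA0 hB0, hAB, totalDegree_aeval_binomSum_sub h2 hdk hdeven]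
  rw [← hAB, ← hsum, homogeneousComponent_add_mul_of_totalDegree_le le_rfl le_rfl, hsum] at htop
  have hrel : IsRelPrime (homogeneousComponent A.totalDegree A)
      (homogeneousComponent B.totalDegree B) := fun δ hδA hδB =>
    isUnit_of_sq_dvd_sub h2 h2 hdk (by rw [sq, ← htop]; exact mul_dvd_mul hδA hδB)
  obtain ⟨hfin, hle⟩ := finrank_quotient_span_pair_le hP h2 hm hmk hAB
  have hge := mul_le_finrank_quotient_span_pair hA hB le_rfl le_rfl
    (homogeneousComponent_totalDegree_ne_zero hB0) hrel
  have : _ < 16 * d ^ 2 := sq_add_one_mul_sq_lt hm3 hP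
  omega

end GlobalBound

section TopForm
open MvPolynomial

/-- The homogeneous component of highest degree of a multivariate polynomial. -/
noncomputable def topForm {σ R : Type*} [CommRing R] (F : MvPolynomial σ R) : MvPolynomial σ R :=
  homogeneousComponent F.totalDegree F

section CommRing
variable {σ R : Type*} [CommRing R]

theorem topForm_of_isHomogeneous {F : MvPolynomial σ R} {n : ℕ} (hF : F.IsHomogeneous n) :
    topForm F = F := by
  obtain rfl | h0 := eq_or_ne F 0
  · exact map_zero _
  · rw [topForm, hF.totalDegree h0, homogeneousComponent_eq_self hF]

theorem totalDegree_topForm_le (F : MvPolynomial σ R) : (topForm F).totalDegree ≤ F.totalDegree :=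
  (homogeneousComponent_isHomogeneous _ F).totalDegree_le

theorem topForm_mul [IsDomain R] {F G : MvPolynomial σ R} (hF : F ≠ 0) (hG : G ≠ 0) :
    topForm (F * G) = topForm F * topForm G := by
  rw [topForm, totalDegree_mul_of_isDomain hF hG,
    homogeneousComponent_add_mul_of_totalDegree_le le_rfl le_rfl, topForm, topForm]

theorem topForm_dvd_topForm [IsDomain R] {F G : MvPolynomial σ R} (hG : G ≠ 0) (h : F ∣ G) :
    topForm F ∣ topForm G := by
  obtain ⟨H, rfl⟩ := h
  rw [topForm_mul (left_ne_zero_of_mul hG) (right_ne_zero_of_mul hG)]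
  exact dvd_mul_right _ _

theorem homogeneousComponent_map {S : Type*} [CommRing S] (φ : R →+* S) (n : ℕ)
    (F : MvPolynomial σ R) :
    homogeneousComponent n (MvPolynomial.map φ F) =
      MvPolynomial.map φ (homogeneousComponent n F) := by
  refine MvPolynomial.ext _ _ fun m => ?_
  simp only [coeff_homogeneousComponent, MvPolynomial.coeff_map]
  split_ifs
  · rfl
  · rw [map_zero]

theorem totalDegree_map_of_injective {S : Type*} [CommRing S] {φ : R →+* S}
    (hφ : Function.Injective φ) (F : MvPolynomial σ R) :
    (MvPolynomial.map φ F).totalDegree = F.totalDegree := by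
  simp only [totalDegree, support_map_of_injective F hφ]

theorem topForm_map_of_injective {S : Type*} [CommRing S] {φ : R →+* S}
    (hφ : Function.Injective φ) (F : MvPolynomial σ R) :
    topForm (MvPolynomial.map φ F) = MvPolynomial.map φ (topForm F) := by
  rw [topForm, totalDegree_map_of_injective hφ, homogeneousComponent_map, topForm]

end CommRing

variable {σ k : Type*} [Field k] {F : MvPolynomial σ k}

theorem exists_irreducible_dvd_topForm {s : MvPolynomial σ k} (hs : Prime s) (hF : F ≠ 0)
    (h : s ∣ topForm F) : ∃ π, Irreducible π ∧ π ∣ F ∧ s ∣ topForm π := by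
  induction F using WfDvdMonoid.induction_on_irreducible with
  | zero => exact absurd rfl hF
  | unit u hu =>
    obtain ⟨r, -, rfl⟩ := isUnit_iff_eq_C_of_isReduced.1 hu
    rw [topForm_of_isHomogeneous (isHomogeneous_C σ r)] at h
    exact absurd (isUnit_of_dvd_unit h hu) hs.not_isUnit
  | mul G π hG hπ ih =>
    rw [topForm_mul hπ.ne_zero hG] at h
    rcases hs.dvd_or_dvd h with h | h
    · exact ⟨π, hπ, dvd_mul_right _ _, h⟩
    · obtain ⟨ρ, hρ, hρG, hsρ⟩ := ih hG h
      exact ⟨ρ, hρ, hρG.mul_left _, hsρ⟩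

theorem exists_irreducible_dvd_of_totalDegree_pos (h : 0 < F.totalDegree) :
    ∃ π, Irreducible π ∧ π ∣ F := by
  refine WfDvdMonoid.exists_irreducible_factor (fun hu => ?_) (by rintro rfl; simp at h)
  obtain ⟨r, -, rfl⟩ := isUnit_iff_eq_C_of_isReduced.1 hu
  simp at h

/-- A divisor `A` of largest degree subject to `3 * deg A ≤ 2 * deg F` has `deg F ≤ 3 * deg A`:
otherwise its product with an irreducible factor of the cofactor would have larger degree. -/
theorem exists_mul_eq_two_mul_sq_totalDegree_le (hF : F ≠ 0)
    (h : ∀ π, Irreducible π → π ∣ F → 2 * π.totalDegree ≤ F.totalDegree) :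
    ∃ A B, F = A * B ∧ 2 * F.totalDegree ^ 2 ≤ 9 * (A.totalDegree * B.totalDegree) := by
  classical
  let P (a : ℕ) : Prop := ∃ A, A ∣ F ∧ A.totalDegree = a ∧ 3 * a ≤ 2 * F.totalDegree
  obtain ⟨A, ⟨B, hAB⟩, hAdeg, hA⟩ : P (Nat.findGreatest P F.totalDegree) :=
    Nat.findGreatest_spec (Nat.zero_le _) ⟨1, one_dvd _, by simp, by omega⟩
  have hmax (C : MvPolynomial σ k) (hC : C ∣ F) (hle : 3 * C.totalDegree ≤ 2 * F.totalDegree) :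
      C.totalDegree ≤ A.totalDegree :=
    hAdeg ▸ Nat.le_findGreatest (by omega) ⟨C, hC, rfl, hle⟩
  have hA0 : A ≠ 0 := by rintro rfl; exact hF (by rw [hAB, zero_mul])
  have hB0 : B ≠ 0 := by rintro rfl; exact hF (by rw [hAB, mul_zero])
  have hdeg : F.totalDegree = A.totalDegree + B.totalDegree := by
    rw [hAB, totalDegree_mul_of_isDomain hA0 hB0]
  have hlarge : F.totalDegree ≤ 3 * A.totalDegree := by
    by_contra! hlt
    obtain ⟨π, hπ, hπB⟩ := exists_irreducible_dvd_of_totalDegree_pos (F := B) (by omega)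
    have hπF : π ∣ F := hAB ▸ hπB.mul_left A
    have hAπF : A * π ∣ F := hAB ▸ mul_dvd_mul_left A hπB
    have hAπ := totalDegree_mul_of_isDomain hA0 hπ.ne_zero
    have hπhalf := h π hπ hπF
    have hπpos := totalDegree_pos_of_irreducible hπ
    have hπA := hmax π hπF (by omega)
    have := hmax (A * π) hAπF (by omega)
    omega
  refine ⟨A, B, hAB, ?_⟩
  have hBA : B.totalDegree ≤ 2 * A.totalDegree := by omega
  have hAB' : A.totalDegree ≤ 2 * B.totalDegree := by omega
  rw [hdeg]
  zify at hBA hAB' ⊢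
  linarith [mul_nonneg (sub_nonneg.2 hBA) (sub_nonneg.2 hAB')]

end TopForm

section Frobenius
open MvPolynomial
variable (K : Type*) {σ k : Type*} [Field K] [Fintype K] [Field k] [Algebra K k]

theorem mem_range_algebraMap_of_pow_card_eq {x : k} (hx : x ^ Fintype.card K = x) :
    x ∈ (algebraMap K k).range := by
  have hroots := roots_map_of_injective_of_card_eq_natDegree (algebraMap K k).injective
    (p := Polynomial.X ^ Fintype.card K - Polynomial.X) <| by
      rw [FiniteField.roots_X_pow_card_sub_X,
        FiniteField.X_pow_card_sub_X_natDegree_eq K Fintype.one_lt_card]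
      rfl
  have hroot : x ∈ ((Polynomial.X ^ Fintype.card K - Polynomial.X : K[X]).map
      (algebraMap K k)).roots := by
    refine (mem_roots ?_).2 (by simp [hx])
    exact Polynomial.map_ne_zero (FiniteField.X_pow_card_sub_X_ne_zero K Fintype.one_lt_card)
  rw [← hroots, FiniteField.roots_X_pow_card_sub_X, Multiset.mem_map] at hroot
  obtain ⟨a, -, ha⟩ := hroot
  exact ⟨a, ha⟩

variable [Algebra.IsAlgebraic K k]

/-- The automorphism of `MvPolynomial σ k` raising the coefficients to the power `|K|`; its fixed
points are the polynomials with coefficients in the finite field `K`. -/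
noncomputable def coeffFrobenius : MvPolynomial σ k ≃+* MvPolynomial σ k :=
  mapEquiv σ (FiniteField.frobeniusAlgEquivOfAlgebraic K k).toRingEquiv

theorem coeff_coeffFrobenius (F : MvPolynomial σ k) (m : σ →₀ ℕ) :
    (coeffFrobenius K F).coeff m = F.coeff m ^ Fintype.card K :=
  MvPolynomial.coeff_map _ _ _

@[simp]
theorem coeffFrobenius_X (i : σ) :
    coeffFrobenius K (MvPolynomial.X i : MvPolynomial σ k) = MvPolynomial.X i :=
  MvPolynomial.map_X _ i

@[simp]
theorem coeffFrobenius_C (c : k) :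
    coeffFrobenius K (MvPolynomial.C c : MvPolynomial σ k) = MvPolynomial.C (c ^ Fintype.card K) :=
  MvPolynomial.map_C _ c

@[simp]
theorem coeffFrobenius_map (F : MvPolynomial σ K) :
    coeffFrobenius K (MvPolynomial.map (algebraMap K k) F) =
      MvPolynomial.map (algebraMap K k) F := by
  refine MvPolynomial.ext _ _ fun m => ?_
  rw [coeff_coeffFrobenius, MvPolynomial.coeff_map, ← map_pow, FiniteField.pow_card]

theorem totalDegree_coeffFrobenius (F : MvPolynomial σ k) :
    (coeffFrobenius K F).totalDegree = F.totalDegree :=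
  totalDegree_map_of_injective (RingEquiv.injective _) F

theorem topForm_coeffFrobenius (F : MvPolynomial σ k) :
    topForm (coeffFrobenius K F) = coeffFrobenius K (topForm F) :=
  topForm_map_of_injective (RingEquiv.injective _) F

theorem mem_range_map_of_coeffFrobenius_eq {F : MvPolynomial σ k} (hF : coeffFrobenius K F = F) :
    F ∈ Set.range (MvPolynomial.map (σ := σ) (algebraMap K k)) := by
  rw [mem_range_map_iff_coeffs_subset]
  intro a ha
  obtain ⟨m, -, rfl⟩ := mem_coeffs_iff.1 ha
  exact mem_range_algebraMap_of_pow_card_eq K (by rw [← coeff_coeffFrobenius, hF])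

/-- If `F ^ Frob = c * F`, then `l * F` is fixed by Frobenius as soon as `l ^ (|K| - 1) = c⁻¹`. -/
theorem exists_associated_map_of_associated_coeffFrobenius [IsAlgClosed k] {F : MvPolynomial σ k}
    (h : Associated F (coeffFrobenius K F)) :
    ∃ F₀ : MvPolynomial σ K, Associated F (MvPolynomial.map (algebraMap K k) F₀) := by
  obtain ⟨w, hw⟩ := h
  obtain ⟨c, hc, hwc⟩ := isUnit_iff_eq_C_of_isReduced.1 w.isUnit
  have hcard : 0 < Fintype.card K - 1 := Nat.sub_pos_of_lt Fintype.one_lt_card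
  obtain ⟨l, hl⟩ := IsAlgClosed.exists_pow_nat_eq c⁻¹ hcard
  have hl0 : l ≠ 0 := by
    rintro rfl
    rw [zero_pow hcard.ne', eq_comm, inv_eq_zero] at hl
    exact hc.ne_zero hl
  have hlc : l ^ Fintype.card K * c = l := by
    rw [← Nat.sub_add_cancel Fintype.card_pos, pow_succ, hl, mul_right_comm,
      inv_mul_cancel₀ hc.ne_zero, one_mul]
  obtain ⟨F₀, hF₀⟩ := mem_range_map_of_coeffFrobenius_eq K (F := MvPolynomial.C l * F) <| by
    rw [map_mul, coeffFrobenius_C, ← hw, hwc, mul_comm F, ← mul_assoc, ← MvPolynomial.C_mul, hlc]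
  refine ⟨F₀, hF₀ ▸ ?_⟩
  exact associated_unit_mul_right F _ ((isUnit_iff_ne_zero.2 hl0).map MvPolynomial.C)

theorem mul_coeffFrobenius_dvd_map {π : MvPolynomial σ k} (hπ : Irreducible π)
    {F : MvPolynomial σ K} (hd : π ∣ MvPolynomial.map (algebraMap K k) F)
    (h : ¬ Associated π (coeffFrobenius K π)) :
    π * coeffFrobenius K π ∣ MvPolynomial.map (algebraMap K k) F := by
  have hirr : Irreducible (coeffFrobenius K π) := (MulEquiv.irreducible_iff (coeffFrobenius K)).2 hπ
  refine IsRelPrime.mul_dvd (hπ.isRelPrime_iff_not_dvd.2 fun hd' => h ?_) hd ?_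
  · exact hπ.associated_of_dvd hirr hd'
  · simpa using _root_.map_dvd (coeffFrobenius K) hd

end Frobenius

section DiffSurface
open MvPolynomial

/-- The polynomial `f(s + u) + f(s - u) - f(s + v) - f(s - v)` in the variables `s = X 0`,
`u = X 1`, `v = X 2`. Planarity of `f` over a field says that its zeros satisfy `u ^ 2 = v ^ 2`. -/
noncomputable def diffSurface {R : Type*} [CommRing R] (f : R[X]) : MvPolynomial (Fin 3) R :=
  Polynomial.aeval (MvPolynomial.X 0 + MvPolynomial.X 1) f +
    Polynomial.aeval (MvPolynomial.X 0 - MvPolynomial.X 1) f -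
    Polynomial.aeval (MvPolynomial.X 0 + MvPolynomial.X 2) f -
    Polynomial.aeval (MvPolynomial.X 0 - MvPolynomial.X 2) f

section CommRing
variable {R : Type*} [CommRing R]

theorem aeval_diffSurface {A : Type*} [CommRing A] [Algebra R A] (x : Fin 3 → A) (f : R[X]) :
    MvPolynomial.aeval x (diffSurface f) =
      Polynomial.aeval (x 0 + x 1) f + Polynomial.aeval (x 0 - x 1) f -
        Polynomial.aeval (x 0 + x 2) f - Polynomial.aeval (x 0 - x 2) f := by
  simp [diffSurface, ← Polynomial.aeval_algHom_apply]

theorem map_diffSurface {S : Type*} [CommRing S] (φ : R →+* S) (f : R[X]) :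
    MvPolynomial.map φ (diffSurface f) = diffSurface (f.map φ) := by
  have hmap (x : MvPolynomial (Fin 3) R) :
      MvPolynomial.map φ (Polynomial.aeval x f) =
        Polynomial.aeval (MvPolynomial.map φ x) (f.map φ) := by
    rw [Polynomial.aeval_def, Polynomial.hom_eval₂, Polynomial.aeval_def, Polynomial.eval₂_map,
      algebraMap_eq, algebraMap_eq, map_comp_C]
  simp only [diffSurface, map_sub, map_add, hmap, MvPolynomial.map_X]

theorem pderiv_zero_diffSurface (f : R[X]) :
    pderiv 0 (diffSurface f) = diffSurface (derivative f) := by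
  simp [diffSurface, Derivation.map_aeval, pderiv_X]

theorem homogeneousComponent_diffSurface (n : ℕ) (f : R[X]) :
    homogeneousComponent n (diffSurface f) =
      MvPolynomial.C (f.coeff n) * diffSurface (Polynomial.X ^ n) := by
  have hX (i : Fin 3) := isHomogeneous_X R i
  simp only [diffSurface, map_sub, map_add, homogeneousComponent_aeval ((hX _).add (hX _)),
    homogeneousComponent_aeval ((hX _).sub (hX _)), aeval_X_pow]
  ring

theorem totalDegree_diffSurface_le (f : R[X]) : (diffSurface f).totalDegree ≤ f.natDegree :=
  totalDegree_le_iff_homogeneousComponent.2 fun n hn => by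
    rw [homogeneousComponent_diffSurface, coeff_eq_zero_of_natDegree_lt hn, map_zero, zero_mul]

theorem diffSurface_C_mul (a : R) (f : R[X]) :
    diffSurface (Polynomial.C a * f) = MvPolynomial.C a * diffSurface f := by
  simp only [diffSurface, map_mul, Polynomial.aeval_C, algebraMap_eq]
  ring

theorem aeval_diffSurface_X_pow {d : ℕ} (hd : Even d) (hd0 : d ≠ 0) :
    MvPolynomial.aeval ![(0 : R), 1, 0] (diffSurface (Polynomial.X ^ d : R[X])) = 2 := by
  rw [aeval_diffSurface]
  simp [hd.neg_one_pow, hd0, one_add_one_eq_two]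

theorem X_zero_dvd_diffSurface_X_pow {d : ℕ} (hd : Odd d) :
    MvPolynomial.X 0 ∣ diffSurface (Polynomial.X ^ d : R[X]) := by
  have hdvd (x : MvPolynomial (Fin 3) R) :
      MvPolynomial.X 0 ∣ (MvPolynomial.X 0 + x) ^ d + (MvPolynomial.X 0 - x) ^ d := by
    have h : MvPolynomial.X 0 + x + (MvPolynomial.X 0 - x) = MvPolynomial.X 0 * 2 := by ring
    exact (h ▸ dvd_mul_right _ _).trans (hd.add_dvd_pow_add_pow _ _)
  rw [diffSurface, sub_sub _ (Polynomial.aeval _ _), aeval_X_pow, aeval_X_pow, aeval_X_pow,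
    aeval_X_pow]
  exact dvd_sub (hdvd _) (hdvd _)

theorem aeval_diffSurface_binomSum (d : ℕ) :
    MvPolynomial.aeval ![(1 : MvPolynomial (Fin 2) R), MvPolynomial.X 0, MvPolynomial.X 1]
        (diffSurface (Polynomial.X ^ d : R[X])) =
      Polynomial.aeval (MvPolynomial.X 0) (binomSum R d) -
        Polynomial.aeval (MvPolynomial.X 1) (binomSum R d) := by
  rw [aeval_diffSurface]
  simp [binomSum]
  ring

end CommRing

variable {k : Type*} [Field k]

theorem diffSurface_X_pow_ne_zero_of_even (h2 : (2 : k) ≠ 0) {d : ℕ} (hd : Even d) (hd0 : d ≠ 0) :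
    diffSurface (Polynomial.X ^ d : k[X]) ≠ 0 := by
  intro h
  have := aeval_diffSurface_X_pow (R := k) hd hd0
  rw [h, map_zero] at this
  exact h2 this.symm

theorem not_X_zero_sq_dvd_diffSurface_X_pow (h2 : (2 : k) ≠ 0) {d : ℕ} (hd : Odd d) (hd1 : d ≠ 1)
    (hdk : (d : k) ≠ 0) : ¬ MvPolynomial.X 0 ^ 2 ∣ diffSurface (Polynomial.X ^ d : k[X]) := by
  intro h
  have hX : MvPolynomial.X 0 ∣ diffSurface (Polynomial.C (d : k) * Polynomial.X ^ (d - 1)) := by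
    obtain ⟨G, hG⟩ := h
    rw [← derivative_X_pow, ← pderiv_zero_diffSurface, hG]
    exact ⟨2 * G + MvPolynomial.X 0 * pderiv 0 G, by simp [pderiv_X]; ring⟩
  obtain ⟨G, hG⟩ := hX
  have hzero := congrArg (MvPolynomial.aeval ![(0 : k), 1, 0]) hG
  rw [diffSurface_C_mul, map_mul, map_mul, MvPolynomial.aeval_X,
    aeval_diffSurface_X_pow (hd.tsub_odd odd_one) (by have := hd.pos; omega)] at hzero
  exact mul_ne_zero hdk h2 (by simpa using hzero)

variable {f : k[X]}

theorem totalDegree_diffSurface (hf : f ≠ 0)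
    (h : diffSurface (Polynomial.X ^ f.natDegree : k[X]) ≠ 0) :
    (diffSurface f).totalDegree = f.natDegree := by
  refine totalDegree_eq_of_homogeneousComponent_ne_zero (totalDegree_diffSurface_le f) ?_
  rw [homogeneousComponent_diffSurface]
  exact mul_ne_zero (by simpa using hf) h

theorem diffSurface_ne_zero (hf : f ≠ 0)
    (h : diffSurface (Polynomial.X ^ f.natDegree : k[X]) ≠ 0) : diffSurface f ≠ 0 := by
  intro h0
  have := homogeneousComponent_diffSurface f.natDegree f
  rw [h0, map_zero] at this
  exact mul_ne_zero (by simpa using hf) h this.symm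

theorem associated_topForm_diffSurface (hf : f ≠ 0)
    (h : diffSurface (Polynomial.X ^ f.natDegree : k[X]) ≠ 0) :
    Associated (topForm (diffSurface f)) (diffSurface (Polynomial.X ^ f.natDegree)) := by
  rw [topForm, totalDegree_diffSurface hf h, homogeneousComponent_diffSurface]
  exact associated_unit_mul_left _ _ ((leadingCoeff_ne_zero.2 hf).isUnit.map MvPolynomial.C)

end DiffSurface

section IsExceptionalPlanarOdd
open MvPolynomial

theorem aeval_eq_zero_of_map_dvd_map {σ K L k : Type*} [Field K] [Field L] [Field k] [Algebra K L]
    [Algebra.IsAlgebraic K L] [Algebra K k] [IsAlgClosed k] {F G : MvPolynomial σ K}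
    (h : MvPolynomial.map (algebraMap K k) F ∣ MvPolynomial.map (algebraMap K k) G) {x : σ → L}
    (hx : MvPolynomial.aeval x F = 0) : MvPolynomial.aeval x G = 0 := by
  let φ : L →ₐ[K] k := IsAlgClosed.lift
  have heval (H : MvPolynomial σ K) : MvPolynomial.eval (fun i => φ (x i))
      (MvPolynomial.map (algebraMap K k) H) = φ (MvPolynomial.aeval x H) := by
    rw [MvPolynomial.eval_map, ← MvPolynomial.aeval_def, ← MvPolynomial.comp_aeval_apply]
  have hdvd := _root_.map_dvd (MvPolynomial.eval fun i => φ (x i)) h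
  rw [heval, heval, hx, map_zero, zero_dvd_iff] at hdvd
  exact φ.injective (hdvd.trans (map_zero φ).symm)

theorem sq_eq_sq_of_aeval_diffSurface_eq_zero {R L : Type} [CommRing R] [Field L] [Algebra R L]
    {f : R[X]} (hf : IsPlanarOdd fun x : L => Polynomial.aeval x f) {x : Fin 3 → L}
    (hx : MvPolynomial.aeval x (diffSurface f) = 0) : x 1 ^ 2 = x 2 ^ 2 := by
  rw [aeval_diffSurface] at hx
  obtain h | h := eq_or_ne (x 1) (x 2)
  · rw [h]
  have hinj : x 0 + x 2 = x 0 - x 1 := (hf (x 1 - x 2) (sub_ne_zero.2 h)).1 <| by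
    have h₁ : x 0 + x 2 + (x 1 - x 2) = x 0 + x 1 := by ring
    have h₂ : x 0 - x 1 + (x 1 - x 2) = x 0 - x 2 := by ring
    simp only [h₁, h₂]
    linear_combination hx
  linear_combination (x 1 - x 2) * hinj

variable {K : Type} [Field K] [Fintype K] {f : K[X]}

theorem exists_card_eq_pow_and_isPlanarOdd (hf : IsExceptionalPlanarOdd f) (N : ℕ) :
    ∃ r > N, ∃ (L : Type) (_ : Field L) (_ : Fintype L) (_ : Algebra K L),
      Fintype.card L = Fintype.card K ^ r ∧ IsPlanarOdd fun x : L => Polynomial.aeval x f := by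
  obtain ⟨r, ⟨hr, hplanar⟩, hN⟩ := hf.exists_gt N
  obtain ⟨p, _⟩ := CharP.exists K
  have : Fact p.Prime := ⟨CharP.char_is_prime K p⟩
  have : NeZero r := ⟨hr.ne'⟩
  let := Fintype.ofFinite (FiniteField.Extension K p r)
  have hcard : Fintype.card (FiniteField.Extension K p r) = Fintype.card K ^ r := by
    rw [← Nat.card_eq_fintype_card, FiniteField.natCard_extension, Nat.card_eq_fintype_card]
  exact ⟨r, hN, FiniteField.Extension K p r, inferInstance, inferInstance, inferInstance, hcard,
    hplanar _ hcard⟩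

theorem natDegree_ne_one_of_isExceptionalPlanarOdd (hf : IsExceptionalPlanarOdd f) :
    f.natDegree ≠ 1 := by
  intro hdeg
  obtain ⟨r, -, L, _, _, _, -, hplanar⟩ := exists_card_eq_pow_and_isPlanarOdd hf 0
  refine zero_ne_one ((hplanar 1 one_ne_zero).1 (a₁ := 0) (a₂ := 1) ?_)
  rw [eq_X_add_C_of_natDegree_le_one hdeg.le]
  simp only [map_add, map_mul, Polynomial.aeval_C, Polynomial.aeval_X]
  ring

theorem three_le_card_of_two_ne_zero (h2 : (2 : K) ≠ 0) : 3 ≤ Fintype.card K := by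
  have hcard : Fintype.card K ≠ 2 := fun h => h2 <| by
    simpa only [h, Nat.cast_ofNat] using Nat.cast_card_eq_zero K
  have := Fintype.one_lt_card (α := K)
  omega

variable {k : Type*} [Field k] [Algebra K k] [Algebra.IsAlgebraic K k] [IsAlgClosed k]
  {π : MvPolynomial (Fin 3) k}

/-- Up to a unit `π` is defined over `K`, so if it did not divide `u ^ 2 - v ^ 2` it would have a
zero with `u ^ 2 ≠ v ^ 2` over every large extension of `K`. -/
theorem dvd_X_sq_sub_X_sq_of_associated_coeffFrobenius (h2 : (2 : K) ≠ 0)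
    (hf : IsExceptionalPlanarOdd f) (hπ : Irreducible π)
    (hd : π ∣ MvPolynomial.map (algebraMap K k) (diffSurface f))
    (hassoc : Associated π (coeffFrobenius K π)) :
    π ∣ MvPolynomial.X 1 ^ 2 - MvPolynomial.X 2 ^ 2 := by
  obtain ⟨π₀, hπ₀⟩ := exists_associated_map_of_associated_coeffFrobenius K hassoc
  by_contra hnd
  obtain ⟨N, hN⟩ := exists_aeval_eq_zero_and_aeval_ne_zero (three_le_card_of_two_ne_zero h2)
    (b := MvPolynomial.X 1 ^ 2 - MvPolynomial.X 2 ^ 2) (hπ₀.irreducible hπ) fun h => hnd <| by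
      simpa using hπ₀.dvd.trans h
  obtain ⟨r, hr, L, _, _, _, hcard, hplanar⟩ := exists_card_eq_pow_and_isPlanarOdd hf N
  obtain ⟨x, hx, hxb⟩ := hN r hr.le L hcard
  refine hxb ?_
  have hzero := aeval_eq_zero_of_map_dvd_map (hπ₀.dvd'.trans hd) hx
  simp [sq_eq_sq_of_aeval_diffSurface_eq_zero hplanar hzero]

theorem dvd_X_sq_sub_X_sq_or_mul_coeffFrobenius_dvd (h2 : (2 : K) ≠ 0)
    (hf : IsExceptionalPlanarOdd f) (hπ : Irreducible π)
    (hd : π ∣ MvPolynomial.map (algebraMap K k) (diffSurface f)) :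
    π ∣ MvPolynomial.X 1 ^ 2 - MvPolynomial.X 2 ^ 2 ∨
      π * coeffFrobenius K π ∣ MvPolynomial.map (algebraMap K k) (diffSurface f) :=
  or_iff_not_imp_right.2 fun h =>
    dvd_X_sq_sub_X_sq_of_associated_coeffFrobenius h2 hf hπ hd
      (not_imp_comm.1 (mul_coeffFrobenius_dvd_map K hπ hd) h)

end IsExceptionalPlanarOdd

section DegreeOfExceptionalPlanar
open MvPolynomial

theorem totalDegree_aeval_le_of_forall_le_one {R σ τ : Type*} [CommRing R]
    {g : σ → MvPolynomial τ R} (hg : ∀ i, (g i).totalDegree ≤ 1) (F : MvPolynomial σ R) :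
    (MvPolynomial.aeval g F).totalDegree ≤ F.totalDegree := by
  rw [MvPolynomial.aeval_def, MvPolynomial.eval₂_eq]
  refine totalDegree_finsetSum_le fun m hm => (totalDegree_mul _ _).trans ?_
  rw [algebraMap_eq, totalDegree_C, zero_add]
  refine (totalDegree_finsetProd _ _).trans (le_trans ?_ (le_totalDegree hm))
  exact Finset.sum_le_sum fun i _ => (totalDegree_pow _ _).trans
    ((Nat.mul_le_mul_left _ (hg i)).trans_eq (mul_one _))

theorem isHomogeneous_X_sq_sub_X_sq (R : Type*) [CommRing R] {σ : Type*} (i j : σ) :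
    (MvPolynomial.X i ^ 2 - MvPolynomial.X j ^ 2 : MvPolynomial σ R).IsHomogeneous 2 :=
  (isHomogeneous_X_pow i 2).sub (isHomogeneous_X_pow j 2)

theorem not_X_zero_dvd_X_sq_sub_X_sq (k : Type*) [Field k] :
    ¬ MvPolynomial.X 0 ∣ (MvPolynomial.X 1 ^ 2 - MvPolynomial.X 2 ^ 2 : MvPolynomial (Fin 3) k) :=
  fun h => by simpa using _root_.map_dvd (MvPolynomial.eval ![(0 : k), 1, 0]) h

theorem X_sq_sub_X_sq_ne_zero (k : Type*) [Field k] :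
    (MvPolynomial.X 1 ^ 2 - MvPolynomial.X 2 ^ 2 : MvPolynomial (Fin 3) k) ≠ 0 := fun h =>
  not_X_zero_dvd_X_sq_sub_X_sq k (h ▸ dvd_zero _)

section Conjugate
variable {K σ k : Type*} [Field K] [Fintype K] [Field k] [Algebra K k] [Algebra.IsAlgebraic K k]
  {π : MvPolynomial σ k}

theorem totalDegree_mul_coeffFrobenius (hπ : π ≠ 0) :
    (π * coeffFrobenius K π).totalDegree = 2 * π.totalDegree := by
  rw [totalDegree_mul_of_isDomain hπ ((map_ne_zero_iff _ (coeffFrobenius K).injective).2 hπ),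
    totalDegree_coeffFrobenius, two_mul]

theorem X_sq_dvd_topForm_mul_coeffFrobenius {i : σ} (hπ : π ≠ 0)
    (h : MvPolynomial.X i ∣ topForm π) :
    MvPolynomial.X i ^ 2 ∣ topForm (π * coeffFrobenius K π) := by
  have hconj := _root_.map_dvd (coeffFrobenius K) h
  rw [coeffFrobenius_X, ← topForm_coeffFrobenius] at hconj
  rw [topForm_mul hπ ((map_ne_zero_iff _ (coeffFrobenius K).injective).2 hπ), sq]
  exact mul_dvd_mul h hconj

end Conjugate

theorem natCast_ne_zero_of_algebra {K k : Type*} [Field K] [Field k] [Algebra K k] {n : ℕ}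
    (h : (n : K) ≠ 0) : (n : k) ≠ 0 :=
  map_natCast (algebraMap K k) n ▸ (map_ne_zero (algebraMap K k)).2 h

variable {K : Type} [Field K] [Fintype K] {f : K[X]}

/-- For odd degree `s = X 0` divides the top form of `diffSurface f` exactly once. An irreducible
factor whose top form is divisible by `s` neither divides `u ^ 2 - v ^ 2` nor occurs together with
its conjugate. -/
theorem even_natDegree_of_isExceptionalPlanarOdd (h2 : (2 : K) ≠ 0)
    (hf : IsExceptionalPlanarOdd f) (hd : (f.natDegree : K) ≠ 0) : Even f.natDegree := by
  by_contra hodd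
  rw [Nat.not_even_iff_odd] at hodd
  let k := AlgebraicClosure K
  obtain ⟨F, hF⟩ : ∃ F, F = f.map (algebraMap K k) := ⟨_, rfl⟩
  have hdF : F.natDegree = f.natDegree := hF ▸ natDegree_map _
  have hF0 : F ≠ 0 := ne_zero_of_natDegree_gt (hodd.pos.trans_eq hdF.symm)
  have hsq : ¬ MvPolynomial.X 0 ^ 2 ∣ diffSurface (Polynomial.X ^ F.natDegree : k[X]) :=
    hdF ▸ not_X_zero_sq_dvd_diffSurface_X_pow (natCast_ne_zero_of_algebra (n := 2) (mod_cast h2))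
      hodd (natDegree_ne_one_of_isExceptionalPlanarOdd hf) (natCast_ne_zero_of_algebra hd)
  have hΦ : diffSurface (Polynomial.X ^ F.natDegree : k[X]) ≠ 0 := fun h => hsq (h ▸ dvd_zero _)
  have hS0 := diffSurface_ne_zero hF0 hΦ
  have htop := associated_topForm_diffSurface hF0 hΦ
  obtain ⟨π, hπ, hπF, hXπ⟩ := exists_irreducible_dvd_topForm MvPolynomial.X_prime hS0
    (htop.dvd_iff_dvd_right.2 (X_zero_dvd_diffSurface_X_pow (hdF ▸ hodd)))
  have hdich := dvd_X_sq_sub_X_sq_or_mul_coeffFrobenius_dvd h2 hf hπ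
  rw [map_diffSurface, ← hF] at hdich
  obtain hquad | hmul := hdich hπF
  · have hdvd := topForm_dvd_topForm (X_sq_sub_X_sq_ne_zero k) hquad
    rw [topForm_of_isHomogeneous (isHomogeneous_X_sq_sub_X_sq k 1 2)] at hdvd
    exact not_X_zero_dvd_X_sq_sub_X_sq k (hXπ.trans hdvd)
  · exact hsq (htop.dvd_iff_dvd_right.1 ((X_sq_dvd_topForm_mul_coeffFrobenius hπ.ne_zero hXπ).trans
      (topForm_dvd_topForm hS0 hmul)))

theorem two_mul_totalDegree_le_of_dvd_diffSurface {k : Type*} [Field k] [Algebra K k]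
    [Algebra.IsAlgebraic K k] [IsAlgClosed k] (h2 : (2 : K) ≠ 0)
    (hf : IsExceptionalPlanarOdd f) (h4 : 4 ≤ (diffSurface (f.map (algebraMap K k))).totalDegree)
    {π : MvPolynomial (Fin 3) k} (hπ : Irreducible π)
    (hd : π ∣ diffSurface (f.map (algebraMap K k))) :
    2 * π.totalDegree ≤ (diffSurface (f.map (algebraMap K k))).totalDegree := by
  have hS0 : diffSurface (f.map (algebraMap K k)) ≠ 0 := by
    rintro h
    simp [h] at h4
  rw [← map_diffSurface] at hd
  obtain hquad | hmul := dvd_X_sq_sub_X_sq_or_mul_coeffFrobenius_dvd h2 hf hπ hd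
  · have hle := totalDegree_le_of_dvd_of_isDomain hquad (X_sq_sub_X_sq_ne_zero k)
    have := (isHomogeneous_X_sq_sub_X_sq k (1 : Fin 3) 2).totalDegree_le
    omega
  · rw [map_diffSurface] at hmul
    have hle := totalDegree_le_of_dvd_of_isDomain hmul hS0
    rwa [totalDegree_mul_coeffFrobenius hπ.ne_zero] at hle

/-- Setting `s = 1` in the top form of `diffSurface F` gives `E(u) - E(v)` for
`E = binomSum k F.natDegree`. -/
theorem exists_mul_eq_aeval_binomSum_sub {k : Type*} [Field k] (h2 : (2 : k) ≠ 0) {F : k[X]}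
    (hd : Even F.natDegree) (hdk : (F.natDegree : k) ≠ 0) {A B : MvPolynomial (Fin 3) k}
    (hAB : diffSurface F = A * B) :
    ∃ A' B' : MvPolynomial (Fin 2) k,
      A' * B' = Polynomial.aeval (MvPolynomial.X 0) (binomSum k F.natDegree) -
        Polynomial.aeval (MvPolynomial.X 1) (binomSum k F.natDegree) ∧
      A'.totalDegree = A.totalDegree ∧ B'.totalDegree = B.totalDegree := by
  have hd0 : F.natDegree ≠ 0 := fun h => hdk (h ▸ Nat.cast_zero)
  have hF0 : F ≠ 0 := ne_zero_of_natDegree_gt (Nat.pos_of_ne_zero hd0)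
  have hΦ := diffSurface_X_pow_ne_zero_of_even h2 hd hd0
  have hS0 := diffSurface_ne_zero hF0 hΦ
  rw [hAB, mul_ne_zero_iff] at hS0
  obtain ⟨w, hw⟩ := associated_topForm_diffSurface hF0 hΦ
  obtain ⟨c, -, hc⟩ := isUnit_iff_eq_C_of_isReduced.1 w.isUnit
  let φ : MvPolynomial (Fin 3) k →ₐ[k] MvPolynomial (Fin 2) k :=
    MvPolynomial.aeval ![1, MvPolynomial.X 0, MvPolynomial.X 1]
  have hφ (G : MvPolynomial (Fin 3) k) : (φ G).totalDegree ≤ G.totalDegree :=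
    totalDegree_aeval_le_of_forall_le_one (fun i => by fin_cases i <;> simp) G
  have hmul : φ (topForm A) * φ (topForm B * w) =
      Polynomial.aeval (MvPolynomial.X 0) (binomSum k F.natDegree) -
        Polynomial.aeval (MvPolynomial.X 1) (binomSum k F.natDegree) := by
    rw [← aeval_diffSurface_binomSum, ← hw, hAB, topForm_mul hS0.1 hS0.2, ← map_mul, mul_assoc]
  have hA := (hφ (topForm A)).trans (totalDegree_topForm_le A)
  have hB : (φ (topForm B * w)).totalDegree ≤ B.totalDegree := by
    refine (hφ _).trans ((totalDegree_mul _ _).trans ?_)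
    rw [hc, totalDegree_C, add_zero]
    exact totalDegree_topForm_le B
  have hsum : A.totalDegree + B.totalDegree = F.natDegree := by
    rw [← totalDegree_mul_of_isDomain hS0.1 hS0.2, ← hAB, totalDegree_diffSurface hF0 hΦ]
  have hle := totalDegree_mul (φ (topForm A)) (φ (topForm B * w))
  rw [hmul, totalDegree_aeval_binomSum_sub h2 hdk hd] at hle
  exact ⟨_, _, hmul, by omega, by omega⟩

theorem eq_one_of_natDegree_eq_mul_pow_add_one {p κ m : ℕ} [Fact p.Prime] [CharP K p] (hp : 3 ≤ p)
    (hf : IsExceptionalPlanarOdd f) (hdeg : f.natDegree = m * p ^ κ + 1) (hκ : κ ≠ 0)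
    (hm : ¬ p ∣ m) : m = 1 := by
  let k := AlgebraicClosure K
  have : CharP k p := charP_of_injective_algebraMap (algebraMap K k).injective p
  have hdK : (f.natDegree : K) ≠ 0 := by simp [hdeg, hκ]
  have h2K : (2 : K) ≠ 0 := Ring.two_ne_zero (ringChar.eq K p ▸ by omega)
  have heven := even_natDegree_of_isExceptionalPlanarOdd h2K hf hdK
  have hodd : Odd m := by
    rw [hdeg, Nat.even_add_one, Nat.not_even_iff_odd] at heven
    exact (Nat.odd_mul.1 heven).1
  by_contra hm1
  have hm3 : 3 ≤ m := by
    obtain ⟨j, rfl⟩ := hodd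
    omega
  have hpκ : 3 ≤ p ^ κ := hp.trans (Nat.le_self_pow hκ p)
  obtain ⟨F, hF⟩ : ∃ F, F = f.map (algebraMap K k) := ⟨_, rfl⟩
  have hdF : F.natDegree = f.natDegree := hF ▸ natDegree_map _
  have h2k : (2 : k) ≠ 0 := natCast_ne_zero_of_algebra (n := 2) (mod_cast h2K)
  have hdk : (F.natDegree : k) ≠ 0 := hdF ▸ natCast_ne_zero_of_algebra hdK
  have hF0 : F ≠ 0 := ne_zero_of_natDegree_gt (n := 0) (by omega)
  have hΦ := diffSurface_X_pow_ne_zero_of_even h2k (hdF ▸ heven) (by omega)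
  have hdS : (diffSurface F).totalDegree = f.natDegree := (totalDegree_diffSurface hF0 hΦ).trans hdF
  have h4 : 4 ≤ f.natDegree := by nlinarith
  obtain ⟨A, B, hAB, hle⟩ := exists_mul_eq_two_mul_sq_totalDegree_le (diffSurface_ne_zero hF0 hΦ)
    fun π hπ hπF => by
      subst hF
      exact two_mul_totalDegree_le_of_dvd_diffSurface h2K hf (hdS ▸ h4) hπ hπF
  obtain ⟨A', B', hAB', hA', hB'⟩ := exists_mul_eq_aeval_binomSum_sub h2k (hdF ▸ heven) hdk hAB
  rw [hdF, hdeg] at hAB'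
  have hmk : (m : k) ≠ 0 := fun h => hm ((CharP.cast_eq_zero_iff k p m).1 h)
  have hlt := nine_mul_totalDegree_mul_lt hpκ h2k hodd hm3 hmk hAB'
  rw [hA', hB', ← hdeg, ← hdS] at hlt
  exact hle.not_gt hlt

end DegreeOfExceptionalPlanar

end ExceptionalPlanar

theorem exceptional_planar_deg_one_mod_p_eq_pow_add_one
    (p n d : ℕ) (hp : p.Prime) (hodd : Odd p) (hn : 0 < n)
    (K : Type) [Field K] [Fintype K] (hK : Fintype.card K = p ^ n)
    (f : K[X]) (hdeg : f.natDegree = d) (hd1 : d % p = 1)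
    (hexc : IsExceptionalPlanarOdd f) :
    ∃ k : ℕ, 0 < k ∧ d = p ^ k + 1 := by
  have : Fact p.Prime := ⟨hp⟩
  have : CharP K p := charP_of_card_eq_prime_pow hK
  have hp3 : 3 ≤ p := by
    obtain ⟨j, rfl⟩ := hodd
    have := hp.one_lt
    omega
  have hd0 : d ≠ 0 := by
    rintro rfl
    exact zero_ne_one hd1
  have hd_ne_one : d ≠ 1 := hdeg ▸ ExceptionalPlanar.natDegree_ne_one_of_isExceptionalPlanarOdd hexc
  have hdvd : p ∣ d - 1 := hd1 ▸ Nat.dvd_sub_mod d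
  obtain ⟨κ, m, hm, hdm⟩ := Nat.exists_eq_pow_mul_and_not_dvd (n := d - 1) (by omega) p hp.ne_one
  have hκ : κ ≠ 0 := by
    rintro rfl
    rw [hdm, pow_zero, one_mul] at hdvd
    exact hm hdvd
  have hd : d = m * p ^ κ + 1 := by
    rw [mul_comm, ← hdm]
    omega
  have hm_one : m = 1 :=
    ExceptionalPlanar.eq_one_of_natDegree_eq_mul_pow_add_one hp3 hexc (hdeg.trans hd) hκ hm
  exact ⟨κ, Nat.pos_of_ne_zero hκ, by rw [hd, hm_one, one_mul]⟩
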